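/- arXiv:hep-th/9502165 — 5 statements merged into one kernel-verified Lean document; each statement's English description precedes it below -/
import Mathlib

section
/- The function (w,t,τ) ↦ σ_w(t,τ) is holomorphic on {(w,t,τ) : τ ∈ H₊, w ∉ ℤ+τℤ, t ∉ ℤ+τℤ} and satisfies there the identity 2πi·∂_τ σ_w(t,τ) + ∂_t ∂_w σ_w(t,τ) = 0. (Equivalently, the differential form ω_w = σ_w(t,τ) dt − (2πi)^{−1} ∂_w σ_w(t,τ) dτ appearing in the KZB connection form Ω is closed.) -/
open Complex Filter Topology MeasureTheory

noncomputable section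

/-- Jacobi's theta function `ϑ₁(t,τ)`. -/
def theta1 (t τ : ℂ) : ℂ :=
  -∑' j : ℤ, Complex.exp ((Real.pi : ℂ) * Complex.I * ((j : ℂ) + 1/2)^2 * τ +
      2 * (Real.pi : ℂ) * Complex.I * ((j : ℂ) + 1/2) * (t + 1/2))

/-- Derivative of `ϑ₁` in the first argument. -/
def theta1' (t τ : ℂ) : ℂ := deriv (fun s => theta1 s τ) t

/-- Membership in the lattice `ℤ + τℤ`. -/
def inLattice (τ t : ℂ) : Prop := ∃ a b : ℤ, t = (a : ℂ) + (b : ℂ) * τ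

/-- The function `σ_w(t,τ)`. -/
def sigmaF (w t τ : ℂ) : ℂ := theta1 (w - t) τ * theta1' 0 τ / (theta1 w τ * theta1 t τ)

/-- The function `ρ(t,τ) = ϑ₁'(t,τ)/ϑ₁(t,τ)`. -/
def rhoF (t τ : ℂ) : ℂ := theta1' t τ / theta1 t τ

/-- The function `E(t,τ) = ϑ₁(t,τ)/ϑ₁'(0,τ)`. -/
def EF (t τ : ℂ) : ℂ := theta1 t τ / theta1' 0 τ

end

lemma aux_quot {f g : ℂ → ℂ} (hf : Differentiable ℂ f) (hg : Differentiable ℂ g)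
    (hz : ∀ z, g z = 0 → f z = 0 ∧ deriv g z ≠ 0) :
    ∃ h : ℂ → ℂ, Differentiable ℂ h ∧ ∀ z, f z = g z * h z := by
  classical
  refine ⟨fun z => if g z = 0 then deriv f z / deriv g z else f z / g z, ?_, ?_⟩
  · intro z0
    by_cases h0 : g z0 = 0
    · obtain ⟨hf0, hg1⟩ := hz z0 h0
      have hF : Differentiable ℂ (dslope f z0) := by
        rw [← differentiableOn_univ] at hf ⊢
        exact (Complex.differentiableOn_dslope univ_mem).2 hf
      have hG : Differentiable ℂ (dslope g z0) := by
        rw [← differentiableOn_univ] at hg ⊢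
        exact (Complex.differentiableOn_dslope univ_mem).2 hg
      have hG0 : dslope g z0 z0 ≠ 0 := by rwa [dslope_same]
      have hd : DifferentiableAt ℂ (fun z => dslope f z0 z / dslope g z0 z) z0 :=
        (hF z0).div (hG z0) hG0
      refine hd.congr_of_eventuallyEq ?_
      filter_upwards [hG.continuous.continuousAt.eventually_ne hG0] with z hzG
      by_cases hzz : z = z0
      · subst hzz
        simp [h0, dslope_same]
      · have e1 : (z - z0) * dslope f z0 z = f z := by
          have := sub_smul_dslope f z0 z
          simpa [hf0] using this
        have e2 : (z - z0) * dslope g z0 z = g z := by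
          have := sub_smul_dslope g z0 z
          simpa [h0] using this
        have hne : z - z0 ≠ 0 := sub_ne_zero.2 hzz
        have : g z ≠ 0 := by rw [← e2]; exact mul_ne_zero hne hzG
        simp only [this, if_false]
        rw [← e1, ← e2]
        field_simp
    · have hd : DifferentiableAt ℂ (fun z => f z / g z) z0 := (hf z0).div (hg z0) h0
      refine hd.congr_of_eventuallyEq ?_
      filter_upwards [(hg z0).continuousAt.eventually_ne h0] with z h
      simp [h]
  · intro z
    by_cases h0 : g z = 0
    · simp [h0, (hz z h0).1]
    · simp only [h0, if_false]
      field_simp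

lemma aux_cancel {g u v : ℂ → ℂ} (hg : Differentiable ℂ g) (hu : Differentiable ℂ u)
    (hv : Differentiable ℂ v) (hne : ∃ z, g z ≠ 0) (h : ∀ z, g z * u z = g z * v z) (z : ℂ) :
    u z = v z := by
  have hgA : AnalyticOnNhd ℂ g Set.univ := fun x _ => hg.analyticAt x
  have huA : AnalyticOnNhd ℂ (fun z => u z - v z) Set.univ := fun x _ => (hu.sub hv).analyticAt x
  rcases AnalyticOnNhd.eq_zero_or_eq_zero_of_mul_eq_zero hgA huA
    (fun z _ => by rw [mul_sub, h z, sub_self]) isPreconnected_univ with h1 | h1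
  · obtain ⟨z, hz⟩ := hne
    exact absurd (h1 z trivial) hz
  · exact sub_eq_zero.1 (h1 z trivial)

lemma aux_lattice {τ : ℂ} {p : ℂ → Prop} (h0 : p 0) (h1 : ∀ z, p (z + 1) ↔ p z)
    (h2 : ∀ z, p (z + τ) ↔ p z) {z : ℂ} (hz : inLattice τ z) : p z := by
  obtain ⟨a, b, rfl⟩ := hz
  have hb : ∀ b : ℤ, p ((b : ℂ) * τ) := by
    intro b
    induction b using Int.induction_on with
    | zero => simpa using h0
    | succ i ih =>
      have := (h2 _).2 ih
      push_cast
      rwa [add_mul, one_mul]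
    | pred i ih =>
      refine (h2 _).1 ?_
      convert! ih using 1
      push_cast; ring
  induction a using Int.induction_on with
  | zero => simpa using hb b
  | succ i ih =>
    have := (h1 _).2 ih
    convert! this using 1
    push_cast; ring
  | pred i ih =>
    refine (h1 _).1 ?_
    convert! ih using 1
    push_cast; ring

lemma aux_liouville {τ : ℂ} (hτ : 0 < τ.im) {h : ℂ → ℂ} (hd : Differentiable ℂ h)
    (h1 : ∀ z, ‖h (z + 1)‖ = ‖h z‖) (h2 : ∀ z, ‖h (z + τ)‖ = ‖h z‖) (z : ℂ) : h z = h 0 := by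
  have hc : IsCompact ((fun p : ℝ × ℝ => (p.1 : ℂ) + p.2 * τ) '' (Set.Icc 0 1 ×ˢ Set.Icc 0 1)) :=
    (isCompact_Icc.prod isCompact_Icc).image (by fun_prop)
  obtain ⟨C, hC⟩ := hc.exists_bound_of_continuousOn hd.continuous.continuousOn
  refine hd.apply_eq_apply_of_bounded ?_ z 0
  refine (isBounded_iff_forall_norm_le).2 ⟨C, ?_⟩
  rintro _ ⟨z, rfl⟩
  set y := z.im / τ.im with hy
  set x := z.re - y * τ.re with hx
  have hz : z = (x : ℂ) + y * τ := by
    apply Complex.ext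
    · simp [hx]
    · simp [hy, hτ.ne']
  have key : ∀ l, inLattice τ l → ∀ u, ‖h (u + l)‖ = ‖h u‖ := by
    intro l hl
    refine aux_lattice (p := fun l => ∀ u, ‖h (u + l)‖ = ‖h u‖) (by simp) ?_ ?_ hl
    · intro z
      refine forall_congr' fun u => ?_
      rw [← add_assoc, h1]
    · intro z
      refine forall_congr' fun u => ?_
      rw [← add_assoc, h2]
  have e : z = ((Int.fract x : ℝ) + (Int.fract y : ℝ) * τ) + ((⌊x⌋ : ℂ) + (⌊y⌋ : ℂ) * τ) := by
    have a1 : (x : ℂ) = (Int.fract x : ℝ) + (⌊x⌋ : ℂ) := by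
      exact_mod_cast (Int.fract_add_floor x).symm
    have a2 : (y : ℂ) = (Int.fract y : ℝ) + (⌊y⌋ : ℂ) := by
      exact_mod_cast (Int.fract_add_floor y).symm
    linear_combination hz + a1 + a2 * τ
  rw [e, key _ ⟨_, _, rfl⟩]
  apply hC
  exact ⟨(Int.fract x, Int.fract y), ⟨⟨Int.fract_nonneg _, (Int.fract_lt_one _).le⟩,
    ⟨Int.fract_nonneg _, (Int.fract_lt_one _).le⟩⟩, rfl⟩

lemma aux_zero {τ w : ℂ} (hτ : 0 < τ.im) (hw : ¬ inLattice τ w) {h : ℂ → ℂ}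
    (hd : Differentiable ℂ h) (h1 : ∀ z, h (z + 1) = h z)
    (h2 : ∀ z, h (z + τ) = cexp (2 * Real.pi * I * w) * h z) (z : ℂ) : h z = 0 := by
  set m : ℝ := -(2 * Real.pi * w.im / τ.im) with hm
  have hmτ : m * τ.im = - (2 * Real.pi * w.im) := by rw [hm]; field_simp
  set k : ℂ → ℂ := fun z => cexp (m * I * z) * h z with hk
  have hkd : Differentiable ℂ k := by
    simp only [hk]; fun_prop
  have hconst := aux_liouville hτ hkd (fun z => by
      simp only [hk]
      rw [h1, norm_mul, norm_mul, Complex.norm_exp, Complex.norm_exp]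
      simp) (fun z => by
      simp only [hk]
      rw [h2, norm_mul, norm_mul, norm_mul, Complex.norm_exp, Complex.norm_exp, Complex.norm_exp,
        ← mul_assoc, ← Real.exp_add]
      congr 2
      simp
      linarith)
  by_contra hne
  have hk0 : k 0 ≠ 0 := by
    rw [← hconst z]; exact mul_ne_zero (Complex.exp_ne_zero _) hne
  have hh0 : h 0 ≠ 0 := fun e => hk0 (by simp [hk, e])
  have e1 := hconst (0 + 1)
  have e2 := hconst (0 + τ)
  simp only [hk] at e1 e2
  rw [h1] at e1
  rw [h2, ← mul_assoc, ← Complex.exp_add] at e2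
  have e1' := mul_right_cancel₀ hh0 e1
  have e2' := mul_right_cancel₀ hh0 e2
  simp only [zero_add, mul_zero, mul_one, Complex.exp_zero] at e1' e2'
  obtain ⟨n, hn⟩ := Complex.exp_eq_one_iff.1 e1'
  obtain ⟨n2, hn2⟩ := Complex.exp_eq_one_iff.1 e2'
  apply hw
  refine ⟨n2, -n, ?_⟩
  rw [hn] at hn2
  have hpi : (2 * Real.pi * I : ℂ) ≠ 0 := Complex.two_pi_I_ne_zero
  apply mul_left_cancel₀ hpi
  push_cast
  linear_combination hn2

noncomputable def thE (j : ℤ) (t τ : ℂ) : ℂ :=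
  Complex.exp ((Real.pi : ℂ) * Complex.I * ((j : ℂ) + 1/2)^2 * τ +
      2 * (Real.pi : ℂ) * Complex.I * ((j : ℂ) + 1/2) * (t + 1/2))

noncomputable def thT (k : ℕ) (t τ : ℂ) : ℂ := ∑' j : ℤ, ((j : ℂ) + 1/2)^k * thE j t τ

noncomputable def thB (k : ℕ) (S T : ℝ) (j : ℤ) : ℝ :=
  |(j : ℝ) + 1/2| ^ k * Real.exp (-Real.pi * T * |(j : ℝ) + 1/2|^2 + 2 * Real.pi * S * |(j : ℝ) + 1/2|)

lemma thB_summable (k : ℕ) (S : ℝ) {T : ℝ} (hT : 0 < T) : Summable (thB k S T) := by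
  have hs : Summable (fun j : ℤ => Real.exp (-|(j : ℝ)|)) := by
    have h1 : Summable (fun n : ℕ => Real.exp (-(n : ℝ))) := Real.summable_exp_neg_nat
    apply Summable.of_nat_of_neg <;> simpa using h1
  have hpT : 0 < Real.pi * T := mul_pos Real.pi_pos hT
  set K : ℝ := (2 + 2 * Real.pi * S)^2 / (4 * (Real.pi * T)) with hK
  refine Summable.of_nonneg_of_le (fun j => ?_) (fun j => ?_)
    (hs.mul_left ((k.factorial : ℝ) * Real.exp (K + 1/2)))
  · unfold thB; positivity
  · unfold thB
    set x := |(j : ℝ) + 1/2| with hx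
    have hx0 : 0 ≤ x := abs_nonneg _
    have h1 : x ^ k ≤ k.factorial * Real.exp x := by
      have := Real.pow_div_factorial_le_exp x hx0 k
      rw [div_le_iff₀ (by positivity)] at this
      linarith
    have h2 : |(j : ℝ)| ≤ x + 1/2 := by
      have := abs_sub_abs_le_abs_sub ((j : ℝ)) (-(1/2))
      rw [sub_neg_eq_add, abs_neg, abs_of_pos (by norm_num : (0:ℝ) < 1/2)] at this
      linarith
    have h3 : (2 + 2 * Real.pi * S) * x - Real.pi * T * x^2 ≤ K := by
      rw [hK, le_div_iff₀ (by positivity)]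
      nlinarith [sq_nonneg (2 * (Real.pi * T) * x - (2 + 2 * Real.pi * S))]
    calc _ ≤ (k.factorial * Real.exp x) *
          Real.exp (-Real.pi * T * x^2 + 2 * Real.pi * S * x) := by gcongr
      _ = k.factorial * Real.exp (x + (-Real.pi * T * x^2 + 2 * Real.pi * S * x)) := by
          rw [mul_assoc, ← Real.exp_add]
      _ ≤ k.factorial * Real.exp ((K + 1/2) + (-|(j:ℝ)|)) := by
          refine mul_le_mul_of_nonneg_left (Real.exp_le_exp.2 ?_) (by positivity)
          linarith
      _ = _ := by rw [Real.exp_add]; ring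

lemma thE_norm_le (k : ℕ) (j : ℤ) {t τ : ℂ} {S T : ℝ} (ht : |t.im| ≤ S) (hτ : T ≤ τ.im) :
    ‖((j : ℂ) + 1/2)^k * thE j t τ‖ ≤ thB k S T j := by
  have e : ((j : ℂ) + 1/2) = (((j : ℝ) + 1/2 : ℝ) : ℂ) := by push_cast; ring
  unfold thB thE
  rw [e]
  generalize (j : ℝ) + 1/2 = x
  rw [norm_mul, norm_pow, Complex.norm_real, Real.norm_eq_abs, Complex.norm_exp]
  gcongr
  have e2 : ((Real.pi : ℂ) * I * (x : ℂ)^2 * τ + 2 * (Real.pi : ℂ) * I * (x : ℂ) * (t + 1/2)).re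
      = -(Real.pi * x^2) * τ.im - 2 * Real.pi * (x * t.im) := by
    have : ((Real.pi : ℂ) * I * (x : ℂ)^2 * τ + 2 * (Real.pi : ℂ) * I * (x : ℂ) * (t + 1/2))
      = I * (((Real.pi * x^2 : ℝ) : ℂ) * τ + ((2 * Real.pi * x : ℝ) : ℂ) * (t + 1/2)) := by
      push_cast; ring
    rw [this, Complex.I_mul_re, Complex.add_im, Complex.im_ofReal_mul, Complex.im_ofReal_mul]
    simp
    ring
  rw [e2, sq_abs]
  have h1 : -(x * t.im) ≤ S * |x| := by
    calc -(x * t.im) ≤ |x * t.im| := neg_le_abs _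
      _ = |t.im| * |x| := by rw [abs_mul, mul_comm]
      _ ≤ _ := by gcongr
  have h2 : Real.pi * x^2 * T ≤ Real.pi * x^2 * τ.im := by gcongr
  nlinarith [Real.pi_pos]

lemma thT_summable (k : ℕ) (t : ℂ) {τ : ℂ} (hτ : 0 < τ.im) :
    Summable (fun j : ℤ => ((j : ℂ) + 1/2)^k * thE j t τ) :=
  Summable.of_norm_bounded (thB_summable k |t.im| hτ) (fun j => thE_norm_le k j le_rfl le_rfl)

lemma thT_deriv_t (k : ℕ) (t : ℂ) {τ : ℂ} (hτ : 0 < τ.im) :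
    HasDerivAt (fun s => thT k s τ) (2 * Real.pi * I * thT (k+1) t τ) t := by
  set S := |t.im| + 1
  have hm : t ∈ Complex.im ⁻¹' (Set.Ioo (-S) S) := by
    have : |t.im| < S := by simp [S]
    exact abs_lt.1 this
  have := hasDerivAt_tsum_of_isPreconnected (t := Complex.im ⁻¹' (Set.Ioo (-S) S)) (y₀ := t) (y := t)
    (g := fun (j : ℤ) s => ((j : ℂ) + 1/2)^k * thE j s τ)
    (g' := fun (j : ℤ) s => 2 * Real.pi * I * (((j : ℂ) + 1/2)^(k+1) * thE j s τ))
    ((thB_summable (k+1) S hτ).mul_left ‖(2 * Real.pi * I : ℂ)‖)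
    (isOpen_Ioo.preimage Complex.continuous_im)
    (((convex_Ioo (-S) S).linear_preimage Complex.imLm).isPreconnected)
    (fun j s hs => by
      have h1 : HasDerivAt (fun s : ℂ => (Real.pi : ℂ) * Complex.I * ((j : ℂ) + 1/2)^2 * τ +
        2 * (Real.pi : ℂ) * Complex.I * ((j : ℂ) + 1/2) * (s + 1/2))
        (2 * (Real.pi : ℂ) * Complex.I * ((j : ℂ) + 1/2)) s := by
        have := (((hasDerivAt_id s).add_const (1/2)).const_mul
          (2 * (Real.pi : ℂ) * Complex.I * ((j : ℂ) + 1/2))).const_add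
            ((Real.pi : ℂ) * Complex.I * ((j : ℂ) + 1/2)^2 * τ)
        exact this.congr_deriv (mul_one _)
      have h2 := (h1.cexp).const_mul (((j : ℂ) + 1/2)^k)
      refine h2.congr_deriv ?_
      unfold thE
      ring)
    (fun j s hs => by
      rw [norm_mul]
      gcongr
      exact thE_norm_le (k+1) j (abs_lt.2 hs).le le_rfl)
    hm (thT_summable k t hτ) hm
  rw [tsum_mul_left] at this
  exact this

lemma thT_deriv_tau (k : ℕ) (t : ℂ) {τ : ℂ} (hτ : 0 < τ.im) :
    HasDerivAt (fun s => thT k t s) (Real.pi * I * thT (k+2) t τ) τ := by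
  set T := τ.im / 2
  have hT : 0 < T := by simp only [T]; linarith
  have hm : τ ∈ Complex.im ⁻¹' (Set.Ioi T) := by
    change T < τ.im
    simp only [T]; linarith
  have := hasDerivAt_tsum_of_isPreconnected (t := Complex.im ⁻¹' (Set.Ioi T)) (y₀ := τ) (y := τ)
    (g := fun (j : ℤ) s => ((j : ℂ) + 1/2)^k * thE j t s)
    (g' := fun (j : ℤ) s => Real.pi * I * (((j : ℂ) + 1/2)^(k+2) * thE j t s))
    ((thB_summable (k+2) |t.im| hT).mul_left ‖(Real.pi * I : ℂ)‖)
    (isOpen_Ioi.preimage Complex.continuous_im)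
    (((convex_Ioi T).linear_preimage Complex.imLm).isPreconnected)
    (fun j s hs => by
      have h1 : HasDerivAt (fun s : ℂ => (Real.pi : ℂ) * Complex.I * ((j : ℂ) + 1/2)^2 * s +
        2 * (Real.pi : ℂ) * Complex.I * ((j : ℂ) + 1/2) * (t + 1/2))
        ((Real.pi : ℂ) * Complex.I * ((j : ℂ) + 1/2)^2) s := by
        simpa using ((hasDerivAt_id s).const_mul
          ((Real.pi : ℂ) * Complex.I * ((j : ℂ) + 1/2)^2)).add_const
            (2 * (Real.pi : ℂ) * Complex.I * ((j : ℂ) + 1/2) * (t + 1/2))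
      have h2 := (h1.cexp).const_mul (((j : ℂ) + 1/2)^k)
      refine h2.congr_deriv ?_
      unfold thE
      ring)
    (fun j s hs => by
      rw [norm_mul]
      gcongr
      exact thE_norm_le (k+2) j le_rfl (le_of_lt hs))
    hm (thT_summable k t hτ) hm
  rw [tsum_mul_left] at this
  exact this

lemma thT_add_one (t τ : ℂ) : thT 0 (t + 1) τ = - thT 0 t τ := by
  unfold thT
  rw [← tsum_neg]
  refine tsum_congr fun j => ?_
  unfold thE
  rw [pow_zero, one_mul, one_mul, ← mul_neg_one, ← Complex.exp_pi_mul_I, ← Complex.exp_add]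
  rw [Complex.exp_eq_exp_iff_exists_int]
  exact ⟨j, by ring⟩

lemma thT_neg (t τ : ℂ) : thT 0 (-t) τ = - thT 0 t τ := by
  unfold thT
  rw [← tsum_neg, ← (Equiv.subLeft (-1 : ℤ)).tsum_eq]
  refine tsum_congr fun j => ?_
  unfold thE
  simp only [Equiv.subLeft_apply]
  rw [pow_zero, one_mul, pow_zero, one_mul, ← mul_neg_one (cexp _), ← Complex.exp_pi_mul_I, ← Complex.exp_add]
  rw [Complex.exp_eq_exp_iff_exists_int]
  refine ⟨-j - 1, ?_⟩
  push_cast; ring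

lemma thT_add_tau (t τ : ℂ) :
    thT 0 (t + τ) τ = -cexp (-(Real.pi * I * (τ + 2 * t))) * thT 0 t τ := by
  unfold thT
  rw [← tsum_mul_left, ← (Equiv.subRight (1 : ℤ)).tsum_eq]
  refine tsum_congr fun j => ?_
  unfold thE
  rw [pow_zero, one_mul, pow_zero, one_mul, ← neg_one_mul (cexp _), ← Complex.exp_pi_mul_I,
    ← Complex.exp_add, ← Complex.exp_add]
  rw [Complex.exp_eq_exp_iff_exists_int]
  refine ⟨-1, ?_⟩
  simp only [Equiv.subRight_apply]
  push_cast; ring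

lemma thT_ne_zero {τ : ℂ} (hτ : 0 < τ.im) : ∃ t, thT 0 t τ ≠ 0 := by
  by_contra! hall
  have hsum : HasSum (fun j : ℤ => ∫ x in (0:ℝ)..1, cexp (-(Real.pi * I * x)) * thE j x τ)
      (∫ x in (0:ℝ)..1, (0 : ℂ)) := by
    refine intervalIntegral.hasSum_integral_of_dominated_convergence
      (fun j _ => thB 0 0 τ.im j) ?_ ?_ ?_ ?_ ?_
    · intro j
      apply Continuous.aestronglyMeasurable
      unfold thE
      fun_prop
    · intro j
      refine Eventually.of_forall fun x _ => ?_
      have h := thE_norm_le 0 j (t := (x : ℂ)) (S := 0) (by simp) (le_refl τ.im)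
      rw [norm_mul, Complex.norm_exp]
      simpa using h
    · exact Eventually.of_forall fun x _ => thB_summable 0 0 hτ
    · exact intervalIntegrable_const
    · refine Eventually.of_forall fun x _ => ?_
      have h := (thT_summable 0 (x : ℂ) hτ).hasSum
      have h' : HasSum (fun j : ℤ => ((j : ℂ) + 1/2)^0 * thE j x τ) 0 := by
        rw [← hall x]; exact h
      simpa using h'.mul_left (cexp (-(Real.pi * I * x)))
  have hz : ∀ j : ℤ, j ≠ 0 → ∫ x in (0:ℝ)..1, cexp (-(Real.pi * I * x)) * thE j x τ = 0 := by
    intro j hj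
    have e : ∀ x : ℝ, cexp (-(Real.pi * I * x)) * thE j x τ = thE j 0 τ * cexp ((2 * Real.pi * I * j) * x) := by
      intro x
      unfold thE
      rw [← Complex.exp_add, ← Complex.exp_add]
      congr 1
      ring
    have hne : (2 * Real.pi * I * j : ℂ) ≠ 0 :=
      mul_ne_zero Complex.two_pi_I_ne_zero (by exact_mod_cast hj)
    simp_rw [e]
    rw [intervalIntegral.integral_const_mul, integral_exp_mul_complex hne]
    have : cexp (2 * Real.pi * I * j * (1:ℝ)) = 1 :=
      Complex.exp_eq_one_iff.2 ⟨j, by push_cast; ring⟩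
    rw [this]
    simp
  have h0 : ∫ x in (0:ℝ)..1, cexp (-(Real.pi * I * x)) * thE 0 x τ = thE 0 0 τ := by
    have e : ∀ x : ℝ, cexp (-(Real.pi * I * x)) * thE 0 x τ = thE 0 0 τ := by
      intro x
      unfold thE
      rw [← Complex.exp_add]
      congr 1
      push_cast
      ring
    simp_rw [e]
    simp
  have := hsum.unique (hasSum_single 0 hz)
  rw [h0] at this
  simp at this
  exact Complex.exp_ne_zero _ this.symm

noncomputable def psiP (q x : ℂ) : ℂ := ∏' n : ℕ, (1 + -(q ^ n * x))

lemma psi_summable {q : ℂ} (hq : ‖q‖ < 1) (x : ℂ) : Summable (fun n : ℕ => ‖-(q ^ n * x)‖) := by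
  simp only [norm_neg, norm_mul, norm_pow]
  exact (summable_geometric_of_lt_one (norm_nonneg _) hq).mul_right _

lemma psi_rec {q : ℂ} (hq : ‖q‖ < 1) (x : ℂ) : psiP q x = (1 - x) * psiP q (q * x) := by
  unfold psiP
  have hm : Multipliable (fun n : ℕ => 1 + -(q ^ (n+1) * x)) := by
    apply multipliable_one_add_of_summable (f := fun n : ℕ => -(q ^ (n+1) * x))
    exact (summable_nat_add_iff 1).2 (psi_summable hq x)
  have h := tprod_eq_zero_mul' (f := fun n : ℕ => 1 + -(q ^ n * x)) hm
  have h2 : (fun n : ℕ => 1 + -(q ^ (n + 1) * x)) = fun n : ℕ => 1 + -(q ^ n * (q * x)) := by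
    funext n
    ring
  rw [h2] at h
  rw [h, pow_zero, one_mul, sub_eq_add_neg]

lemma psi_ne {q : ℂ} (hq : ‖q‖ < 1) {x : ℂ} (hx : psiP q x = 0) : ∃ n : ℕ, q ^ n * x = 1 := by
  by_contra! h
  refine tprod_one_add_ne_zero_of_summable (f := fun n : ℕ => -(q ^ n * x)) (fun n hn => ?_)
    (psi_summable hq x) hx
  exact h n (by linear_combination -hn)

lemma psi_diff {q : ℂ} (hq : ‖q‖ < 1) : Differentiable ℂ (psiP q) := by
  intro x0
  have h : DifferentiableOn ℂ (psiP q) (Metric.ball 0 (‖x0‖ + 1)) := by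
    refine (Summable.hasProdLocallyUniformlyOn_nat_one_add (f := fun (n : ℕ) x => -(q ^ n * x))
      Metric.isOpen_ball
      ((summable_geometric_of_lt_one (norm_nonneg _) hq).mul_right (‖x0‖ + 1))
      (Eventually.of_forall fun n x hx => ?_) (fun n => by fun_prop)).differentiableOn
      (.of_forall fun _ ↦ by simpa [Finset.prod_fn] using
      DifferentiableOn.finsetProd (fun _ _ ↦ by fun_prop)) Metric.isOpen_ball
    rw [norm_neg, norm_mul, norm_pow]
    have : ‖x‖ < ‖x0‖ + 1 := by simpa using hx
    gcongr
  exact h.differentiableAt (Metric.isOpen_ball.mem_nhds (by simp))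

noncomputable def prodG (τ t : ℂ) : ℂ :=
  cexp (-(Real.pi * I * t)) * (psiP (cexp (2 * Real.pi * I * τ)) (cexp (2 * Real.pi * I * t)) *
    psiP (cexp (2 * Real.pi * I * τ)) (cexp (2 * Real.pi * I * (τ - t))))

lemma q_lt {τ : ℂ} (hτ : 0 < τ.im) : ‖cexp (2 * Real.pi * I * τ)‖ < 1 := by
  rw [Complex.norm_exp, Real.exp_lt_one_iff]
  simp
  positivity

lemma prodG_diff {τ : ℂ} (hτ : 0 < τ.im) : Differentiable ℂ (prodG τ) := by
  have h := psi_diff (q_lt hτ)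
  unfold prodG
  refine Differentiable.mul (by fun_prop) (Differentiable.mul ?_ ?_)
  · exact h.comp (by fun_prop : Differentiable ℂ (fun t : ℂ => cexp (2 * Real.pi * I * t)))
  · exact h.comp (by fun_prop : Differentiable ℂ (fun t : ℂ => cexp (2 * Real.pi * I * (τ - t))))

lemma prodG_add_one (τ t : ℂ) : prodG τ (t + 1) = - prodG τ t := by
  unfold prodG
  have e1 : cexp (-(Real.pi * I * (t + 1))) = - cexp (-(Real.pi * I * t)) := by
    rw [← mul_neg_one (cexp _), ← Complex.exp_pi_mul_I, ← Complex.exp_add,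
      Complex.exp_eq_exp_iff_exists_int]
    exact ⟨-1, by push_cast; ring⟩
  have e2 : cexp (2 * Real.pi * I * (t + 1)) = cexp (2 * Real.pi * I * t) := by
    rw [Complex.exp_eq_exp_iff_exists_int]
    exact ⟨1, by push_cast; ring⟩
  have e3 : cexp (2 * Real.pi * I * (τ - (t + 1))) = cexp (2 * Real.pi * I * (τ - t)) := by
    rw [Complex.exp_eq_exp_iff_exists_int]
    exact ⟨-1, by push_cast; ring⟩
  rw [e1, e2, e3]
  ring

lemma prodG_add_tau {τ : ℂ} (hτ : 0 < τ.im) (t : ℂ) :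
    prodG τ (t + τ) = -cexp (-(Real.pi * I * (τ + 2 * t))) * prodG τ t := by
  unfold prodG
  rw [psi_rec (q_lt hτ) (cexp (2 * Real.pi * I * t)),
    psi_rec (q_lt hτ) (cexp (2 * Real.pi * I * (τ - (t + τ)))),
    ← Complex.exp_add, ← Complex.exp_add]
  have e1 : 2 * Real.pi * I * τ + 2 * Real.pi * I * t = 2 * Real.pi * I * (t + τ) := by ring
  have e2 : 2 * Real.pi * I * τ + 2 * Real.pi * I * (τ - (t + τ)) = 2 * Real.pi * I * (τ - t) := by
    ring
  rw [e1, e2]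
  have e3 : cexp (-(Real.pi * I * (t + τ))) * (1 - cexp (2 * Real.pi * I * (τ - (t + τ)))) =
    -cexp (-(Real.pi * I * (τ + 2 * t))) * (cexp (-(Real.pi * I * t)) *
      (1 - cexp (2 * Real.pi * I * t))) := by
    have a1 : cexp (-(Real.pi * I * (t + τ))) * cexp (2 * Real.pi * I * (τ - (t + τ))) =
      cexp (-(Real.pi * I * (τ + 2 * t))) * cexp (-(Real.pi * I * t)) := by
      rw [← Complex.exp_add, ← Complex.exp_add]; congr 1; ring
    have a2 : cexp (-(Real.pi * I * (t + τ))) =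
      cexp (-(Real.pi * I * (τ + 2 * t))) * cexp (-(Real.pi * I * t)) *
        cexp (2 * Real.pi * I * t) := by
      rw [← Complex.exp_add, ← Complex.exp_add]; congr 1; ring
    linear_combination a2 - a1
  linear_combination (psiP (cexp (2 * Real.pi * I * τ)) (cexp (2 * Real.pi * I * (t + τ))) *
    psiP (cexp (2 * Real.pi * I * τ)) (cexp (2 * Real.pi * I * (τ - t)))) * e3

lemma prodG_zero {τ : ℂ} (hτ : 0 < τ.im) {t : ℂ} (h : prodG τ t = 0) : inLattice τ t := by
  unfold prodG at h
  have aux : ∀ (n : ℕ) (s : ℂ), cexp (2 * Real.pi * I * τ) ^ n * cexp (2 * Real.pi * I * s) = 1 →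
      ∃ m : ℤ, n * τ + s = m := by
    intro n s hs
    rw [← Complex.exp_nat_mul, ← Complex.exp_add, Complex.exp_eq_one_iff] at hs
    obtain ⟨m, hm⟩ := hs
    refine ⟨m, mul_left_cancel₀ Complex.two_pi_I_ne_zero ?_⟩
    linear_combination hm
  rcases mul_eq_zero.1 h with h | h
  · exact absurd h (Complex.exp_ne_zero _)
  rcases mul_eq_zero.1 h with h | h
  · obtain ⟨n, hn⟩ := psi_ne (q_lt hτ) h
    obtain ⟨m, hm⟩ := aux n _ hn
    exact ⟨m, -n, by push_cast; linear_combination hm⟩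
  · obtain ⟨n, hn⟩ := psi_ne (q_lt hτ) h
    obtain ⟨m, hm⟩ := aux n _ hn
    exact ⟨-m, n + 1, by push_cast; linear_combination -hm⟩

lemma prodG_at_zero {τ : ℂ} (hτ : 0 < τ.im) : prodG τ 0 = 0 ∧ deriv (prodG τ) 0 ≠ 0 := by
  set q := cexp (2 * Real.pi * I * τ) with hqd
  have hq : ‖q‖ < 1 := q_lt hτ
  have hpq : psiP q q ≠ 0 := by
    intro h
    obtain ⟨n, hn⟩ := psi_ne hq h
    rw [← pow_succ] at hn
    have h1 : ‖q‖ ^ (n + 1) = 1 := by rw [← norm_pow, hn, norm_one]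
    have h2 : ‖q‖ ^ (n + 1) < 1 := pow_lt_one₀ (norm_nonneg _) hq (by omega)
    linarith
  have e : prodG τ = fun t => (1 - cexp (2 * Real.pi * I * t)) * (cexp (-(Real.pi * I * t)) *
    (psiP q (q * cexp (2 * Real.pi * I * t)) * psiP q (cexp (2 * Real.pi * I * (τ - t))))) := by
    funext t
    unfold prodG
    rw [psi_rec hq (cexp (2 * Real.pi * I * t))]
    ring
  have hu : HasDerivAt (fun t : ℂ => 1 - cexp (2 * Real.pi * I * t)) (-(2 * Real.pi * I)) 0 := by
    have := (((hasDerivAt_id (0:ℂ)).const_mul (2 * Real.pi * I : ℂ)).cexp).const_sub 1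
    simpa using this
  have h := psi_diff hq
  have hv : Differentiable ℂ (fun t => (cexp (-(Real.pi * I * t)) *
    (psiP q (q * cexp (2 * Real.pi * I * t)) * psiP q (cexp (2 * Real.pi * I * (τ - t)))))) := by
    refine Differentiable.mul (by fun_prop) (Differentiable.mul ?_ ?_)
    · exact h.comp (by fun_prop : Differentiable ℂ (fun t : ℂ => q * cexp (2 * Real.pi * I * t)))
    · exact h.comp (by fun_prop : Differentiable ℂ (fun t : ℂ => cexp (2 * Real.pi * I * (τ - t))))
  rw [e]
  refine ⟨by simp, ?_⟩
  have hd := hu.mul (hv 0).hasDerivAt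
  have hd' : deriv (fun t => (1 - cexp (2 * Real.pi * I * t)) * (cexp (-(Real.pi * I * t)) *
    (psiP q (q * cexp (2 * Real.pi * I * t)) * psiP q (cexp (2 * Real.pi * I * (τ - t)))))) 0 = _ :=
    hd.deriv
  rw [hd']
  simp only [mul_zero, Complex.exp_zero, sub_self, zero_mul, add_zero, mul_one, neg_zero, one_mul,
    sub_zero, ← hqd]
  exact mul_ne_zero (neg_ne_zero.2 Complex.two_pi_I_ne_zero) (mul_ne_zero hpq hpq)

lemma trans_deriv {F m : ℂ → ℂ} {l : ℂ} (hF : Differentiable ℂ F) (hm : Differentiable ℂ m)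
    (h : ∀ z, F (z + l) = m z * F z) (z : ℂ) :
    deriv F (z + l) = deriv m z * F z + m z * deriv F z := by
  have e : (fun z => F (z + l)) = fun z => m z * F z := funext h
  rw [← deriv_comp_add_const, e]
  exact ((hm z).hasDerivAt.mul (hF z).hasDerivAt).deriv

lemma trans_simple {F m : ℂ → ℂ} {l : ℂ} (hF : Differentiable ℂ F) (hm : Differentiable ℂ m)
    (hm0 : ∀ z, m z ≠ 0) (h : ∀ z, F (z + l) = m z * F z) (z : ℂ) :
    (F (z + l) = 0 ∧ deriv F (z + l) ≠ 0) ↔ (F z = 0 ∧ deriv F z ≠ 0) := by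
  rw [trans_deriv hF hm h, h]
  constructor
  · rintro ⟨h1, h2⟩
    have h3 : F z = 0 := (mul_eq_zero.1 h1).resolve_left (hm0 z)
    refine ⟨h3, fun h4 => h2 (by rw [h3, h4]; ring)⟩
  · rintro ⟨h1, h2⟩
    rw [h1]
    simp [hm0 z, h2]

lemma trans_double {F m : ℂ → ℂ} {l : ℂ} (hF : Differentiable ℂ F) (hm : Differentiable ℂ m)
    (hm0 : ∀ z, m z ≠ 0) (h : ∀ z, F (z + l) = m z * F z) (z : ℂ) :
    (F (z + l) = 0 ∧ deriv F (z + l) = 0) ↔ (F z = 0 ∧ deriv F z = 0) := by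
  rw [trans_deriv hF hm h, h]
  constructor
  · rintro ⟨h1, h2⟩
    have h3 : F z = 0 := (mul_eq_zero.1 h1).resolve_left (hm0 z)
    rw [h3, mul_zero, zero_add] at h2
    exact ⟨h3, (mul_eq_zero.1 h2).resolve_left (hm0 z)⟩
  · rintro ⟨h1, h2⟩
    rw [h1, h2]
    simp

noncomputable def mE (τ z : ℂ) : ℂ := -cexp (-(Real.pi * I * (τ + 2 * z)))

lemma mE_ne (τ z : ℂ) : mE τ z ≠ 0 := neg_ne_zero.2 (Complex.exp_ne_zero _)

lemma mE_deriv (τ z : ℂ) : HasDerivAt (mE τ) (-(2 * Real.pi * I) * mE τ z) z := by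
  have h := ((((((hasDerivAt_id z).const_mul (2:ℂ)).const_add τ).const_mul
    (Real.pi * I : ℂ)).neg).cexp).neg
  refine HasDerivAt.congr_deriv (f := mE τ) h ?_
  simp only [mE, id, Pi.neg_apply]
  ring

lemma mE_diff (τ : ℂ) : Differentiable ℂ (mE τ) := fun z => (mE_deriv τ z).differentiableAt

lemma thT_diff (k : ℕ) {τ : ℂ} (hτ : 0 < τ.im) : Differentiable ℂ (fun t => thT k t τ) :=
  fun t => (thT_deriv_t k t hτ).differentiableAt

lemma thT_zero (τ : ℂ) : thT 0 0 τ = 0 := by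
  have := thT_neg 0 τ
  rw [neg_zero] at this
  exact self_eq_neg.1 this

lemma thT_lattice {τ : ℂ} {z : ℂ} (hz : inLattice τ z) : thT 0 z τ = 0 := by
  refine aux_lattice (p := fun z => thT 0 z τ = 0) (thT_zero τ) (fun z => ?_) (fun z => ?_) hz
  · rw [thT_add_one, neg_eq_zero]
  · rw [thT_add_tau]
    exact mul_eq_zero_iff_left (mE_ne τ z)

lemma thT_facts {τ : ℂ} (hτ : 0 < τ.im) :
    (∀ z, thT 0 z τ = 0 → inLattice τ z) ∧ thT 1 0 τ ≠ 0 := by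
  have hg := prodG_diff hτ
  have hf := thT_diff 0 hτ
  have hg0 := prodG_at_zero hτ
  have hs : ∀ z, inLattice τ z → prodG τ z = 0 ∧ deriv (prodG τ) z ≠ 0 := by
    intro z hz
    refine aux_lattice (p := fun z => prodG τ z = 0 ∧ deriv (prodG τ) z ≠ 0) hg0 ?_ ?_ hz
    · exact trans_simple hg (m := fun _ => -1) (by fun_prop) (by simp)
        (fun z => by rw [prodG_add_one]; ring)
    · exact trans_simple hg (mE_diff τ) (mE_ne τ) (prodG_add_tau hτ)
  obtain ⟨h, hd, hfg⟩ := aux_quot hf hg (fun z hz =>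
    ⟨thT_lattice (prodG_zero hτ hz), (hs z (prodG_zero hτ hz)).2⟩)
  have hne : ∃ z, prodG τ z ≠ 0 := by
    obtain ⟨t, ht⟩ := thT_ne_zero hτ
    refine ⟨t, fun e => ht ?_⟩
    have := hfg t
    rwa [e, zero_mul] at this
  have h1 : ∀ z, h (z + 1) = h z := by
    refine aux_cancel hg (hd.comp (by fun_prop)) hd hne fun z => ?_
    have a := hfg (z + 1)
    rw [thT_add_one, prodG_add_one, hfg z] at a
    linear_combination a
  have h2 : ∀ z, h (z + τ) = h z := by
    refine aux_cancel hg (hd.comp (by fun_prop)) hd hne fun z => ?_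
    have a := hfg (z + τ)
    rw [thT_add_tau, prodG_add_tau hτ, hfg z] at a
    apply mul_left_cancel₀ (mE_ne τ z)
    unfold mE
    linear_combination -a
  have hc := aux_liouville hτ hd (fun z => by rw [h1]) (fun z => by rw [h2])
  have hc0 : h 0 ≠ 0 := by
    intro e
    obtain ⟨t, ht⟩ := thT_ne_zero hτ
    exact ht (by rw [hfg, hc, e, mul_zero])
  have hfg' : ∀ z, thT 0 z τ = prodG τ z * h 0 := fun z => by rw [hfg, hc]
  refine ⟨fun z hz => ?_, fun e => ?_⟩
  · rw [hfg'] at hz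
    exact prodG_zero hτ ((mul_eq_zero.1 hz).resolve_right hc0)
  · have a := (thT_deriv_t 0 0 hτ).deriv
    have b := ((hg 0).hasDerivAt.mul_const (h 0)).deriv
    rw [← funext hfg'] at b
    rw [a] at b
    simp only [zero_add, e, mul_zero] at b
    exact (mul_ne_zero hg0.2 hc0) b.symm

/-- Scaled derivative series. -/
noncomputable def thF (τ : ℂ) (k : ℕ) (t : ℂ) : ℂ := (2 * Real.pi * I) ^ k * thT k t τ

lemma thF_deriv {τ : ℂ} (hτ : 0 < τ.im) (k : ℕ) (t : ℂ) :
    HasDerivAt (thF τ k) (thF τ (k+1) t) t := by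
  refine ((thT_deriv_t k t hτ).const_mul ((2 * Real.pi * I) ^ k)).congr_deriv ?_
  unfold thF
  ring

noncomputable def bigN (τ w t : ℂ) : ℂ :=
  thF τ 0 w * thF τ 0 t * (-(thF τ 1 0) * thF τ 2 (w - t) + thF τ 3 0 * thF τ 0 (w - t))
  - thF τ 1 0 * thF τ 2 w * thF τ 0 (w - t) * thF τ 0 t
  - thF τ 1 0 * thF τ 0 w * thF τ 0 (w - t) * thF τ 2 t
  + 2 * thF τ 1 0 * thF τ 1 w * thF τ 1 (w - t) * thF τ 0 t
  - 2 * thF τ 1 0 * thF τ 0 w * thF τ 1 (w - t) * thF τ 1 t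
  + 2 * thF τ 1 0 * thF τ 1 w * thF τ 0 (w - t) * thF τ 1 t

lemma deriv_rel {F F' G G' : ℂ → ℂ} (hF : ∀ z, HasDerivAt F (F' z) z)
    (hG : ∀ z, HasDerivAt G (G' z) z) (h : ∀ z, F z = G z) (z : ℂ) : F' z = G' z := by
  have : F = G := funext h
  subst this
  exact (hF z).unique (hG z)

lemma bigN_zero {τ w : ℂ} (hτ : 0 < τ.im) (hw : ¬ inLattice τ w) (t : ℂ) : bigN τ w t = 0 := by
  obtain ⟨hzer, hT1⟩ := thT_facts hτ
  set c : ℂ := 2 * Real.pi * I with hc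
  have hc0 : c ≠ 0 := Complex.two_pi_I_ne_zero
  obtain ⟨f, hf⟩ : ∃ f : ℕ → ℂ → ℂ, f = thF τ := ⟨_, rfl⟩
  have hfd : ∀ k z, HasDerivAt (f k) (f (k+1) z) z := by rw [hf]; exact thF_deriv hτ
  have hf0 : ∀ z, f 0 z = thT 0 z τ := by intro z; rw [hf]; simp [thF]
  have hdiff : ∀ k, Differentiable ℂ (f k) := fun k z => (hfd k z).differentiableAt
  have hf1 : f 1 0 ≠ 0 := by
    rw [hf]; simp only [thF, pow_one]; exact mul_ne_zero hc0 hT1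
  have hsh : ∀ k l z, HasDerivAt (fun z => f k (z + l)) (f (k+1) (z + l)) z :=
    fun k l z => (hfd k (z + l)).comp_add_const z l
  have hsub : ∀ k z, HasDerivAt (fun z => f k (w - z)) (-f (k+1) (w - z)) z := by
    intro k z
    have := (hfd k (w - z)).comp z ((hasDerivAt_id z).const_sub w)
    exact this.congr_deriv (by ring)
  -- transformation under one
  have p0 : ∀ z, f 0 (z + 1) = - f 0 z := fun z => by rw [hf0, hf0, thT_add_one]
  have p1 : ∀ z, f 1 (z + 1) = - f 1 z := deriv_rel (hsh 0 1) (fun z => (hfd 0 z).neg) p0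
  have p2 : ∀ z, f 2 (z + 1) = - f 2 z := deriv_rel (hsh 1 1) (fun z => (hfd 1 z).neg) p1
  -- transformation under tau
  have q0 : ∀ z, f 0 (z + τ) = mE τ z * f 0 z := fun z => by rw [hf0, hf0, thT_add_tau]; rfl
  have q1 : ∀ z, f 1 (z + τ) = mE τ z * (f 1 z - c * f 0 z) := by
    refine deriv_rel (hsh 0 τ) (fun z => ?_) q0
    exact ((mE_deriv τ z).mul (hfd 0 z)).congr_deriv (by ring)
  have q2 : ∀ z, f 2 (z + τ) = mE τ z * (f 2 z - 2 * c * f 1 z + c^2 * f 0 z) := by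
    refine deriv_rel (hsh 1 τ) (fun z => ?_) q1
    exact ((mE_deriv τ z).mul ((hfd 1 z).sub ((hfd 0 z).const_mul c))).congr_deriv
      (by simp only [Pi.sub_apply, hc]; ring)
  -- oddness
  have hneg : ∀ k z, HasDerivAt (fun z => f k (-z)) (-f (k+1) (-z)) z := by
    intro k z
    have := (hfd k (-z)).comp z ((hasDerivAt_id z).neg)
    exact this.congr_deriv (by ring)
  have o0 : ∀ z, f 0 (-z) = - f 0 z := fun z => by rw [hf0, hf0, thT_neg]
  have o1 : ∀ z, - f 1 (-z) = - f 1 z := deriv_rel (hneg 0) (fun z => (hfd 0 z).neg) o0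
  have o2 : ∀ z, - -f 2 (-z) = - f 2 z :=
    deriv_rel (fun z => (hneg 1 z).neg) (fun z => (hfd 1 z).neg) o1
  have f00 : f 0 0 = 0 := by rw [hf0, thT_zero]
  have f20 : f 2 0 = 0 := by
    have := o2 0
    rw [neg_zero, neg_neg] at this
    exact self_eq_neg.1 this
  obtain ⟨N, hN⟩ : ∃ N : ℂ → ℂ, N = fun t =>
    f 0 w * f 0 t * (-(f 1 0) * f 2 (w - t) + f 3 0 * f 0 (w - t))
    - f 1 0 * f 2 w * f 0 (w - t) * f 0 t
    - f 1 0 * f 0 w * f 0 (w - t) * f 2 t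
    + 2 * f 1 0 * f 1 w * f 1 (w - t) * f 0 t
    - 2 * f 1 0 * f 0 w * f 1 (w - t) * f 1 t
    + 2 * f 1 0 * f 1 w * f 0 (w - t) * f 1 t := ⟨_, rfl⟩
  have hNeq : bigN τ w t = N t := by rw [hN, hf]; rfl
  rw [hNeq]
  have hNv : ∀ t, N t = f 0 w * f 0 t * (-(f 1 0) * f 2 (w - t) + f 3 0 * f 0 (w - t))
    - f 1 0 * f 2 w * f 0 (w - t) * f 0 t
    - f 1 0 * f 0 w * f 0 (w - t) * f 2 t
    + 2 * f 1 0 * f 1 w * f 1 (w - t) * f 0 t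
    - 2 * f 1 0 * f 0 w * f 1 (w - t) * f 1 t
    + 2 * f 1 0 * f 1 w * f 0 (w - t) * f 1 t := fun t => by rw [hN]
  have hND : ∀ t, HasDerivAt N
    ((f 0 w * f 1 t * (-(f 1 0) * f 2 (w - t) + f 3 0 * f 0 (w - t)) +
      f 0 w * f 0 t * (-(f 1 0) * (-f 3 (w - t)) + f 3 0 * (-f 1 (w - t))))
    - (f 1 0 * f 2 w * (-f 1 (w - t)) * f 0 t + f 1 0 * f 2 w * f 0 (w - t) * f 1 t)
    - (f 1 0 * f 0 w * (-f 1 (w - t)) * f 2 t + f 1 0 * f 0 w * f 0 (w - t) * f 3 t)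
    + (2 * f 1 0 * f 1 w * (-f 2 (w - t)) * f 0 t + 2 * f 1 0 * f 1 w * f 1 (w - t) * f 1 t)
    - (2 * f 1 0 * f 0 w * (-f 2 (w - t)) * f 1 t + 2 * f 1 0 * f 0 w * f 1 (w - t) * f 2 t)
    + (2 * f 1 0 * f 1 w * (-f 1 (w - t)) * f 1 t + 2 * f 1 0 * f 1 w * f 0 (w - t) * f 2 t)) t := by
    intro t
    rw [hN]
    exact ((((((((hfd 0 t).const_mul (f 0 w)).mul
      (((hsub 2 t).const_mul (-(f 1 0))).add ((hsub 0 t).const_mul (f 3 0))))).sub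
      (((hsub 0 t).const_mul (f 1 0 * f 2 w)).mul (hfd 0 t))).sub
      (((hsub 0 t).const_mul (f 1 0 * f 0 w)).mul (hfd 2 t))).add
      (((hsub 1 t).const_mul (2 * f 1 0 * f 1 w)).mul (hfd 0 t))).sub
      (((hsub 1 t).const_mul (2 * f 1 0 * f 0 w)).mul (hfd 1 t))).add
      (((hsub 0 t).const_mul (2 * f 1 0 * f 1 w)).mul (hfd 1 t))
  have hNdiff : Differentiable ℂ N := fun t => (hND t).differentiableAt
  have hN0 : N 0 = 0 ∧ deriv N 0 = 0 := by
    rw [(hND 0).deriv, hNv]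
    simp only [sub_zero, f00, f20]
    constructor <;> ring
  -- transformation of N
  have hN1 : ∀ z, N (z + 1) = 1 * N z := by
    intro z
    have e : w - z = (w - (z + 1)) + 1 := by ring
    have r0 := p0 (w - (z + 1))
    have r1 := p1 (w - (z + 1))
    have r2 := p2 (w - (z + 1))
    rw [← e] at r0 r1 r2
    rw [hNv, hNv z, p0, p1, p2, r0, r1, r2]
    ring
  obtain ⟨W, hW⟩ : ∃ W : ℂ, W = cexp (c * w) := ⟨_, rfl⟩
  have hN2 : ∀ z, N (z + τ) = (W * mE τ z ^ 2) * N z := by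
    intro z
    have e : w - z = (w - (z + τ)) + τ := by ring
    have r0 := q0 (w - (z + τ))
    have r1 := q1 (w - (z + τ))
    have r2 := q2 (w - (z + τ))
    rw [← e] at r0 r1 r2
    have hm : W * mE τ z * mE τ (w - (z + τ)) = 1 := by
      rw [hW]
      unfold mE
      rw [mul_assoc, neg_mul_neg, ← Complex.exp_add, ← Complex.exp_add, Complex.exp_eq_one_iff]
      exact ⟨0, by rw [hc]; push_cast; ring⟩
    rw [hNv, hNv z, q0, q1, q2, r0, r1, r2]
    linear_combination (-mE τ z * (
      f 0 w * f 0 z * (-(f 1 0) * (f 2 (w - (z + τ)) - 2 * c * f 1 (w - (z + τ)) + c^2 * f 0 (w - (z + τ))) + f 3 0 * f 0 (w - (z + τ)))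
    - f 1 0 * f 2 w * f 0 (w - (z + τ)) * f 0 z
    - f 1 0 * f 0 w * f 0 (w - (z + τ)) * f 2 z
    + 2 * f 1 0 * f 1 w * (f 1 (w - (z + τ)) - c * f 0 (w - (z + τ))) * f 0 z
    - 2 * f 1 0 * f 0 w * (f 1 (w - (z + τ)) - c * f 0 (w - (z + τ))) * f 1 z
    + 2 * f 1 0 * f 1 w * f 0 (w - (z + τ)) * f 1 z)) * hm
  have hW0 : W ≠ 0 := by rw [hW]; exact Complex.exp_ne_zero _
  have hNl : ∀ z, inLattice τ z → N z = 0 ∧ deriv N z = 0 := by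
    intro z hz
    refine aux_lattice (p := fun z => N z = 0 ∧ deriv N z = 0) hN0 ?_ ?_ hz
    · exact trans_double hNdiff (m := fun _ => 1) (by fun_prop) (by simp) hN1
    · exact trans_double hNdiff (((mE_diff τ).pow 2).const_mul W)
        (fun z => mul_ne_zero hW0 (pow_ne_zero 2 (mE_ne τ z))) hN2
  have hfl : ∀ z, inLattice τ z → f 0 z = 0 ∧ deriv (f 0) z ≠ 0 := by
    intro z hz
    refine aux_lattice (p := fun z => f 0 z = 0 ∧ deriv (f 0) z ≠ 0)
      ⟨f00, by rw [(hfd 0 0).deriv]; exact hf1⟩ ?_ ?_ hz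
    · exact trans_simple (hdiff 0) (m := fun _ => -1) (by fun_prop) (by simp)
        (fun z => by rw [p0]; ring)
    · exact trans_simple (hdiff 0) (mE_diff τ) (mE_ne τ) q0
  have hfz : ∀ z, f 0 z = 0 → inLattice τ z := fun z hz => hzer z (by rwa [hf0] at hz)
  obtain ⟨g, hg, hNg⟩ := aux_quot hNdiff (hdiff 0)
    (fun z hz => ⟨(hNl z (hfz z hz)).1, (hfl z (hfz z hz)).2⟩)
  obtain ⟨h, hh, hgh⟩ := aux_quot hg (hdiff 0) (fun z hz => by
    refine ⟨?_, (hfl z (hfz z hz)).2⟩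
    have a := ((hdiff 0 z).hasDerivAt.mul (hg z).hasDerivAt).deriv
    have b : (f 0 * g) = N := funext fun z => (hNg z).symm
    rw [b, (hNl z (hfz z hz)).2, hz, zero_mul, add_zero] at a
    exact (mul_eq_zero.1 a.symm).resolve_left (hfl z (hfz z hz)).2)
  have hNh : ∀ z, N z = f 0 z ^ 2 * h z := fun z => by rw [hNg, hgh]; ring
  have hsq : Differentiable ℂ (fun z => f 0 z ^ 2) := (hdiff 0).pow 2
  have hne : ∃ z, f 0 z ^ 2 ≠ 0 := ⟨w, pow_ne_zero 2 fun e => hw (hfz w e)⟩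
  have h1 : ∀ z, h (z + 1) = h z := by
    refine aux_cancel hsq (hh.comp (by fun_prop)) hh hne fun z => ?_
    have a := hN1 z
    rw [hNh, hNh, p0] at a
    linear_combination a
  have h2 : ∀ z, h (z + τ) = W * h z := by
    refine aux_cancel hsq (hh.comp (by fun_prop)) (hh.const_mul W) hne fun z => ?_
    have a := hN2 z
    rw [hNh, hNh, q0] at a
    apply mul_left_cancel₀ (pow_ne_zero 2 (mE_ne τ z))
    linear_combination a
  rw [hW] at h2
  rw [hNh, aux_zero hτ hw hh h1 h2, mul_zero]

lemma theta1_eq (t τ : ℂ) : theta1 t τ = - thF τ 0 t := by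
  unfold theta1 thF thT thE
  simp

lemma theta1_eq2 (t τ : ℂ) : theta1 t τ =
    -(cexp (Real.pi * I * τ / 4 + Real.pi * I * (t + 1/2)) * jacobiTheta₂ (t + 1/2 + τ/2) τ) := by
  unfold theta1 jacobiTheta₂ jacobiTheta₂_term
  rw [← tsum_mul_left]
  congr 1
  refine tsum_congr fun j => ?_
  rw [← Complex.exp_add]
  congr 1
  ring

lemma theta1'_eq (t : ℂ) {τ : ℂ} (hτ : 0 < τ.im) : theta1' t τ = - thF τ 1 t := by
  unfold theta1'
  have e : (fun s => theta1 s τ) = fun s => - thF τ 0 s := funext fun s => theta1_eq s τ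
  rw [e]
  exact (thF_deriv hτ 0 t).neg.deriv

lemma theta1_joint {p : ℂ × ℂ} (hp : 0 < p.2.im) :
    DifferentiableAt ℂ (fun p : ℂ × ℂ => theta1 p.1 p.2) p := by
  have e : (fun p : ℂ × ℂ => theta1 p.1 p.2) = fun p : ℂ × ℂ =>
    -(cexp (Real.pi * I * p.2 / 4 + Real.pi * I * (p.1 + 1/2)) *
      jacobiTheta₂ (p.1 + 1/2 + p.2/2) p.2) := funext fun p => theta1_eq2 p.1 p.2
  rw [e]
  have h1 : DifferentiableAt ℂ (fun p : ℂ × ℂ => jacobiTheta₂ (p.1 + 1/2 + p.2/2) p.2) p := by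
    have h := (hasFDerivAt_jacobiTheta₂ (p.1 + 1/2 + p.2/2) hp).differentiableAt
    exact DifferentiableAt.comp p
      (g := fun p : ℂ × ℂ => jacobiTheta₂ p.1 p.2)
      (f := fun p : ℂ × ℂ => (p.1 + 1/2 + p.2/2, p.2)) h (by fun_prop)
  exact (DifferentiableAt.mul (by fun_prop) h1).neg

lemma theta1_ne {τ t : ℂ} (hτ : 0 < τ.im) (ht : ¬ inLattice τ t) : theta1 t τ ≠ 0 := by
  rw [theta1_eq]
  intro h
  apply ht
  apply (thT_facts hτ).1
  simpa [thF] using h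

lemma thF_deriv_tau {τ : ℂ} (hτ : 0 < τ.im) (k : ℕ) (t : ℂ) :
    HasDerivAt (fun s => thF s k t) ((4 * Real.pi * I)⁻¹ * thF τ (k+2) t) τ := by
  refine ((thT_deriv_tau k t hτ).const_mul ((2 * Real.pi * I) ^ k)).congr_deriv ?_
  unfold thF
  have : (Real.pi * I : ℂ) ≠ 0 := mul_ne_zero (by exact_mod_cast Real.pi_ne_zero) I_ne_zero
  have e : (4 * Real.pi * I : ℂ)⁻¹ * (2 * Real.pi * I) ^ 2 = Real.pi * I := by
    rw [show (4 * Real.pi * I : ℂ) = 4 * (Real.pi * I) by ring,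
      show (2 * Real.pi * I : ℂ) = 2 * (Real.pi * I) by ring]
    field_simp
    norm_num
  rw [pow_add]
  linear_combination (-(2 * Real.pi * I) ^ k * thT (k+2) t τ) * e

lemma theta1'_tau {τ : ℂ} (hτ : 0 < τ.im) :
    HasDerivAt (fun s => theta1' 0 s) (-((4 * Real.pi * I)⁻¹ * thF τ 3 0)) τ := by
  refine (thF_deriv_tau hτ 1 0).neg.congr_of_eventuallyEq ?_
  filter_upwards [(isOpen_lt continuous_const Complex.continuous_im).mem_nhds hτ] with s hs
  exact theta1'_eq 0 hs

/-- `(w,t,τ) ↦ σ_w(t,τ)` is holomorphic on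
`{(w,t,τ) : τ ∈ H₊, w ∉ ℤ+τℤ, t ∉ ℤ+τℤ}` and satisfies there
`2πi·∂_τ σ_w(t,τ) + ∂_t ∂_w σ_w(t,τ) = 0` (closedness of the form `ω_w`). -/
theorem sigma_holomorphic_and_closed :
    DifferentiableOn ℂ (fun p : ℂ × ℂ × ℂ => sigmaF p.1 p.2.1 p.2.2)
      {p : ℂ × ℂ × ℂ | 0 < p.2.2.im ∧ ¬ inLattice p.2.2 p.1 ∧ ¬ inLattice p.2.2 p.2.1} ∧
    ∀ w t τ : ℂ, 0 < τ.im → ¬ inLattice τ w → ¬ inLattice τ t →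
      2 * (Real.pi : ℂ) * Complex.I * deriv (fun τ' => sigmaF w t τ') τ +
        deriv (fun t' => deriv (fun w' => sigmaF w' t' τ) w) t = 0 := by
  refine ⟨?_, ?_⟩
  · rintro ⟨w, t, τ⟩ ⟨hτ, hw, ht⟩
    simp only at hτ hw ht
    apply DifferentiableAt.differentiableWithinAt
    have comp : ∀ u : ℂ × ℂ × ℂ → ℂ, Differentiable ℂ u →
        DifferentiableAt ℂ (fun p : ℂ × ℂ × ℂ => theta1 (u p) p.2.2) (w, t, τ) := by
      intro u hu
      exact DifferentiableAt.comp (w, t, τ) (g := fun p : ℂ × ℂ => theta1 p.1 p.2)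
        (f := fun p : ℂ × ℂ × ℂ => (u p, p.2.2))
        (theta1_joint (p := (u (w, t, τ), τ)) hτ)
        (DifferentiableAt.prodMk (hu _) (by fun_prop))
    have h1 := comp (fun p => p.1 - p.2.1) (by fun_prop)
    have h2 := comp (fun p => p.1) (by fun_prop)
    have h3 := comp (fun p => p.2.1) (by fun_prop)
    have h4 : DifferentiableAt ℂ (fun p : ℂ × ℂ × ℂ => theta1' 0 p.2.2) (w, t, τ) :=
      DifferentiableAt.comp (w, t, τ) (g := fun s => theta1' 0 s)
        (f := fun p : ℂ × ℂ × ℂ => p.2.2) (theta1'_tau hτ).differentiableAt (by fun_prop)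
    have h5 := h1.mul h4
    have h6 := h2.mul h3
    have hne : theta1 w τ * theta1 t τ ≠ 0 := mul_ne_zero (theta1_ne hτ hw) (theta1_ne hτ ht)
    have h7 := h5.mul (h6.inv hne)
    have e : (fun p : ℂ × ℂ × ℂ => sigmaF p.1 p.2.1 p.2.2) = fun p : ℂ × ℂ × ℂ =>
        (theta1 (p.1 - p.2.1) p.2.2 * theta1' 0 p.2.2) *
          (theta1 p.1 p.2.2 * theta1 p.2.1 p.2.2)⁻¹ := by
      funext p
      unfold sigmaF
      rw [div_eq_mul_inv]
    rw [e]
    exact h7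
  · intro w t τ hτ hw ht
    have hW : thF τ 0 w ≠ 0 := by
      have := theta1_ne hτ hw
      rwa [theta1_eq, neg_ne_zero] at this
    have hT : thF τ 0 t ≠ 0 := by
      have := theta1_ne hτ ht
      rwa [theta1_eq, neg_ne_zero] at this
    have hN := bigN_zero hτ hw t
    have hpi : (Real.pi * I : ℂ) ≠ 0 := mul_ne_zero (by exact_mod_cast Real.pi_ne_zero) I_ne_zero
    -- tau derivative
    have eτ : (fun τ' => sigmaF w t τ') = fun τ' =>
        (-thF τ' 0 (w - t) * theta1' 0 τ') / (thF τ' 0 w * thF τ' 0 t) := by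
      funext s
      unfold sigmaF
      rw [theta1_eq, theta1_eq, theta1_eq, neg_mul_neg]
    have dτ := ((thF_deriv_tau hτ 0 (w - t)).neg.mul (theta1'_tau hτ)).div
      ((thF_deriv_tau hτ 0 w).mul (thF_deriv_tau hτ 0 t)) (mul_ne_zero hW hT)
    have dτ' := (congrArg (fun g => deriv g τ) eτ).trans dτ.deriv
    -- w derivative
    have dw : ∀ t', deriv (fun w' => sigmaF w' t' τ) w =
        thF τ 1 0 * (thF τ 1 (w - t') * thF τ 0 w - thF τ 0 (w - t') * thF τ 1 w) /
          thF τ 0 w ^ 2 / thF τ 0 t' := by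
      intro t'
      have e : (fun w' => sigmaF w' t' τ) = fun w' =>
        thF τ 1 0 * (thF τ 0 (w' - t') / thF τ 0 w') / thF τ 0 t' := by
        funext s
        unfold sigmaF
        rw [theta1_eq, theta1_eq, theta1_eq, neg_mul_neg, theta1'_eq 0 hτ, neg_mul_neg,
          mul_comm (thF τ 0 (s - t')), ← mul_div_assoc, div_div]
      rw [e]
      have h := ((((thF_deriv hτ 0 (w - t')).comp_sub_const w t').div (thF_deriv hτ 0 w) hW).const_mul
        (thF τ 1 0)).div_const (thF τ 0 t')
      rw [mul_div_assoc]
      exact h.deriv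
    have hsub : ∀ k, HasDerivAt (fun z => thF τ k (w - z)) (-thF τ (k+1) (w - t)) t := by
      intro k
      have := (thF_deriv hτ k (w - t)).comp t ((hasDerivAt_id t).const_sub w)
      exact this.congr_deriv (by ring)
    have dt := (((((hsub 1).mul_const (thF τ 0 w)).sub
      ((hsub 0).mul_const (thF τ 1 w))).const_mul
        (thF τ 1 0)).div_const (thF τ 0 w ^ 2)).div (thF_deriv hτ 0 t) hT
    have dt' := (congrArg (fun g => deriv g t) (funext dw)).trans dt.deriv
    beta_reduce at dτ' dt'
    rw [dτ', dt']
    simp only [Pi.neg_apply, Pi.sub_apply, Pi.mul_apply, zero_add, one_add_one_eq_two,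
      Nat.reduceAdd, theta1'_eq 0 hτ]
    rw [show (4 * Real.pi * I : ℂ) = 4 * (Real.pi * I) by ring,
      show (2 * Real.pi * I : ℂ) = 2 * (Real.pi * I) by ring]
    unfold bigN at hN
    generalize (Real.pi * I : ℂ) = P at *
    generalize thF τ 0 w = W at *
    generalize thF τ 0 t = T at *
    field_simp
    linear_combination 2 * hN
end

section
/- For every τ ∈ H₊ and t ∈ ℂ with t ∉ ℤ+τℤ one has the identity 4πi·∂_τ ρ(t,τ) = ∂_t( ρ(t,τ)² + ∂_t ρ(t,τ) ). (Equivalently, the differential form η = ρ(t,τ) dt + (4πi)^{−1}(ρ(t,τ)² + ∂_tρ(t,τ)) dτ appearing as the Cartan part of the KZB connection form Ω is closed.) -/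
open Complex Filter Topology MeasureTheory

noncomputable section

def rhTerm (k : ℕ) (j : ℤ) (t τ : ℂ) : ℂ :=
  (2 * (Real.pi : ℂ) * Complex.I * ((j : ℂ) + 1/2))^k *
   Complex.exp ((Real.pi : ℂ) * Complex.I * ((j : ℂ) + 1/2)^2 * τ +
      2 * (Real.pi : ℂ) * Complex.I * ((j : ℂ) + 1/2) * (t + 1/2))

def rhBound (k : ℕ) (S T : ℝ) (j : ℤ) : ℝ :=
  (2 * Real.pi)^k * (|(j : ℝ)| + 1)^k *
    (Real.exp (2 * Real.pi * S) * Real.exp (-Real.pi * (T * j^2 - 2 * (S + T/2) * |(j:ℝ)|)))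

def rhTheta (k : ℕ) (t τ : ℂ) : ℂ := ∑' j : ℤ, rhTerm k j t τ

end

lemma rhBound_summable (k : ℕ) (S : ℝ) {T : ℝ} (hT : 0 < T) : Summable (rhBound k S T) := by
  have h1 := summable_pow_mul_jacobiTheta₂_term_bound (S + T/2) hT k
  have h0 := summable_pow_mul_jacobiTheta₂_term_bound (S + T/2) hT 0
  have h := ((h1.add h0).mul_left (2^(k-1))).mul_left ((2 * Real.pi)^k * Real.exp (2 * Real.pi * S))
  refine Summable.of_nonneg_of_le (fun j => ?_) (fun j => ?_) h
  · unfold rhBound; positivity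
  · have := add_pow_le (abs_nonneg (j:ℝ)) zero_le_one k
    unfold rhBound
    have e : ((|j| : ℤ) : ℝ) = |(j:ℝ)| := by push_cast; rfl
    rw [e]
    set E := Real.exp (-Real.pi * (T * j^2 - 2 * (S + T/2) * |(j:ℝ)|))
    calc _ = (2 * Real.pi)^k * Real.exp (2 * Real.pi * S) * ((|(j : ℝ)| + 1)^k * E) := by ring
      _ ≤ (2 * Real.pi)^k * Real.exp (2 * Real.pi * S) * ((2^(k-1) * (|(j : ℝ)|^k + 1^k)) * E) := by
        gcongr
      _ = _ := by ring

lemma rhTerm_norm_le (k : ℕ) (S T : ℝ) (hT : 0 < T) (j : ℤ) (t τ : ℂ) (ht : |t.im| ≤ S)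
    (hτ : T ≤ τ.im) : ‖rhTerm k j t τ‖ ≤ rhBound k S T j := by
  unfold rhTerm rhBound
  rw [norm_mul, norm_pow, Complex.norm_exp]
  have hm : ((j : ℂ) + 1/2) = (((j : ℝ) + 1/2 : ℝ) : ℂ) := by push_cast; rfl
  have hS : 0 ≤ S := (abs_nonneg _).trans ht
  have hre : ((Real.pi : ℂ) * Complex.I * ((j : ℂ) + 1/2)^2 * τ +
      2 * (Real.pi : ℂ) * Complex.I * ((j : ℂ) + 1/2) * (t + 1/2)).re
      = -(Real.pi * (((j:ℝ)+1/2)^2 * τ.im + 2 * ((j:ℝ)+1/2) * t.im)) := by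
    rw [hm, ← Complex.ofReal_pow]
    simp only [Complex.add_re, Complex.mul_re, Complex.mul_im, Complex.ofReal_re, Complex.ofReal_im,
      Complex.I_re, Complex.I_im, Complex.add_im, Complex.re_ofNat, Complex.im_ofNat]
    norm_num
    ring
  rw [hre, ← mul_pow, ← Real.exp_add]
  have hj := abs_nonneg (j:ℝ)
  have habs : |(j:ℝ) + 1/2| ≤ |(j:ℝ)| + 1 := by
    refine (abs_add_le _ _).trans ?_
    norm_num
  gcongr
  · rw [hm]
    simp only [norm_mul, Complex.norm_real, Complex.norm_I, Real.norm_eq_abs, abs_of_pos Real.pi_pos]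
    norm_num
    norm_num at habs
    gcongr
  · have h1 : (j:ℝ)^2 - |(j:ℝ)| ≤ ((j:ℝ)+1/2)^2 := by
      nlinarith [neg_abs_le (j:ℝ)]
    have h2 : -(2 * (|(j:ℝ)| + 1) * S) ≤ 2 * ((j:ℝ)+1/2) * t.im := by
      have : |((j:ℝ)+1/2) * t.im| ≤ (|(j:ℝ)| + 1) * S := by
        rw [abs_mul]; gcongr
      have := neg_abs_le (((j:ℝ)+1/2) * t.im)
      linarith
    have h3 : T * ((j:ℝ)^2 - |(j:ℝ)|) ≤ ((j:ℝ)+1/2)^2 * τ.im := by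
      calc T * ((j:ℝ)^2 - |(j:ℝ)|) ≤ T * ((j:ℝ)+1/2)^2 := by gcongr
        _ ≤ τ.im * ((j:ℝ)+1/2)^2 := by gcongr
        _ = _ := by ring
    have := mul_le_mul_of_nonneg_left (add_le_add h3 h2) Real.pi_pos.le
    nlinarith

lemma rhTerm_summable (k : ℕ) (t τ : ℂ) (hτ : 0 < τ.im) : Summable (fun j => rhTerm k j t τ) :=
  Summable.of_norm_bounded (rhBound_summable k |t.im| hτ)
    (fun j => rhTerm_norm_le k _ _ hτ j t τ le_rfl le_rfl)

lemma rhTheta_deriv_t (k : ℕ) (t τ : ℂ) (hτ : 0 < τ.im) :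
    HasDerivAt (fun s => rhTheta k s τ) (rhTheta (k+1) t τ) t := by
  unfold rhTheta
  refine hasDerivAt_tsum_of_isPreconnected (g := fun j s => rhTerm k j s τ)
    (g' := fun j s => rhTerm (k+1) j s τ) (t := Metric.ball t 1) (y₀ := t)
    (rhBound_summable (k+1) (|t.im| + 1) hτ) Metric.isOpen_ball
    (convex_ball t 1).isPreconnected ?_ ?_ (Metric.mem_ball_self one_pos)
    (rhTerm_summable k t τ hτ) (Metric.mem_ball_self one_pos)
  · intro j y _
    have h := (((((hasDerivAt_id y).add_const (1/2:ℂ)).const_mul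
      (2 * (Real.pi : ℂ) * Complex.I * ((j : ℂ) + 1/2))).const_add
      ((Real.pi : ℂ) * Complex.I * ((j : ℂ) + 1/2)^2 * τ)).cexp).const_mul
      ((2 * (Real.pi : ℂ) * Complex.I * ((j : ℂ) + 1/2))^k)
    refine h.congr_deriv ?_
    simp only [rhTerm, id]
    ring
  · intro j y hy
    refine rhTerm_norm_le _ _ _ hτ j y τ ?_ le_rfl
    have h1 : |(y - t).im| ≤ ‖y - t‖ := Complex.abs_im_le_norm _
    rw [Metric.mem_ball, dist_eq_norm] at hy
    have h2 : y.im = t.im + (y - t).im := by simp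
    rw [h2]
    refine (abs_add_le _ _).trans ?_
    linarith

lemma rhTheta_deriv_tau (k : ℕ) (t τ : ℂ) (hτ : 0 < τ.im) :
    HasDerivAt (fun s => rhTheta k t s) (rhTheta (k+2) t τ / (4 * (Real.pi : ℂ) * Complex.I)) τ := by
  unfold rhTheta
  have hT : 0 < τ.im / 2 := by linarith
  have hpi : (Real.pi : ℂ) ≠ 0 := by exact_mod_cast Real.pi_ne_zero
  have hc : (4 * (Real.pi : ℂ) * Complex.I) ≠ 0 := by simp [hpi]
  rw [← tsum_div_const]
  refine hasDerivAt_tsum_of_isPreconnected (g := fun j s => rhTerm k j t s)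
    (g' := fun j s => rhTerm (k+2) j t s / (4 * (Real.pi : ℂ) * Complex.I))
    (t := Metric.ball τ (τ.im/2)) (y₀ := τ)
    ((rhBound_summable (k+2) |t.im| hT).div_const ‖4 * (Real.pi : ℂ) * Complex.I‖)
    Metric.isOpen_ball
    (convex_ball τ _).isPreconnected ?_ ?_ (Metric.mem_ball_self hT)
    (rhTerm_summable k t τ hτ) (Metric.mem_ball_self hT)
  · intro j y _
    have h := ((((hasDerivAt_id y).const_mul
      ((Real.pi : ℂ) * Complex.I * ((j : ℂ) + 1/2)^2)).add_const
      (2 * (Real.pi : ℂ) * Complex.I * ((j : ℂ) + 1/2) * (t + 1/2))).cexp).const_mul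
      ((2 * (Real.pi : ℂ) * Complex.I * ((j : ℂ) + 1/2))^k)
    refine h.congr_deriv ?_
    simp only [rhTerm, id]
    rw [eq_div_iff hc]
    ring
  · intro j y hy
    rw [norm_div]
    gcongr
    refine rhTerm_norm_le _ _ _ hT j t y le_rfl ?_
    have h1 : |(y - τ).im| ≤ ‖y - τ‖ := Complex.abs_im_le_norm _
    rw [Metric.mem_ball, dist_eq_norm] at hy
    have h2 : y.im = τ.im + (y - τ).im := by simp
    have := neg_abs_le (y - τ).im
    linarith

lemma theta1_eq_rh (t τ : ℂ) : theta1 t τ = - rhTheta 0 t τ := by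
  simp [theta1, rhTheta, rhTerm]

lemma theta1'_eq_rh (t τ : ℂ) (hτ : 0 < τ.im) : theta1' t τ = - rhTheta 1 t τ := by
  simp only [theta1', theta1_eq_rh]
  exact (rhTheta_deriv_t 0 t τ hτ).neg.deriv

lemma rhoF_eq_rh (t τ : ℂ) (hτ : 0 < τ.im) : rhoF t τ = rhTheta 1 t τ / rhTheta 0 t τ := by
  rw [rhoF, theta1_eq_rh, theta1'_eq_rh t τ hτ, neg_div_neg_eq]

lemma heat_of_ne (τ t : ℂ) (hτ : 0 < τ.im) (h0 : rhTheta 0 t τ ≠ 0) :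
    4 * (Real.pi : ℂ) * Complex.I * deriv (fun τ' => rhoF t τ') τ =
      deriv (fun t' => rhoF t' τ ^ 2 + deriv (fun u => rhoF u τ) t') t := by
  have hpi : (Real.pi : ℂ) ≠ 0 := by exact_mod_cast Real.pi_ne_zero
  have hc : (4 * (Real.pi : ℂ) * Complex.I) ≠ 0 := by simp [hpi]
  have hL : (fun τ' => rhoF t τ') =ᶠ[𝓝 τ] fun τ' => rhTheta 1 t τ' / rhTheta 0 t τ' := by
    filter_upwards [(isOpen_lt continuous_const Complex.continuous_im).mem_nhds hτ] with s hs
    exact rhoF_eq_rh t s hs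
  rw [hL.deriv_eq, ((rhTheta_deriv_tau 1 t τ hτ).fun_div (rhTheta_deriv_tau 0 t τ hτ) h0).deriv]
  have hR : (fun t' => rhoF t' τ ^ 2 + deriv (fun u => rhoF u τ) t') =ᶠ[𝓝 t]
      fun t' => rhTheta 2 t' τ / rhTheta 0 t' τ := by
    filter_upwards [(rhTheta_deriv_t 0 t τ hτ).continuousAt.eventually_ne h0] with s hs
    have : (fun u => rhoF u τ) = fun u => rhTheta 1 u τ / rhTheta 0 u τ := by
      funext u; exact rhoF_eq_rh u τ hτ
    rw [this, ((rhTheta_deriv_t 1 s τ hτ).fun_div (rhTheta_deriv_t 0 s τ hτ) hs).deriv,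
      rhoF_eq_rh s τ hτ]
    field_simp
    ring
  rw [hR.deriv_eq, ((rhTheta_deriv_t 2 t τ hτ).fun_div (rhTheta_deriv_t 0 t τ hτ) h0).deriv]
  norm_num
  field_simp

noncomputable section

def rhP (Q : ℂ) (m : ℕ) : ℂ := ∏ i ∈ Finset.range m, (1 + -Q^(i+1))

def rhA (Q : ℂ) (m : ℕ) : Polynomial ℂ :=
  ∏ i ∈ Finset.range m, (1 + Polynomial.C (Q^i) * Polynomial.X)

def rhG (Q : ℂ) (n : ℕ) (j : ℤ) : ℂ :=
  if -(n:ℤ) ≤ j ∧ j ≤ n then rhP Q (2*n) / (rhP Q (n + j).toNat * rhP Q (n - j).toNat) else 0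

end

lemma rhA_natDegree (Q : ℂ) (m : ℕ) : (rhA Q m).natDegree ≤ m := by
  unfold rhA
  refine (Polynomial.natDegree_prod_le _ _).trans ?_
  calc _ ≤ ∑ i ∈ Finset.range m, 1 := by
        refine Finset.sum_le_sum fun i _ => ?_
        compute_degree
    _ = m := by simp

lemma rhA_coeff_succ (Q : ℂ) (m a : ℕ) :
    (rhA Q (m+1)).coeff (a+1) = (rhA Q m).coeff (a+1) + Q^m * (rhA Q m).coeff a := by
  have : rhA Q (m+1) = rhA Q m + Polynomial.C (Q^m) * (rhA Q m * Polynomial.X) := by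
    rw [rhA, Finset.prod_range_succ, ← rhA]; ring
  rw [this, Polynomial.coeff_add, Polynomial.coeff_C_mul, Polynomial.coeff_mul_X]

lemma rhA_coeff_zero (Q : ℂ) (m : ℕ) : (rhA Q m).coeff 0 = 1 := by
  rw [Polynomial.coeff_zero_eq_eval_zero, rhA, Polynomial.eval_prod]
  simp

lemma rhP_succ (Q : ℂ) (m : ℕ) : rhP Q (m+1) = rhP Q m * (1 - Q^(m+1)) := by
  rw [rhP, Finset.prod_range_succ, ← rhP]; ring

lemma rhA_coeff (Q : ℂ) (T : ℕ → ℂ) (hT0 : T 0 = 1) (hT : ∀ a, T (a+1) = T a * Q^a) (m : ℕ) :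
    ∀ a b, a + b = m → (rhA Q m).coeff a * (rhP Q a * rhP Q b) = T a * rhP Q m := by
  induction m with
  | zero =>
    intro a b h
    obtain ⟨rfl, rfl⟩ : a = 0 ∧ b = 0 := by omega
    simp [rhA, rhP, hT0]
  | succ m ih =>
    intro a b h
    rcases a with _ | a
    · obtain rfl : b = m + 1 := by omega
      rw [rhA_coeff_zero, hT0]; simp [rhP]
    · rw [rhA_coeff_succ, hT]
      have h1 := ih a b (by omega)
      rcases b with _ | b
      · obtain rfl : a = m := by omega
        rw [Polynomial.coeff_eq_zero_of_natDegree_lt (by have := rhA_natDegree Q a; omega)]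
        rw [rhP_succ]
        linear_combination Q^a * (1 - Q^(a+1)) * h1
      · have h2 := ih (a+1) b (by omega)
        obtain rfl : m = a + b + 1 := by omega
        rw [hT] at h2
        rw [rhP_succ Q b] at h1 ⊢
        rw [rhP_succ Q (a+b+1)]
        rw [rhP_succ Q a] at h2 ⊢
        linear_combination (1 - Q^(b+1)) * h2 + Q^(a+b+1) * (1 - Q^(a+1)) * h1

lemma rh_pow_ne {Q : ℂ} (hQ : ‖Q‖ < 1) (i : ℕ) : 1 + -Q^(i+1) ≠ 0 := by
  intro h
  have h1 : Q^(i+1) = 1 := by linear_combination -h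
  have h2 : ‖Q‖^(i+1) = 1 := by rw [← norm_pow, h1, norm_one]
  exact (pow_lt_one₀ (norm_nonneg _) hQ (Nat.succ_ne_zero i)).ne h2

lemma rhP_ne {Q : ℂ} (hQ : ‖Q‖ < 1) (m : ℕ) : rhP Q m ≠ 0 :=
  Finset.prod_ne_zero_iff.2 fun i _ => rh_pow_ne hQ i

lemma rh_prod_tendsto (f : ℕ → ℂ) (hf : ∀ i, 1 + f i ≠ 0) (hs : Summable (fun i => ‖f i‖)) :
    ∃ L : ℂ, L ≠ 0 ∧ Tendsto (fun n => ∏ i ∈ Finset.range n, (1 + f i)) atTop (𝓝 L) :=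
  ⟨_, tprod_one_add_ne_zero_of_summable hf hs,
    (multipliable_one_add_of_summable hs).hasProd.tendsto_prod_nat⟩

lemma rhP_tendsto {Q : ℂ} (hQ : ‖Q‖ < 1) : ∃ L : ℂ, L ≠ 0 ∧ Tendsto (rhP Q) atTop (𝓝 L) := by
  refine rh_prod_tendsto (fun i => -Q^(i+1)) (rh_pow_ne hQ) ?_
  simp only [norm_neg, norm_pow]
  exact (summable_nat_add_iff 1).2 (summable_geometric_of_lt_one (norm_nonneg _) hQ)

lemma rhG_bound {Q : ℂ} (hQ : ‖Q‖ < 1) : ∃ B : ℝ, ∀ n j, ‖rhG Q n j‖ ≤ B := by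
  obtain ⟨L, hL, h⟩ := rhP_tendsto hQ
  obtain ⟨B1, h1⟩ := h.norm.bddAbove_range
  obtain ⟨B2, h2⟩ := (h.inv₀ hL).norm.bddAbove_range
  have h1' : ∀ m, ‖rhP Q m‖ ≤ B1 := fun m => h1 ⟨m, rfl⟩
  have h2' : ∀ m, ‖(rhP Q m)⁻¹‖ ≤ B2 := fun m => h2 ⟨m, rfl⟩
  have p1 : 0 ≤ B1 := (norm_nonneg _).trans (h1' 0)
  have p2 : 0 ≤ B2 := (norm_nonneg _).trans (h2' 0)
  refine ⟨B1 * (B2 * B2), fun n j => ?_⟩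
  unfold rhG
  split_ifs
  · rw [div_eq_mul_inv, mul_inv, norm_mul, norm_mul]
    gcongr <;> first | exact h1' _ | exact h2' _
  · simp; positivity

lemma rhG_tendsto {Q L : ℂ} (hL : L ≠ 0) (h : Tendsto (rhP Q) atTop (𝓝 L))
    (j : ℤ) : Tendsto (fun n => rhG Q n j) atTop (𝓝 (1 / L)) := by
  have e : (fun n : ℕ => rhP Q (2*n) / (rhP Q (n + j).toNat * rhP Q (n - j).toNat))
      =ᶠ[atTop] fun n => rhG Q n j := by
    filter_upwards [eventually_ge_atTop j.natAbs] with n hn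
    rw [rhG, if_pos (by omega)]
  refine Tendsto.congr' e ?_
  have : 1 / L = L / (L * L) := by field_simp
  rw [this]
  refine Tendsto.div (h.comp ?_) ((h.comp ?_).mul (h.comp ?_)) (mul_ne_zero hL hL)
  · exact tendsto_atTop_mono (fun n => by show n ≤ 2 * n; omega) tendsto_id
  · refine tendsto_atTop.2 fun b => ?_
    filter_upwards [eventually_ge_atTop (b + j.natAbs)] with n hn
    omega
  · refine tendsto_atTop.2 fun b => ?_
    filter_upwards [eventually_ge_atTop (b + j.natAbs)] with n hn
    omega

lemma rh_finite (c w Q : ℂ) (hQ : Q = Complex.exp (2*c)) (hQ1 : ‖Q‖ < 1) (n : ℕ) :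
    ∑' j : ℤ, rhG Q n j * Complex.exp (c * ((j:ℂ) + 1/2)^2 + w * ((j:ℂ)+1/2)) =
    Complex.exp (c/4 + w/2) * ((∏ k ∈ Finset.range n, (1 + Complex.exp (-w + 2*c*k))) *
      (∏ k ∈ Finset.range n, (1 + Complex.exp (w + 2*c*(k+1))))) := by
  have hev : (rhA Q (2*n)).eval (Complex.exp (w + 2*c*(1-n))) =
      Complex.exp (n*w - c*n*(n-1)) * ((∏ k ∈ Finset.range n, (1 + Complex.exp (-w + 2*c*k))) *
      (∏ k ∈ Finset.range n, (1 + Complex.exp (w + 2*c*(k+1))))) := by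
    rw [rhA, Polynomial.eval_prod, two_mul, Finset.prod_range_add, ← mul_assoc]
    congr 1
    · rw [← Finset.prod_range_reflect]
      have : Complex.exp (n*w - c*n*(n-1)) = ∏ k ∈ Finset.range n, Complex.exp (w - 2*c*k) := by
        induction n with
        | zero => simp
        | succ n ih =>
          rw [Finset.prod_range_succ, ← ih, ← Complex.exp_add]
          congr 1; push_cast; ring
      rw [this, ← Finset.prod_mul_distrib]
      refine Finset.prod_congr rfl fun k hk => ?_
      have hk' : k < n := Finset.mem_range.1 hk
      have hc : ((n - 1 - k : ℕ) : ℂ) = n - 1 - k := by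
        rw [Nat.sub_sub, Nat.cast_sub (by omega)]; push_cast; ring
      simp only [Polynomial.eval_add, Polynomial.eval_one, Polynomial.eval_mul, Polynomial.eval_C,
        Polynomial.eval_X]
      rw [hQ, ← Complex.exp_nat_mul, ← Complex.exp_add, hc, mul_add, mul_one, ← Complex.exp_add]
      have h0 : w - 2*c*k + (-w + 2*c*k) = 0 := by ring
      rw [h0, Complex.exp_zero, add_comm]
      congr 2; ring
    · refine Finset.prod_congr rfl fun k _ => ?_
      simp only [Polynomial.eval_add, Polynomial.eval_one, Polynomial.eval_mul, Polynomial.eval_C,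
        Polynomial.eval_X]
      rw [hQ, ← Complex.exp_nat_mul, ← Complex.exp_add]
      congr 2; push_cast; ring
  have hmul : Complex.exp (-(n*w - c*n*(n-1))) * Complex.exp (n*w - c*n*(n-1)) = 1 := by
    rw [← Complex.exp_add]; simp
  have hrhs : Complex.exp (c/4 + w/2) * ((∏ k ∈ Finset.range n, (1 + Complex.exp (-w + 2*c*k))) *
      (∏ k ∈ Finset.range n, (1 + Complex.exp (w + 2*c*(k+1))))) =
      Complex.exp (c/4 + w/2) * Complex.exp (-(n*w - c*n*(n-1))) *
      (rhA Q (2*n)).eval (Complex.exp (w + 2*c*(1-n))) := by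
    rw [hev]
    generalize (∏ k ∈ Finset.range n, (1 + Complex.exp (-w + 2*c*k))) *
      (∏ k ∈ Finset.range n, (1 + Complex.exp (w + 2*c*(k+1)))) = R
    linear_combination (-Complex.exp (c/4 + w/2) * R) * hmul
  rw [hrhs, Polynomial.eval_eq_sum_range' (n := 2*n+1) (by have := rhA_natDegree Q (2*n); omega)]
  rw [tsum_eq_sum (s := (Finset.range (2*n+1)).image (fun l : ℕ => (l:ℤ) - n))]
  · rw [Finset.sum_image (by intro a _ b _ h; simpa using h), Finset.mul_sum]
    refine Finset.sum_congr rfl fun l hl => ?_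
    have hl' : l < 2*n+1 := Finset.mem_range.1 hl
    have hco := rhA_coeff Q (fun a => Complex.exp (c*a*(a-1))) (by simp) (by
      intro a
      rw [hQ, ← Complex.exp_nat_mul, ← Complex.exp_add]
      congr 1; push_cast; ring) (2*n) l (2*n-l) (by omega)
    rw [rhG, if_pos (by omega)]
    have e1 : ((n:ℤ) + ((l:ℤ) - n)).toNat = l := by omega
    have e2 : ((n:ℤ) - ((l:ℤ) - n)).toNat = 2*n-l := by omega
    rw [e1, e2]
    have hne : rhP Q l * rhP Q (2*n-l) ≠ 0 := mul_ne_zero (rhP_ne hQ1 _) (rhP_ne hQ1 _)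
    rw [← eq_div_iff hne] at hco
    rw [hco, ← Complex.exp_nat_mul]
    have hexp : Complex.exp (c * ((((l:ℤ) - n : ℤ):ℂ) + 1/2)^2 + w * ((((l:ℤ) - n : ℤ):ℂ)+1/2)) =
        Complex.exp (c/4 + w/2) * Complex.exp (-(n*w - c*n*(n-1))) *
        Complex.exp (c*l*(l-1)) * Complex.exp (l * (w + 2*c*(1-n))) := by
      rw [← Complex.exp_add, ← Complex.exp_add, ← Complex.exp_add]
      congr 1; push_cast; ring
    rw [hexp]
    ring
  · intro j hj
    rw [rhG, if_neg, zero_mul]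
    intro hh
    apply hj
    rw [Finset.mem_image]
    exact ⟨(j + n).toNat, Finset.mem_range.2 (by omega), by omega⟩

lemma rh_factor_ne (τ t : ℂ) (ht : ¬ inLattice τ t) (m : ℤ) :
    1 + Complex.exp (2 * (Real.pi : ℂ) * Complex.I * (t + 1/2) +
      2 * ((Real.pi : ℂ) * Complex.I * τ) * m) ≠ 0 := by
  intro h
  have hpi : (Real.pi : ℂ) ≠ 0 := by exact_mod_cast Real.pi_ne_zero
  have h1 : Complex.exp (2 * (Real.pi : ℂ) * Complex.I * (t + 1/2) +
      2 * ((Real.pi : ℂ) * Complex.I * τ) * m) = Complex.exp (Real.pi * Complex.I) := by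
    rw [Complex.exp_pi_mul_I]; linear_combination h
  obtain ⟨N, hN⟩ := Complex.exp_eq_exp_iff_exists_int.1 h1
  apply ht
  refine ⟨N, -m, ?_⟩
  have hc : (2 * (Real.pi : ℂ) * Complex.I) ≠ 0 := by simp [hpi]
  apply mul_left_cancel₀ hc
  push_cast
  linear_combination hN

lemma rhTheta_ne (τ t : ℂ) (hτ : 0 < τ.im) (ht : ¬ inLattice τ t) : rhTheta 0 t τ ≠ 0 := by
  intro h0
  obtain ⟨c, hc⟩ : ∃ c, c = (Real.pi : ℂ) * Complex.I * τ := ⟨_, rfl⟩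
  obtain ⟨w, hw⟩ : ∃ w, w = 2 * (Real.pi : ℂ) * Complex.I * (t + 1/2) := ⟨_, rfl⟩
  obtain ⟨Q, hQ⟩ : ∃ Q, Q = Complex.exp (2*c) := ⟨_, rfl⟩
  have hQ1 : ‖Q‖ < 1 := by
    rw [hQ, Complex.norm_exp, Real.exp_lt_one_iff, hc]
    simp
    positivity
  have hfac : ∀ m : ℤ, 1 + Complex.exp (w + 2*c*m) ≠ 0 := by
    intro m; rw [hw, hc]; exact rh_factor_ne τ t ht m
  have hgeo := summable_geometric_of_lt_one (norm_nonneg Q) hQ1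
  obtain ⟨L1, hL1, hl1⟩ := rh_prod_tendsto (fun k : ℕ => Complex.exp (w + 2*c*(k+1)))
    (fun k => by have := hfac (k+1); push_cast at this; exact this) (by
      refine (hgeo.mul_left ‖Complex.exp (w + 2*c)‖).congr fun k => ?_
      rw [← norm_pow, ← norm_mul, hQ, ← Complex.exp_nat_mul, ← Complex.exp_add]
      congr 2; ring)
  obtain ⟨L2, hL2, hl2⟩ := rh_prod_tendsto (fun k : ℕ => Complex.exp (-w + 2*c*k))
    (fun k h => by
      apply hfac (-k)
      have e : Complex.exp (w + 2*c*((-k:ℤ):ℂ)) * Complex.exp (-w + 2*c*k) = 1 := by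
        rw [← Complex.exp_add, ← Complex.exp_zero]; congr 1; push_cast; ring
      linear_combination Complex.exp (w + 2*c*((-k:ℤ):ℂ)) * h - e + h - h) (by
      refine (hgeo.mul_left ‖Complex.exp (-w)‖).congr fun k => ?_
      rw [← norm_pow, ← norm_mul, hQ, ← Complex.exp_nat_mul, ← Complex.exp_add]
      congr 2; ring)
  have hlim := (hl2.mul hl1).const_mul (Complex.exp (c/4 + w/2))
  simp only [← rh_finite c w Q hQ hQ1] at hlim
  obtain ⟨L, hL, hP⟩ := rhP_tendsto hQ1
  obtain ⟨B, hB⟩ := rhG_bound hQ1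
  have hterm : ∀ j : ℤ, Complex.exp (c * ((j:ℂ) + 1/2)^2 + w * ((j:ℂ)+1/2)) = rhTerm 0 j t τ := by
    intro j
    rw [rhTerm, pow_zero, one_mul, hc, hw]
    congr 1; ring
  simp only [hterm] at hlim
  have hlim2 := tendsto_tsum_of_dominated_convergence (𝓕 := atTop)
    (f := fun (n : ℕ) (j : ℤ) => rhG Q n j * rhTerm 0 j t τ)
    (g := fun j => 1 / L * rhTerm 0 j t τ) (bound := fun j => B * rhBound 0 |t.im| τ.im j)
    ((rhBound_summable 0 |t.im| hτ).mul_left B)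
    (fun j => (rhG_tendsto hL hP j).mul_const _)
    (Eventually.of_forall fun n j => by
      rw [norm_mul]
      exact mul_le_mul (hB n j) (rhTerm_norm_le 0 _ _ hτ j t τ le_rfl le_rfl) (norm_nonneg _)
        ((norm_nonneg _).trans (hB n j)))
  rw [tsum_mul_left] at hlim2
  have h3 : ∑' j : ℤ, rhTerm 0 j t τ = 0 := h0
  rw [h3, mul_zero] at hlim2
  have := tendsto_nhds_unique hlim hlim2
  exact mul_ne_zero (Complex.exp_ne_zero _) (mul_ne_zero hL2 hL1) this

/-- `4πi·∂_τ ρ(t,τ) = ∂_t(ρ(t,τ)² + ∂_t ρ(t,τ))`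
(closedness of the Cartan part `η` of the KZB connection form). -/
theorem rho_heat_identity (τ t : ℂ) (hτ : 0 < τ.im) (ht : ¬ inLattice τ t) :
    4 * (Real.pi : ℂ) * Complex.I * deriv (fun τ' => rhoF t τ') τ =
      deriv (fun t' => rhoF t' τ ^ 2 + deriv (fun u => rhoF u τ) t') t := by
  exact heat_of_ne τ t hτ (rhTheta_ne τ t hτ ht)
end

section
/- Let r ≥ 1, M ≥ 1, κ ∈ ℂ∖{0}, and μ_1,…,μ_M ∈ ℂ^r with ∑_i μ_i = 0. Let U ⊆ ℂ^M × H₊ be an open set (coordinates (t_1,…,t_M,τ)) on which t_i − t_j ∉ ℤ+τℤ for all i < j, and for each i < j let L_{ij} : U → ℂ be a holomorphic function with exp(L_{ij}(t,τ)) = E(t_i−t_j,τ) (a branch of log E(t_i−t_j,τ)). Let g : ℂ^r × H₊ → ℂ be holomorphic and satisfy the heat equation 4πiκ·∂_τ g(λ,τ) = ∑_{ν=1}^r ∂²_{λ_ν} g(λ,τ). Define u(t,λ,τ) = exp( ∑_{i<j} (⟨μ_i,μ_j⟩/κ) L_{ij}(t,τ) ) · g( λ − κ^{−1}∑_{i=1}^M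 t_i μ_i , τ ). Then u is horizontal for the abelian KZB connection, i.e. for every i ∈ {1,…,M}: ∂_{t_i} u + κ^{−1} ∑_{ν=1}^r μ_{i,ν} ∂_{λ_ν} u = ( ∑_{j≠i} (⟨μ_i,μ_j⟩/κ) ρ(t_i − t_j, τ) ) · u, and ∂_τ u − (4πiκ)^{−1} ∑_{ν=1}^r ∂²_{λ_ν} u = ( ∑_{i<j} (⟨μ_i,μ_j⟩/κ) ∂_τ L_{ij}(t,τ) ) · u. (This is the description of the horizontal sections of the local system 𝓛_μ: they are of the form Φ_μ(t,τ)·g(λ − κ^{−1}∑μ_i t_i, τ) with Φ_μ = ∏_{i<j} E(t_i−t_j,τ)^{⟨μ_i,μ_j⟩/κ} and g a solution of the heat equation.) -/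
open Complex Filter Topology MeasureTheory

noncomputable section

/-- The candidate horizontal section
`u(t,λ,τ) = exp(∑_{i<j} (⟨μ_i,μ_j⟩/κ) L_{ij}(t,τ)) · g(λ − κ⁻¹∑_i t_i μ_i, τ)`,
where `p = (t,τ)`. -/
def uSec {r M : ℕ} (κ : ℂ) (μ : Fin M → Fin r → ℂ)
    (L : Fin M → Fin M → ((Fin M → ℂ) × ℂ) → ℂ)
    (g : (Fin r → ℂ) → ℂ → ℂ) (p : (Fin M → ℂ) × ℂ) (lam : Fin r → ℂ) : ℂ :=
  Complex.exp (∑ i : Fin M, ∑ j ∈ Finset.univ.filter (fun j : Fin M => i < j),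
      ((∑ ν : Fin r, μ i ν * μ j ν) / κ) * L i j p) *
  g (fun ν => lam ν - κ⁻¹ * ∑ i : Fin M, p.1 i * μ i ν) p.2

end

theorem aux_theta1_neg (t τ : ℂ) : theta1 (-t) τ = -theta1 t τ := by
  unfold theta1
  rw [neg_neg, ← (Equiv.subLeft (-1 : ℤ)).tsum_eq, ← tsum_neg]
  congr 1
  ext j
  simp only [Equiv.subLeft_apply]
  have h : ((Real.pi : ℂ) * Complex.I * (((-1 - j : ℤ) : ℂ) + 1/2)^2 * τ +
      2 * (Real.pi : ℂ) * Complex.I * (((-1 - j : ℤ) : ℂ) + 1/2) * (-t + 1/2)) =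
      ((Real.pi : ℂ) * Complex.I * ((j : ℂ) + 1/2)^2 * τ +
      2 * (Real.pi : ℂ) * Complex.I * ((j : ℂ) + 1/2) * (t + 1/2))
      + (((-1 - j : ℤ) : ℂ) * (2 * (Real.pi : ℂ) * Complex.I) + (Real.pi : ℂ) * Complex.I) := by
    push_cast
    ring
  simp only [h, Complex.exp_add, Complex.exp_int_mul_two_pi_mul_I, Complex.exp_pi_mul_I]
  ring

theorem aux_rho_neg (t τ : ℂ) : rhoF (-t) τ = -rhoF t τ := by
  have h : theta1' (-t) τ = theta1' t τ := by
    have h1 := deriv_comp_neg (fun s => theta1 s τ) t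
    simp only [aux_theta1_neg] at h1
    rw [deriv.fun_neg] at h1
    unfold theta1'
    exact (neg_injective h1).symm
  unfold rhoF
  rw [h, aux_theta1_neg, div_neg]

theorem aux_rho (t τ D : ℂ) (h0 : EF t τ ≠ 0)
    (h : HasDerivAt (fun s => EF s τ) (EF t τ * D) t) : rhoF t τ = D := by
  have hne : theta1' 0 τ ≠ 0 := by
    intro h1
    apply h0
    simp [EF, h1]
  have hne2 : theta1 t τ ≠ 0 := by
    intro h1
    apply h0
    simp [EF, h1]
  have h2 := h.mul_const (theta1' 0 τ)
  have h3 : (fun s => EF s τ * theta1' 0 τ) = fun s => theta1 s τ := by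
    funext s
    simp [EF, hne]
  rw [h3] at h2
  have h4 : theta1' t τ = EF t τ * D * theta1' 0 τ := h2.deriv
  unfold rhoF
  rw [h4]
  unfold EF
  field_simp

theorem aux_L_deriv {M : ℕ} (U : Set ((Fin M → ℂ) × ℂ)) (hUopen : IsOpen U)
    (a b : Fin M) (hab : a < b) (L : ((Fin M → ℂ) × ℂ) → ℂ)
    (hL : DifferentiableOn ℂ L U)
    (hLexp : ∀ p ∈ U, Complex.exp (L p) = EF (p.1 a - p.1 b) p.2)
    (p : (Fin M → ℂ) × ℂ) (hp : p ∈ U) (i : Fin M) :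
    HasDerivAt (fun z => L (Function.update p.1 i z, p.2))
      ((if a = i then rhoF (p.1 i - p.1 b) p.2 else 0)
        + (if b = i then rhoF (p.1 i - p.1 a) p.2 else 0)) (p.1 i) := by
  have hup : (Function.update p.1 i (p.1 i), p.2) = p := by simp
  have hcurve : HasDerivAt (fun z : ℂ => ((Function.update p.1 i z, p.2) : (Fin M → ℂ) × ℂ))
      (Pi.single i 1, 0) (p.1 i) :=
    (hasDerivAt_update p.1 i (p.1 i)).prodMk (hasDerivAt_const _ _)
  have hLd : DifferentiableAt ℂ L (Function.update p.1 i (p.1 i), p.2) := by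
    rw [hup]
    exact hL.differentiableAt (hUopen.mem_nhds hp)
  obtain ⟨D, hD⟩ : ∃ D, HasDerivAt (fun z => L (Function.update p.1 i z, p.2)) D (p.1 i) :=
    ⟨_, hLd.hasFDerivAt.comp_hasDerivAt (p.1 i) hcurve⟩
  have hev : ∀ᶠ z in 𝓝 (p.1 i), (Function.update p.1 i z, p.2) ∈ U := by
    apply hcurve.continuousAt.eventually_mem
    rw [hup]
    exact hUopen.mem_nhds hp
  have hE := hD.cexp
  rw [hup, hLexp p hp] at hE
  have hE2 : HasDerivAt (fun z => EF (Function.update p.1 i z a - Function.update p.1 i z b) p.2)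
      (EF (p.1 a - p.1 b) p.2 * D) (p.1 i) := by
    refine hE.congr_of_eventuallyEq ?_
    filter_upwards [hev] with z hz
    exact (hLexp _ hz).symm
  have hE0 : EF (p.1 a - p.1 b) p.2 ≠ 0 := by
    rw [← hLexp p hp]
    exact Complex.exp_ne_zero _
  convert hD using 1
  by_cases hai : a = i
  · subst hai
    have hba : b ≠ a := ne_of_gt hab
    simp only [Function.update_self, Function.update_of_ne hba] at hE2
    simp only [if_true, if_neg hba, add_zero]
    apply aux_rho _ _ _ hE0
    have h5 := HasDerivAt.comp_add_const (p.1 a - p.1 b) (p.1 b) (f := fun z => EF (z - p.1 b) p.2)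
      (f' := EF (p.1 a - p.1 b) p.2 * D) (by simpa using hE2)
    simpa using h5
  · by_cases hbi : b = i
    · subst hbi
      simp only [Function.update_self, Function.update_of_ne hai] at hE2
      simp only [if_true, if_neg hai, zero_add]
      rw [← neg_sub, aux_rho_neg, neg_eq_iff_eq_neg]
      apply aux_rho _ _ _ hE0
      have h5 := HasDerivAt.comp_const_sub (p.1 a) (p.1 a - p.1 b)
        (f := fun z => EF (p.1 a - z) p.2)
        (f' := EF (p.1 a - p.1 b) p.2 * D) (by simpa using hE2)
      simpa using h5
    · simp only [Function.update_of_ne hai, Function.update_of_ne hbi] at hE2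
      have h6 := hE2.unique (hasDerivAt_const _ _)
      simp only [if_neg hai, if_neg hbi, add_zero]
      exact ((mul_eq_zero.mp h6).resolve_left hE0).symm

theorem aux_sum {M : ℕ} (c : Fin M → Fin M → ℂ) (hc : ∀ a b, c a b = c b a)
    (R : Fin M → ℂ) (i : Fin M) :
    ∑ a : Fin M, ∑ b ∈ Finset.univ.filter (fun b : Fin M => a < b),
      c a b * ((if a = i then R b else 0) + (if b = i then R a else 0))
    = ∑ j ∈ Finset.univ.filter (fun j : Fin M => j ≠ i), c i j * R j := by
  simp only [mul_add, Finset.sum_add_distrib, Finset.sum_filter]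
  have h1 : ∑ a : Fin M, ∑ b : Fin M, (if a < b then c a b * (if a = i then R b else 0) else 0)
      = ∑ b : Fin M, if i < b then c i b * R b else 0 := by
    rw [Finset.sum_eq_single i]
    · simp
    · intro a _ ha
      simp [ha]
    · simp
  have h2 : ∑ a : Fin M, ∑ b : Fin M, (if a < b then c a b * (if b = i then R a else 0) else 0)
      = ∑ a : Fin M, if a < i then c i a * R a else 0 := by
    apply Finset.sum_congr rfl
    intro a _
    rw [Finset.sum_eq_single i]
    · simp [hc a i]
    · intro b _ hb
      simp [hb]
    · simp
  rw [h1, h2, ← Finset.sum_add_distrib]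
  apply Finset.sum_congr rfl
  intro j _
  rcases lt_trichotomy i j with h | h | h
  · simp [h, h.not_gt, h.ne']
  · simp [h]
  · simp [h, h.not_gt, h.ne]

/-- the sections `Φ_μ(t,τ)·g(λ − κ⁻¹∑ μ_i t_i, τ)`, with `g` a solution of
the heat equation, are horizontal for the abelian KZB connection. -/
theorem abelian_KZB_horizontal_sections (r M : ℕ) (hr : 1 ≤ r) (hM : 1 ≤ M)
    (κ : ℂ) (hκ : κ ≠ 0)
    (μ : Fin M → Fin r → ℂ) (hμ : ∑ i : Fin M, μ i = 0)
    (U : Set ((Fin M → ℂ) × ℂ)) (hUopen : IsOpen U)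
    (hUτ : ∀ p ∈ U, 0 < p.2.im)
    (hUt : ∀ p ∈ U, ∀ i j : Fin M, i < j → ¬ inLattice p.2 (p.1 i - p.1 j))
    (L : Fin M → Fin M → ((Fin M → ℂ) × ℂ) → ℂ)
    (hLdiff : ∀ i j : Fin M, i < j → DifferentiableOn ℂ (L i j) U)
    (hLexp : ∀ i j : Fin M, i < j → ∀ p ∈ U, Complex.exp (L i j p) = EF (p.1 i - p.1 j) p.2)
    (g : (Fin r → ℂ) → ℂ → ℂ)
    (hg : DifferentiableOn ℂ (fun p : (Fin r → ℂ) × ℂ => g p.1 p.2)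
      {p : (Fin r → ℂ) × ℂ | 0 < p.2.im})
    (hheat : ∀ (lam : Fin r → ℂ) (τ : ℂ), 0 < τ.im →
      4 * (Real.pi : ℂ) * Complex.I * κ * deriv (fun τ' => g lam τ') τ =
        ∑ ν : Fin r, deriv (deriv (fun z => g (Function.update lam ν z) τ)) (lam ν)) :
    ∀ p ∈ U, ∀ (lam : Fin r → ℂ),
      (∀ i : Fin M,
        deriv (fun z => uSec κ μ L g (Function.update p.1 i z, p.2) lam) (p.1 i)
          + κ⁻¹ * ∑ ν : Fin r, μ i ν *
              deriv (fun z => uSec κ μ L g p (Function.update lam ν z)) (lam ν)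
        = (∑ j ∈ Finset.univ.filter (fun j : Fin M => j ≠ i),
            ((∑ ν : Fin r, μ i ν * μ j ν) / κ) * rhoF (p.1 i - p.1 j) p.2)
            * uSec κ μ L g p lam) ∧
      (deriv (fun τ' => uSec κ μ L g (p.1, τ') lam) p.2
          - (4 * (Real.pi : ℂ) * Complex.I * κ)⁻¹ *
            ∑ ν : Fin r, deriv (deriv (fun z => uSec κ μ L g p (Function.update lam ν z))) (lam ν)
        = (∑ i : Fin M, ∑ j ∈ Finset.univ.filter (fun j : Fin M => i < j),
            ((∑ ν : Fin r, μ i ν * μ j ν) / κ) * deriv (fun τ' => L i j (p.1, τ')) p.2)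
            * uSec κ μ L g p lam) := by
  intro p hp lam
  set c : Fin M → Fin M → ℂ := fun i j => (∑ ν : Fin r, μ i ν * μ j ν) / κ with hc
  have hcs : ∀ a b, c a b = c b a := by
    intro a b
    simp only [hc, mul_comm]
  set S : ((Fin M → ℂ) × ℂ) → ℂ := fun q => ∑ i : Fin M,
    ∑ j ∈ Finset.univ.filter (fun j : Fin M => i < j), c i j * L i j q with hS
  set sh : (Fin M → ℂ) → Fin r → ℂ := fun t ν => κ⁻¹ * ∑ i : Fin M, t i * μ i ν with hsh
  have hu : ∀ q l, uSec κ μ L g q l = Complex.exp (S q) * g (l - sh q.1) q.2 := fun q l => rfl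
  have hτ : 0 < p.2.im := hUτ p hp
  set l0 : Fin r → ℂ := lam - sh p.1 with hl0
  have hopen : IsOpen {q : (Fin r → ℂ) × ℂ | 0 < q.2.im} :=
    isOpen_lt continuous_const (Complex.continuous_im.comp continuous_snd)
  have hgd : DifferentiableAt ℂ (fun q : (Fin r → ℂ) × ℂ => g q.1 q.2) (l0, p.2) :=
    hg.differentiableAt (hopen.mem_nhds hτ)
  obtain ⟨G, hG⟩ : ∃ G, HasFDerivAt (fun q : (Fin r → ℂ) × ℂ => g q.1 q.2) G (l0, p.2) :=
    ⟨_, hgd.hasFDerivAt⟩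
  -- the lambda dependence
  have hupd : ∀ ν z, Function.update lam ν z - sh p.1
      = Function.update l0 ν (z - sh p.1 ν) := by
    intro ν z
    ext k
    by_cases hk : k = ν
    · subst hk
      simp
    · simp [hk, hl0]
  have hlam : ∀ ν, deriv (fun z => uSec κ μ L g p (Function.update lam ν z))
      = fun z => Complex.exp (S p) *
        deriv (fun z => g (Function.update l0 ν z) p.2) (z - sh p.1 ν) := by
    intro ν
    funext z
    simp only [hu, hupd]
    rw [deriv_const_mul_field]
    rw [deriv_comp_sub_const (f := fun z => g (Function.update l0 ν z) p.2)]
  have hl0ν : ∀ ν, lam ν - sh p.1 ν = l0 ν := fun ν => rfl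
  have hlam1 : ∀ ν, deriv (fun z => uSec κ μ L g p (Function.update lam ν z)) (lam ν)
      = Complex.exp (S p) * G (Pi.single ν 1, 0) := by
    intro ν
    rw [hlam ν]
    simp only [hl0ν]
    congr 1
    have hcurve : HasDerivAt (fun z : ℂ => ((Function.update l0 ν z, p.2) : (Fin r → ℂ) × ℂ))
        (Pi.single ν 1, 0) (l0 ν) :=
      (hasDerivAt_update l0 ν (l0 ν)).prodMk (hasDerivAt_const _ _)
    have hG' : HasFDerivAt (fun q : (Fin r → ℂ) × ℂ => g q.1 q.2) G
        (Function.update l0 ν (l0 ν), p.2) := by simpa using hG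
    exact (hG'.comp_hasDerivAt (l0 ν) hcurve).deriv
  have hlam2 : ∀ ν, deriv (deriv (fun z => uSec κ μ L g p (Function.update lam ν z))) (lam ν)
      = Complex.exp (S p) *
        deriv (deriv (fun z => g (Function.update l0 ν z) p.2)) (l0 ν) := by
    intro ν
    rw [hlam ν, deriv_const_mul_field]
    rw [deriv_comp_sub_const (f := deriv (fun z => g (Function.update l0 ν z) p.2))]
    rfl
  refine ⟨fun i => ?_, ?_⟩
  · have hSd : HasDerivAt (fun z => S (Function.update p.1 i z, p.2))
        (∑ j ∈ Finset.univ.filter (fun j : Fin M => j ≠ i), c i j * rhoF (p.1 i - p.1 j) p.2)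
        (p.1 i) := by
      rw [← aux_sum c hcs (fun j => rhoF (p.1 i - p.1 j) p.2) i]
      apply HasDerivAt.fun_sum
      intro a _
      apply HasDerivAt.fun_sum
      intro b hb
      have hab : a < b := (Finset.mem_filter.mp hb).2
      exact (aux_L_deriv U hUopen a b hab (L a b) (hLdiff a b hab) (hLexp a b hab) p hp i).const_mul _
    have hshd : HasDerivAt (fun z => lam - sh (Function.update p.1 i z))
        (-(κ⁻¹ • μ i)) (p.1 i) := by
      rw [hasDerivAt_pi]
      intro ν
      have h1 : HasDerivAt (fun z => ∑ k : Fin M, Function.update p.1 i z k * μ k ν)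
          (∑ k : Fin M, (Pi.single i 1 : Fin M → ℂ) k * μ k ν) (p.1 i) := by
        apply HasDerivAt.fun_sum
        intro k _
        exact ((hasDerivAt_pi.mp (hasDerivAt_update p.1 i (p.1 i))) k).mul_const _
      have h2 := (h1.const_mul κ⁻¹).const_sub (lam ν)
      simpa [Pi.single_apply] using h2
    have hgz : HasDerivAt (fun z => g (lam - sh (Function.update p.1 i z)) p.2)
        (G (-(κ⁻¹ • μ i), 0)) (p.1 i) := by
      have hG' : HasFDerivAt (fun q : (Fin r → ℂ) × ℂ => g q.1 q.2) G
          (lam - sh (Function.update p.1 i (p.1 i)), p.2) := by simpa using hG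
      have hcv : HasDerivAt (fun z : ℂ =>
          ((lam - sh (Function.update p.1 i z), p.2) : (Fin r → ℂ) × ℂ))
          (-(κ⁻¹ • μ i), 0) (p.1 i) := hshd.prodMk (hasDerivAt_const _ _)
      exact hG'.comp_hasDerivAt (p.1 i) hcv
    have hGlin : G (-(κ⁻¹ • μ i), 0) = -(κ⁻¹ * ∑ ν : Fin r, μ i ν * G (Pi.single ν 1, 0)) := by
      have h1 : ((-(κ⁻¹ • μ i), 0) : (Fin r → ℂ) × ℂ)
          = -(κ⁻¹ • ∑ ν : Fin r, μ i ν • ((Pi.single ν 1, 0) : (Fin r → ℂ) × ℂ)) := by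
        apply Prod.ext
        · ext k
          simp [Prod.fst_sum, Finset.sum_apply, Pi.single_apply]
        · simp [Prod.snd_sum]
      rw [h1]
      simp only [map_neg, map_smul, map_sum, smul_eq_mul]
    have hd := (hSd.cexp.mul hgz).deriv
    simp only [hlam1]
    have hfun : (fun z => uSec κ μ L g (Function.update p.1 i z, p.2) lam)
        = (fun z => Complex.exp (S (Function.update p.1 i z, p.2))) *
          (fun z => g (lam - sh (Function.update p.1 i z)) p.2) := rfl
    rw [hfun, hd, hGlin, hu]
    have h3 : ∑ ν : Fin r, μ i ν * (Complex.exp (S p) * G (Pi.single ν 1, 0))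
        = Complex.exp (S p) * ∑ ν : Fin r, μ i ν * G (Pi.single ν 1, 0) := by
      rw [Finset.mul_sum]
      exact Finset.sum_congr rfl fun ν _ => by ring
    rw [h3]
    simp only [Function.update_eq_self, Prod.mk.eta]
    ring
  · have hcurve : HasDerivAt (fun z : ℂ => ((p.1, z) : (Fin M → ℂ) × ℂ)) (0, 1) p.2 :=
      (hasDerivAt_const _ _).prodMk (hasDerivAt_id _)
    have hSd : HasDerivAt (fun z => S (p.1, z))
        (∑ i : Fin M, ∑ j ∈ Finset.univ.filter (fun j : Fin M => i < j),
            c i j * deriv (fun τ' => L i j (p.1, τ')) p.2) p.2 := by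
      apply HasDerivAt.fun_sum
      intro a _
      apply HasDerivAt.fun_sum
      intro b hb
      have hab : a < b := (Finset.mem_filter.mp hb).2
      apply HasDerivAt.const_mul
      have hLd : DifferentiableAt ℂ (L a b) (p.1, p.2) :=
        (hLdiff a b hab).differentiableAt (hUopen.mem_nhds hp)
      exact (hLd.hasFDerivAt.comp_hasDerivAt p.2 hcurve).differentiableAt.hasDerivAt
    have hgz : HasDerivAt (fun z => g l0 z) (deriv (fun z => g l0 z) p.2) p.2 := by
      have h1 : HasDerivAt (fun z : ℂ => ((l0, z) : (Fin r → ℂ) × ℂ)) (0, 1) p.2 :=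
        (hasDerivAt_const _ _).prodMk (hasDerivAt_id _)
      exact (hG.comp_hasDerivAt p.2 h1).differentiableAt.hasDerivAt
    have hd := (hSd.cexp.mul hgz).deriv
    have hfun : (fun τ' => uSec κ μ L g (p.1, τ') lam)
        = (fun z => Complex.exp (S (p.1, z))) * (fun z => g l0 z) := rfl
    simp only [hlam2]
    rw [hfun, hd, ← Finset.mul_sum, ← hheat l0 p.2 hτ, hu]
    have hne : (4 * (Real.pi : ℂ) * Complex.I * κ) ≠ 0 := by
      have : (Real.pi : ℂ) ≠ 0 := by exact_mod_cast Real.pi_ne_zero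
      simp [this, hκ, Complex.I_ne_zero]
    simp only [Prod.mk.eta, ← hl0]
    rw [mul_left_comm _ (Complex.exp (S p)), inv_mul_cancel_left₀ hne]
    ring
end

section
/- Let N ≥ 2 and p ≥ 0 be integers and q = exp(2πiτ) for τ ∈ H₊. Define the Weyl–Kac denominator Π(λ,τ) = q^{(N²−1)/24} ∏_{j<l} ( e^{iπ(λ_j−λ_l)} − e^{iπ(λ_l−λ_j)} ) · ∏_{m=1}^{∞} [ (1−q^m)^{N−1} ∏_{j≠l} (1 − q^m e^{2πi(λ_j−λ_l)}) ] for λ ∈ ℂ^N (the infinite product converges locally uniformly). Then Π^{p+1} is a horizontal section of the KZB connection, i.e. for every λ ∈ ℂ^N with λ_j − λ_l ∉ ℤ+τℤ for all j ≠ l, 4πiN(p+1)·∂_τ (Π(λ,τ)^{p+1}) = ∑_{j=1}^{N} ∂²_{λ_j} (Π(λ,τ)^{p+1}) + 2p(p+1) ∑_{j<l} ∂_tρ(λ_j−λ_l,τ) · Π(λ,τ)^{p+1}. -/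
open Complex Filter Topology MeasureTheory

noncomputable section

/-- The Weyl–Kac denominator
`Π(λ,τ) = q^{(N²−1)/24} ∏_{j<l}(e^{iπ(λ_j−λ_l)} − e^{iπ(λ_l−λ_j)})
  ∏_{m=1}^∞ [(1−q^m)^{N−1} ∏_{j≠l}(1−q^m e^{2πi(λ_j−λ_l)})]`, with `q = e^{2πiτ}`
and `q^{(N²−1)/24} := exp(2πiτ(N²−1)/24)`. -/
def WeylKac (N : ℕ) (lam : Fin N → ℂ) (τ : ℂ) : ℂ :=
  Complex.exp (2 * (Real.pi : ℂ) * Complex.I * τ * ((N ^ 2 - 1 : ℕ) : ℂ) / 24) *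
  (∏ j : Fin N, ∏ l ∈ Finset.univ.filter (fun l : Fin N => j < l),
    (Complex.exp ((Real.pi : ℂ) * Complex.I * (lam j - lam l)) -
      Complex.exp ((Real.pi : ℂ) * Complex.I * (lam l - lam j)))) *
  ∏' k : ℕ,
    ((1 - Complex.exp (2 * (Real.pi : ℂ) * Complex.I * τ) ^ (k + 1)) ^ (N - 1) *
      ∏ j : Fin N, ∏ l ∈ Finset.univ.filter (fun l : Fin N => l ≠ j),
        (1 - Complex.exp (2 * (Real.pi : ℂ) * Complex.I * τ) ^ (k + 1) *
          Complex.exp (2 * (Real.pi : ℂ) * Complex.I * (lam j - lam l))))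

end


namespace WKaux

/-- term of the theta series -/
noncomputable def tm (j : ℤ) (t τ : ℂ) : ℂ := Complex.exp ((Real.pi : ℂ) * Complex.I * ((j : ℂ) + 1/2)^2 * τ +
      2 * (Real.pi : ℂ) * Complex.I * ((j : ℂ) + 1/2) * (t + 1/2))

/-- frequency -/
noncomputable def fr (j : ℤ) : ℂ := 2 * (Real.pi : ℂ) * Complex.I * ((j : ℂ) + 1/2)

/-- `k`-th derivative of theta1 -/
noncomputable def thD (k : ℕ) (t τ : ℂ) : ℂ := -∑' j : ℤ, fr j ^ k * tm j t τ

lemma thD_zero (t τ : ℂ) : thD 0 t τ = theta1 t τ := by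
  simp [thD, theta1, tm]

/-- majorant -/
noncomputable def bd (k : ℕ) (S T : ℝ) (j : ℤ) : ℝ := (2 * Real.pi) ^ k * Real.exp (Real.pi * S) *
  ((|(j:ℝ)| + 1) ^ k * Real.exp (-Real.pi * (T * (j:ℝ) ^ 2 - 2 * (S + T) * |(j:ℝ)|)))

lemma summable_bd (k : ℕ) (S : ℝ) {T : ℝ} (hT : 0 < T) : Summable (bd k S T) := by
  unfold bd
  apply Summable.mul_left
  have h1 := summable_pow_mul_jacobiTheta₂_term_bound (S + T) hT k
  have h0 := summable_pow_mul_jacobiTheta₂_term_bound (S + T) hT 0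
  refine Summable.of_nonneg_of_le (fun j => by positivity) (fun j => ?_)
    ((h1.add h0).mul_left (2 ^ (k - 1)))
  have := add_pow_le (abs_nonneg (j:ℝ)) zero_le_one k
  push_cast
  calc _ ≤ (2 ^ (k - 1) * (|(j:ℝ)| ^ k + 1 ^ k)) * Real.exp (-Real.pi * (T * (j:ℝ) ^ 2 - 2 * (S + T) * |(j:ℝ)|)) := by gcongr
    _ = _ := by simp; ring

lemma norm_term_le (k : ℕ) {S T : ℝ} (hT : 0 < T) (t τ : ℂ) (ht : |t.im| ≤ S)
    (hτ : T ≤ τ.im) (j : ℤ) : ‖fr j ^ k * tm j t τ‖ ≤ bd k S T j := by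
  have hpi := Real.pi_pos
  have e1 : ‖fr j‖ ≤ 2 * Real.pi * (|(j:ℝ)| + 1) := by
    have : ‖(j:ℂ) + 1/2‖ ≤ |(j:ℝ)| + 1 := by
      refine (norm_add_le _ _).trans ?_
      rw [Complex.norm_intCast]
      norm_num
    simp only [fr, norm_mul, Complex.norm_I, Complex.norm_real]
    simp only [RCLike.norm_ofNat, Real.norm_eq_abs, abs_of_pos hpi, mul_one]
    gcongr
  have e2 : ‖tm j t τ‖ ≤ Real.exp (Real.pi * S) *
      Real.exp (-Real.pi * (T * (j:ℝ) ^ 2 - 2 * (S + T) * |(j:ℝ)|)) := by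
    rw [tm, Complex.norm_exp, ← Real.exp_add]
    apply Real.exp_le_exp.mpr
    have : ((Real.pi : ℂ) * Complex.I * ((j : ℂ) + 1/2)^2 * τ +
      2 * (Real.pi : ℂ) * Complex.I * ((j : ℂ) + 1/2) * (t + 1/2)).re
      = Real.pi * (-(((j:ℝ) + 1/2)^2 * τ.im) - 2 * ((j:ℝ) + 1/2) * t.im) := by
      have : ((Real.pi : ℂ) * Complex.I * ((j : ℂ) + 1/2)^2 * τ +
      2 * (Real.pi : ℂ) * Complex.I * ((j : ℂ) + 1/2) * (t + 1/2)) =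
        ((Real.pi * ((j:ℝ)+1/2)^2 : ℝ) : ℂ) * (Complex.I * τ) + ((2 * Real.pi * ((j:ℝ)+1/2) : ℝ) : ℂ) * (Complex.I * (t + 1/2)) := by
        push_cast; ring
      rw [this, Complex.add_re, Complex.re_ofReal_mul, Complex.re_ofReal_mul]
      simp
      ring
    rw [this]
    have h1 : ((j:ℝ) + 1/2)^2 * T ≤ ((j:ℝ) + 1/2)^2 * τ.im := by gcongr
    have h2 : -(2 * ((j:ℝ) + 1/2) * t.im) ≤ 2 * (|(j:ℝ)| + 1/2) * S := by
      refine (neg_le_abs _).trans ?_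
      rw [abs_mul, abs_mul]
      have : |(j:ℝ) + 1/2| ≤ |(j:ℝ)| + 1/2 := (abs_add_le _ _).trans (by norm_num)
      rw [abs_of_pos (by norm_num : (0:ℝ) < 2)]
      gcongr
    have h3 : -(j:ℝ) ≤ |(j:ℝ)| := neg_le_abs _
    have h4 := abs_nonneg (j:ℝ)
    have : -(((j:ℝ) + 1/2)^2 * τ.im) - 2 * ((j:ℝ) + 1/2) * t.im ≤
       S - (T * (j:ℝ) ^ 2 - 2 * (S + T) * |(j:ℝ)|) := by nlinarith
    nlinarith
  rw [norm_mul, norm_pow]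
  calc _ ≤ (2 * Real.pi * (|(j:ℝ)| + 1)) ^ k * (Real.exp (Real.pi * S) *
      Real.exp (-Real.pi * (T * (j:ℝ) ^ 2 - 2 * (S + T) * |(j:ℝ)|))) := by gcongr
    _ = _ := by rw [bd, mul_pow]; ring

lemma summable_term (k : ℕ) (t : ℂ) {τ : ℂ} (hτ : 0 < τ.im) :
    Summable (fun j => fr j ^ k * tm j t τ) :=
  Summable.of_norm_bounded (summable_bd k |t.im| hτ)
    (norm_term_le k hτ t τ le_rfl le_rfl)

lemma hasDerivAt_thD (k : ℕ) (t : ℂ) {τ : ℂ} (hτ : 0 < τ.im) :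
    HasDerivAt (fun z => thD k z τ) (thD (k + 1) t τ) t := by
  have hd : ∀ (j : ℤ) z, HasDerivAt (fun z => fr j ^ k * tm j z τ) (fr j ^ (k+1) * tm j z τ) z := by
    intro j z
    have : HasDerivAt (fun z => ((Real.pi : ℂ) * Complex.I * ((j : ℂ) + 1/2)^2 * τ +
      2 * (Real.pi : ℂ) * Complex.I * ((j : ℂ) + 1/2) * (z + 1/2))) (fr j) z := by
      simpa [fr] using (((hasDerivAt_id z).add_const (1/2:ℂ)).const_mul (2 * (Real.pi : ℂ) * Complex.I * ((j : ℂ) + 1/2))).const_add ((Real.pi : ℂ) * Complex.I * ((j : ℂ) + 1/2)^2 * τ)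
    refine (this.cexp.const_mul (fr j ^ k)).congr_deriv ?_
    rw [tm]; ring
  set s : Set ℂ := {z | |z.im| < |t.im| + 1}
  have hs : IsOpen s := isOpen_lt (by fun_prop) (by fun_prop)
  have hts : t ∈ s := by simp [s]
  have hu := summable_bd k (|t.im| + 1) hτ
  have hb : ∀ (j : ℤ) (z : ℂ), z ∈ s → ‖fr j ^ k * tm j z τ‖ ≤ bd k (|t.im| + 1) τ.im j :=
    fun j z hz => norm_term_le k hτ z τ (le_of_lt hz) le_rfl j
  have hdiff := differentiableOn_tsum_of_summable_norm hu
    (fun j z _ => (hd j z).differentiableAt.differentiableWithinAt) hs hb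
  have hsum := hasSum_deriv_of_summable_norm hu
    (fun j z _ => (hd j z).differentiableAt.differentiableWithinAt) hs hb hts
  have h1 := (hdiff.differentiableAt (hs.mem_nhds hts)).hasDerivAt
  rw [← hsum.tsum_eq] at h1
  simp only [(hd _ _).deriv] at h1
  exact h1.neg

lemma hasDerivAt_thD_tau (k : ℕ) (t : ℂ) {τ : ℂ} (hτ : 0 < τ.im) :
    HasDerivAt (fun w => thD k t w) (thD (k + 2) t τ / (4 * Real.pi * Complex.I)) τ := by
  have hpi : (Real.pi : ℂ) ≠ 0 := by exact_mod_cast Real.pi_ne_zero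
  have hd : ∀ (j : ℤ) z, HasDerivAt (fun z => fr j ^ k * tm j t z)
      (fr j ^ (k+2) * tm j t z / (4 * Real.pi * Complex.I)) z := by
    intro j z
    have : HasDerivAt (fun z => ((Real.pi : ℂ) * Complex.I * ((j : ℂ) + 1/2)^2 * z +
      2 * (Real.pi : ℂ) * Complex.I * ((j : ℂ) + 1/2) * (t + 1/2))) ((Real.pi : ℂ) * Complex.I * ((j : ℂ) + 1/2)^2) z := by
      simpa using ((hasDerivAt_id z).const_mul ((Real.pi : ℂ) * Complex.I * ((j : ℂ) + 1/2)^2)).add_const (2 * (Real.pi : ℂ) * Complex.I * ((j : ℂ) + 1/2) * (t + 1/2))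
    refine (this.cexp.const_mul (fr j ^ k)).congr_deriv ?_
    rw [pow_add, ← tm]
    have : fr j ^ 2 / (4 * Real.pi * Complex.I) = (Real.pi : ℂ) * Complex.I * ((j : ℂ) + 1/2)^2 := by
      rw [fr]; field_simp; try ring
    rw [← this]; ring
  set s : Set ℂ := {z | τ.im / 2 < z.im}
  have hs : IsOpen s := isOpen_lt (by fun_prop) (by fun_prop)
  have hts : τ ∈ s := by simp [s, hτ]
  have hu := summable_bd k (|t.im|) (half_pos hτ)
  have hb : ∀ (j : ℤ) (z : ℂ), z ∈ s → ‖fr j ^ k * tm j t z‖ ≤ bd k (|t.im|) (τ.im/2) j :=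
    fun j z hz => norm_term_le k (half_pos hτ) t z le_rfl (le_of_lt hz) j
  have hdiff := differentiableOn_tsum_of_summable_norm hu
    (fun j z _ => (hd j z).differentiableAt.differentiableWithinAt) hs hb
  have hsum := hasSum_deriv_of_summable_norm hu
    (fun j z _ => (hd j z).differentiableAt.differentiableWithinAt) hs hb hts
  have h1 := (hdiff.differentiableAt (hs.mem_nhds hts)).hasDerivAt
  rw [← hsum.tsum_eq] at h1
  simp only [(hd _ _).deriv] at h1
  rw [tsum_div_const] at h1
  refine h1.neg.congr_deriv ?_
  rw [thD]; ring

/-- shift of `t` by one -/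
lemma tm_add_one (j : ℤ) (t τ : ℂ) : tm j (t + 1) τ = - tm j t τ := by
  have h : Complex.exp (2 * (Real.pi : ℂ) * Complex.I * ((j : ℂ) + 1/2)) = -1 := by
    rw [show 2 * (Real.pi : ℂ) * Complex.I * ((j : ℂ) + 1/2) = Real.pi * Complex.I + j * (2 * Real.pi * Complex.I) by ring,
      Complex.exp_add, Complex.exp_int_mul_two_pi_mul_I, Complex.exp_pi_mul_I]; simp
  rw [tm, tm, ← neg_one_mul, ← h, ← Complex.exp_add]
  congr 1; ring

lemma thD_add_one (k : ℕ) (t τ : ℂ) : thD k (t + 1) τ = - thD k t τ := by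
  simp only [thD, tm_add_one, mul_neg, tsum_neg]

lemma tm_add_tau (j : ℤ) (t τ : ℂ) : tm j (t + τ) τ =
    -Complex.exp (-(Real.pi * Complex.I * τ) - 2 * Real.pi * Complex.I * t) * tm (j + 1) t τ := by
  have h : Complex.exp (- (Real.pi * Complex.I)) = -1 := by
    rw [Complex.exp_neg, Complex.exp_pi_mul_I]; norm_num
  rw [tm, tm, ← neg_one_mul, ← h, ← Complex.exp_add, ← Complex.exp_add]
  congr 1; push_cast; ring

lemma theta_add_tau (t τ : ℂ) : thD 0 (t + τ) τ =
    -Complex.exp (-(Real.pi * Complex.I * τ) - 2 * Real.pi * Complex.I * t) * thD 0 t τ := by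
  simp only [thD, tm_add_tau, pow_zero, one_mul, tsum_mul_left, mul_neg]
  congr 2
  exact (Equiv.addRight (1:ℤ)).tsum_eq (fun j => tm j t τ)

lemma tm_neg (j : ℤ) (t τ : ℂ) : tm j (-t) τ = - tm (-1 - j) t τ := by
  have h : Complex.exp (2 * (Real.pi : ℂ) * Complex.I * ((j : ℂ) + 1/2)) = -1 := by
    rw [show 2 * (Real.pi : ℂ) * Complex.I * ((j : ℂ) + 1/2) = Real.pi * Complex.I + j * (2 * Real.pi * Complex.I) by ring,
      Complex.exp_add, Complex.exp_int_mul_two_pi_mul_I, Complex.exp_pi_mul_I]; simp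
  rw [← neg_one_mul (tm _ _ _), ← h, tm, tm, ← Complex.exp_add]
  congr 1; push_cast; ring

lemma thD_neg (k : ℕ) (t τ : ℂ) : thD k (-t) τ = (-1) ^ (k + 1) * thD k t τ := by
  have h : ∀ j : ℤ, fr j ^ k * tm j (-t) τ = (-1) ^ (k+1) * (fr (-1 - j) ^ k * tm (-1-j) t τ) := by
    intro j
    have : fr j = (-1) * fr (-1 - j) := by rw [fr, fr]; push_cast; ring
    rw [tm_neg, this, mul_pow]; ring
  simp only [thD, h, tsum_mul_left, mul_neg]
  congr 2
  exact (Equiv.subLeft (-1:ℤ)).tsum_eq (fun j => fr j ^ k * tm j t τ)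



/-- finite q-Pochhammer -/
noncomputable def qp (q : ℂ) (n : ℕ) : ℂ := ∏ m ∈ Finset.range n, (1 - q ^ (m + 1))

/-- reciprocal q-Pochhammer extended by zero -/
noncomputable def rp (q : ℂ) (m : ℤ) : ℂ := if m < 0 then 0 else (qp q m.toNat)⁻¹

lemma one_sub_pow_ne {q : ℂ} (hq : ‖q‖ < 1) (m : ℕ) : 1 - q ^ (m + 1) ≠ 0 := by
  intro h
  have : ‖q ^ (m+1)‖ = 1 := by rw [← sub_eq_zero.mp h]; simp
  rw [norm_pow] at this
  exact absurd this (pow_lt_one₀ (norm_nonneg _) hq (by simp)).ne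

lemma qp_ne {q : ℂ} (hq : ‖q‖ < 1) (n : ℕ) : qp q n ≠ 0 :=
  Finset.prod_ne_zero_iff.mpr fun m _ => one_sub_pow_ne hq m

lemma rp_succ {q : ℂ} (hq : ‖q‖ < 1) (m : ℤ) :
    rp q m = (1 - q ^ (m + 1)) * rp q (m + 1) := by
  rcases lt_trichotomy m (-1) with h | h | h
  · rw [rp, rp, if_pos (by omega), if_pos (by omega), mul_zero]
  · subst h; simp [rp]
  · lift m to ℕ using (by omega)
    rw [rp, rp, if_neg (by omega), if_neg (by omega)]
    have e1 : ((m:ℤ) + 1).toNat = m + 1 := by omega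
    rw [e1, Int.toNat_natCast, qp, qp, Finset.prod_range_succ]
    have := one_sub_pow_ne hq m
    have h2 := qp_ne hq m
    rw [qp] at h2
    have e3 : q ^ ((m:ℤ) + 1) = q ^ (m + 1) := by
      exact_mod_cast zpow_natCast q (m + 1)
    rw [e3]
    field_simp

/-- coefficients -/
noncomputable def bc (q : ℂ) (n : ℕ) (k : ℤ) : ℂ := qp q (2 * n) * rp q (n - k) * rp q (n + k)

lemma bc_succ {q : ℂ} (hq : ‖q‖ < 1) (hq0 : q ≠ 0) (n : ℕ) (k : ℤ) :
    bc q (n + 1) k = (1 + q ^ (2 * n + 1)) * bc q n k + q ^ ((n:ℤ) + 1 - k) * bc q n (k - 1)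
      + q ^ ((n:ℤ) + k + 1) * bc q n (k + 1) := by
  unfold bc
  have e1 : rp q (n - k) = (1 - q * q ^ ((n:ℤ) - k)) * rp q ((n + 1 : ℕ) - k) := by
    rw [rp_succ hq (n - k), zpow_add_one₀ hq0]; push_cast; ring_nf
  have e2 : rp q (n + k) = (1 - q * q ^ ((n:ℤ) + k)) * rp q ((n + 1 : ℕ) + k) := by
    rw [rp_succ hq (n + k), zpow_add_one₀ hq0]; push_cast; ring_nf
  have e3 : rp q (n - (k - 1)) = rp q ((n + 1 : ℕ) - k) := by
    congr 1; push_cast; ring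
  have e4 : rp q (n + (k + 1)) = rp q ((n + 1 : ℕ) + k) := by
    congr 1; push_cast; ring
  have e5 : rp q (n + (k - 1)) = (1 - q ^ ((n:ℤ) + k)) * rp q (n + k) := by
    rw [rp_succ hq (n + (k - 1))]; ring_nf
  have e6 : rp q (n - (k + 1)) = (1 - q ^ ((n:ℤ) - k)) * rp q (n - k) := by
    rw [rp_succ hq (n - (k + 1))]; ring_nf
  have e7 : qp q (2 * (n + 1)) = qp q (2 * n) * (1 - q ^ (2 * n + 1)) * (1 - q ^ (2 * n + 2)) := by
    rw [show 2 * (n + 1) = 2 * n + 1 + 1 by ring, qp, qp, Finset.prod_range_succ, Finset.prod_range_succ]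
  have e8 : q ^ (2 * n) = q ^ ((n:ℤ) - k) * q ^ ((n:ℤ) + k) := by
    rw [← zpow_add₀ hq0, ← zpow_natCast]; congr 1; push_cast; ring
  have e9 : q ^ ((n:ℤ) + 1 - k) = q * q ^ ((n:ℤ) - k) := by
    rw [mul_comm, ← zpow_add_one₀ hq0]; congr 1; ring
  rw [e7, e3, e4, e5, e6, e1, e2, pow_add _ _ 1, pow_add _ _ 2, e8, e9, zpow_add_one₀ hq0]
  ring

/-- nome -/
noncomputable def qq (τ : ℂ) : ℂ := Complex.exp (2 * (Real.pi : ℂ) * Complex.I * τ)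

lemma qq_ne (τ : ℂ) : qq τ ≠ 0 := Complex.exp_ne_zero _

lemma norm_qq_lt {τ : ℂ} (hτ : 0 < τ.im) : ‖qq τ‖ < 1 := by
  simpa [qq] using UpperHalfPlane.norm_exp_two_pi_I_lt_one ⟨τ, hτ⟩

lemma tm_succ (k : ℤ) (t τ : ℂ) : tm (k + 1) t τ = - qq t * qq τ ^ (k + 1) * tm k t τ := by
  have h : Complex.exp (Real.pi * Complex.I) = -1 := Complex.exp_pi_mul_I
  rw [qq, qq, ← Complex.exp_int_mul, ← neg_one_mul (cexp _), ← h, tm, tm, ← Complex.exp_add,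
    ← Complex.exp_add, ← Complex.exp_add]
  congr 1; push_cast; ring

lemma hasSum_finite_triple (t : ℂ) {τ : ℂ} (hτ : 0 < τ.im) (n : ℕ) :
    HasSum (fun k : ℤ => bc (qq τ) n k * tm k t τ)
      (tm 0 t τ * ∏ m ∈ Finset.range n, ((1 - qq τ ^ (m + 1) * qq t) * (1 - qq τ ^ m * (qq t)⁻¹))) := by
  induction n with
  | zero =>
    convert hasSum_single (0 : ℤ) ?_ using 1
    · simp [bc, qp, rp]
    · intro k hk
      rcases lt_or_gt_of_ne hk with h | h
      · simp [bc, rp, h]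
      · simp [bc, rp, h]
  | succ n ih =>
    have hq := norm_qq_lt hτ
    have hq0 := qq_ne τ
    have hx := qq_ne t
    have h1 := ((Equiv.addRight (1:ℤ)).symm.hasSum_iff.mpr ih).mul_left (- (qq τ ^ (n+1) * qq t))
    have h2 := ((Equiv.addRight (1:ℤ)).hasSum_iff.mpr ih).mul_left (- (qq τ ^ n * (qq t)⁻¹))
    have h3 := ((ih.mul_left (1 + qq τ ^ (2 * n + 1))).add h1).add h2
    rw [Finset.prod_range_succ]
    convert! h3 using 1
    · ext k
      simp only [Function.comp_apply, Equiv.addRight_symm_apply, Equiv.coe_addRight]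
      have ek := tm_succ (k - 1) t τ
      rw [sub_add_cancel] at ek
      have ek2 := tm_succ k t τ
      rw [bc_succ hq hq0, ek2]
      have : tm (k - 1) t τ = - (qq t)⁻¹ * qq τ ^ (-k) * tm k t τ := by
        rw [ek, zpow_neg]; field_simp
      rw [← sub_eq_add_neg, this]
      have e1 : qq τ ^ ((n:ℤ) + 1 - k) = qq τ ^ (n + 1) * qq τ ^ (-k) := by
        rw [← zpow_natCast, ← zpow_add₀ hq0]; push_cast; ring_nf
      have e2 : qq τ ^ ((n:ℤ) + k + 1) = qq τ ^ n * qq τ ^ (k + 1) := by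
        rw [← zpow_natCast, ← zpow_add₀ hq0]; ring_nf
      rw [e1, e2]
      field_simp
    · field_simp
      ring

/-- infinite Pochhammer -/
noncomputable def Qf (t τ : ℂ) : ℂ := ∏' k : ℕ, (1 - qq τ ^ (k + 1) * qq t)

/-- Euler function -/
noncomputable def ph (τ : ℂ) : ℂ := ∏' k : ℕ, (1 - qq τ ^ (k + 1))

lemma mult_Qf (t : ℂ) {τ : ℂ} (hτ : 0 < τ.im) : Multipliable fun k : ℕ => (1 - qq τ ^ (k + 1) * qq t) := by
  have := norm_qq_lt hτ
  simp only [sub_eq_add_neg]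
  apply multipliable_one_add_of_summable
  simpa using ((summable_nat_add_iff 1).mpr (summable_geometric_of_lt_one (norm_nonneg _) this)).mul_right _

lemma mult_ph {τ : ℂ} (hτ : 0 < τ.im) : Multipliable fun k : ℕ => (1 - qq τ ^ (k + 1)) :=
  ModularForm.multipliable_one_sub_pow (norm_qq_lt hτ)

lemma ph_ne {τ : ℂ} (hτ : 0 < τ.im) : ph τ ≠ 0 := by
  have := ModularForm.eta_tprod_ne_zero (z := τ) hτ
  simpa [ph, qq, ModularForm.eta_q_eq_pow] using this

lemma tendsto_qp {τ : ℂ} (hτ : 0 < τ.im) : Tendsto (fun n => qp (qq τ) n) atTop (𝓝 (ph τ)) :=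
  (mult_ph hτ).hasProd.tendsto_prod_nat

lemma tendsto_rp {τ : ℂ} (hτ : 0 < τ.im) : Tendsto (fun m : ℤ => rp (qq τ) m) atTop (𝓝 (ph τ)⁻¹) := by
  have h1 : Tendsto (fun m : ℤ => (qp (qq τ) m.toNat)⁻¹) atTop (𝓝 (ph τ)⁻¹) := by
    refine ((tendsto_qp hτ).inv₀ (ph_ne hτ)).comp ?_
    exact tendsto_atTop.mpr fun b => (eventually_ge_atTop (b:ℤ)).mono fun m hm => by omega
  refine h1.congr' ?_
  filter_upwards [eventually_ge_atTop 0] with m hm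
  rw [rp, if_neg (by omega)]

lemma exists_bound {τ : ℂ} (hτ : 0 < τ.im) : ∃ C, ∀ n k, ‖bc (qq τ) n k‖ ≤ C := by
  obtain ⟨A, hA⟩ := (tendsto_qp hτ).norm.bddAbove_range
  obtain ⟨B, hB⟩ := ((tendsto_qp hτ).inv₀ (ph_ne hτ)).norm.bddAbove_range
  have hA' : ∀ n, ‖qp (qq τ) n‖ ≤ A := fun n => hA ⟨n, rfl⟩
  have hB' : ∀ n, ‖rp (qq τ) n‖ ≤ B := by
    intro n
    have h0 : 0 ≤ B := (norm_nonneg _).trans (hB ⟨0, rfl⟩)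
    rw [rp]; split_ifs
    · simpa using h0
    · exact hB ⟨n.toNat, rfl⟩
  refine ⟨A * B * B, fun n k => ?_⟩
  rw [bc, norm_mul, norm_mul]
  have h0 : 0 ≤ B := (norm_nonneg _).trans (hB ⟨0, rfl⟩)
  have h0 : 0 ≤ A := (norm_nonneg _).trans (hA ⟨0, rfl⟩)
  gcongr <;> solve_by_elim

lemma triple (t : ℂ) {τ : ℂ} (hτ : 0 < τ.im) :
    thD 0 t τ = - (tm 0 t τ * (1 - (qq t)⁻¹) * ph τ * Qf t τ * Qf (-t) τ) := by
  obtain ⟨C, hC⟩ := exists_bound hτ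
  have hinv : qq (-t) = (qq t)⁻¹ := by rw [qq, qq, ← Complex.exp_neg]; ring_nf
  have hs := (summable_term 0 t hτ).norm
  have hb : ∀ k, Tendsto (fun n : ℕ => bc (qq τ) n k * tm k t τ) atTop (𝓝 ((ph τ)⁻¹ * tm k t τ)) := by
    intro k
    apply Tendsto.mul_const
    have h1 : Tendsto (fun n : ℕ => qp (qq τ) (2 * n)) atTop (𝓝 (ph τ)) :=
      (tendsto_qp hτ).comp (tendsto_id.const_mul_atTop' (by norm_num : 0 < 2))
    have h2 : Tendsto (fun n : ℕ => rp (qq τ) (n - k)) atTop (𝓝 (ph τ)⁻¹) :=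
      (tendsto_rp hτ).comp (tendsto_atTop_add_const_right _ (-k) tendsto_natCast_atTop_atTop)
    have h3 : Tendsto (fun n : ℕ => rp (qq τ) (n + k)) atTop (𝓝 (ph τ)⁻¹) :=
      (tendsto_rp hτ).comp (tendsto_atTop_add_const_right _ k tendsto_natCast_atTop_atTop)
    have := (h1.mul h2).mul h3
    rwa [mul_inv_cancel₀ (ph_ne hτ), one_mul] at this
  have key := tendsto_tsum_of_dominated_convergence (bound := fun k => C * ‖fr k ^ 0 * tm k t τ‖)
    (hs.mul_left C) hb (Eventually.of_forall fun n k => by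
      rw [norm_mul]; simp only [pow_zero, one_mul]; gcongr; exact hC n k)
  simp only [(hasSum_finite_triple t hτ _).tsum_eq] at key
  have hp1 := (mult_Qf t hτ).hasProd.tendsto_prod_nat
  have hp2 : Tendsto (fun n => ∏ m ∈ Finset.range n, (1 - qq τ ^ m * (qq t)⁻¹)) atTop
      (𝓝 (Qf (-t) τ * (1 - (qq t)⁻¹))) := by
    rw [← tendsto_add_atTop_iff_nat 1]
    have h := (mult_Qf (-t) hτ).hasProd.tendsto_prod_nat
    rw [hinv] at h
    have := h.mul_const (1 - (qq t)⁻¹)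
    refine (this.congr fun n => ?_).trans_eq ?_
    · rw [Finset.prod_range_succ']; simp
    · rw [Qf, hinv]
  have key2 := (hp1.mul hp2).const_mul (tm 0 t τ)
  simp only [← Finset.prod_mul_distrib] at key2
  have := tendsto_nhds_unique key key2
  rw [tsum_mul_left] at this
  have h3 : ∑' k, tm k t τ = ph τ * (tm 0 t τ * (Qf t τ * (Qf (-t) τ * (1 - (qq t)⁻¹)))) := by
    rw [← Qf] at this
    rw [← this, ← mul_assoc, mul_inv_cancel₀ (ph_ne hτ), one_mul]
  simp only [thD, pow_zero, one_mul, h3]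
  ring



lemma qq_neg (t : ℂ) : qq (-t) = (qq t)⁻¹ := by rw [qq, qq, ← Complex.exp_neg]; ring_nf

lemma Qf_ne {t τ : ℂ} (hτ : 0 < τ.im) (ht : ¬ inLattice τ t) : Qf t τ ≠ 0 := by
  have := norm_qq_lt hτ
  unfold Qf
  simp only [sub_eq_add_neg]
  refine tprod_one_add_ne_zero_of_summable (f := fun k => -(qq τ ^ (k + 1) * qq t)) (fun k => ?_) ?_
  · intro h
    have h1 : qq τ ^ (k + 1) * qq t = 1 := by linear_combination -h
    rw [qq, qq, ← Complex.exp_nat_mul, ← Complex.exp_add, Complex.exp_eq_one_iff] at h1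
    obtain ⟨n, hn⟩ := h1
    apply ht
    refine ⟨n, -(k + 1 : ℤ), ?_⟩
    have h2 := Complex.two_pi_I_ne_zero
    push_cast at hn ⊢
    apply mul_left_cancel₀ h2
    linear_combination hn
  · simpa using ((summable_nat_add_iff 1).mpr (summable_geometric_of_lt_one (norm_nonneg _) this)).mul_right _

lemma inLattice_neg {τ t : ℂ} (h : inLattice τ (-t)) : inLattice τ t := by
  obtain ⟨a, b, h⟩ := h
  exact ⟨-a, -b, by push_cast; linear_combination -h⟩

lemma theta_ne {t τ : ℂ} (hτ : 0 < τ.im) (ht : ¬ inLattice τ t) : thD 0 t τ ≠ 0 := by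
  rw [triple t hτ]
  have h1 : 1 - (qq t)⁻¹ ≠ 0 := by
    intro h
    have h1 : qq t = 1 := by
      rw [← inv_inj, inv_one]; linear_combination -h
    rw [qq, Complex.exp_eq_one_iff] at h1
    obtain ⟨n, hn⟩ := h1
    apply ht
    refine ⟨n, 0, ?_⟩
    have h2 := Complex.two_pi_I_ne_zero
    apply mul_left_cancel₀ h2
    push_cast
    linear_combination hn
  have h2 := Qf_ne hτ ht
  have h3 := Qf_ne hτ (fun h => ht (inLattice_neg h))
  have h4 := ph_ne hτ
  have h5 : tm 0 t τ ≠ 0 := Complex.exp_ne_zero _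
  simp_all

lemma Qf_zero (τ : ℂ) : Qf 0 τ = ph τ := by simp [Qf, ph, qq]

lemma continuousAt_Qf {τ : ℂ} (hτ : 0 < τ.im) : ContinuousAt (fun t => Qf t τ) 0 := by
  have hq := norm_qq_lt hτ
  have hc : Continuous qq := by unfold qq; fun_prop
  unfold ContinuousAt Qf
  simp only [sub_eq_add_neg]
  refine tendsto_tprod_one_add_of_dominated_convergence
    (bound := fun k => ‖qq τ‖ ^ (k + 1) * 2) ?_ ?_ ?_
  · exact ((summable_nat_add_iff 1).mpr (summable_geometric_of_lt_one (norm_nonneg _) hq)).mul_right _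
  · intro k
    exact ((hc.tendsto 0).const_mul _).neg
  · have : ∀ᶠ t in 𝓝 (0:ℂ), ‖qq t‖ < 2 := by
      apply (hc.norm.tendsto 0).eventually_lt_const
      simp [qq]
    filter_upwards [this] with t ht k
    rw [norm_neg, norm_mul, norm_pow]
    gcongr

lemma pre_eq (t τ : ℂ) : tm 0 t τ * (1 - (qq t)⁻¹) =
    Complex.exp (Real.pi * Complex.I * τ / 4) * Complex.I *
     (Complex.exp (Real.pi * Complex.I * t) - Complex.exp (-(Real.pi * Complex.I * t))) := by
  have hI : Complex.exp (Real.pi / 2 * Complex.I) = Complex.I := Complex.exp_pi_div_two_mul_I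
  suffices h : tm 0 t τ * (1 - (qq t)⁻¹) =
    Complex.exp (Real.pi * Complex.I * τ / 4) * Complex.exp (Real.pi / 2 * Complex.I) *
     (Complex.exp (Real.pi * Complex.I * t) - Complex.exp (-(Real.pi * Complex.I * t))) by
    rw [h, hI]
  rw [← qq_neg, mul_sub, mul_sub, qq, tm]
  rw [mul_one, ← Complex.exp_add, ← Complex.exp_add, ← Complex.exp_add, ← Complex.exp_add]
  congr 2 <;> · push_cast; ring

lemma thD_one_zero {τ : ℂ} (hτ : 0 < τ.im) :
    thD 1 0 τ = 2 * Real.pi * Complex.exp (Real.pi * Complex.I * τ / 4) * ph τ ^ 3 := by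
  set f : ℂ → ℂ := fun t => - (Complex.exp (Real.pi * Complex.I * τ / 4) * Complex.I *
     (Complex.exp (Real.pi * Complex.I * t) - Complex.exp (-(Real.pi * Complex.I * t)))) with hf
  have hfd : HasDerivAt f (2 * Real.pi * Complex.exp (Real.pi * Complex.I * τ / 4)) 0 := by
    have h1 : HasDerivAt (fun t : ℂ => Real.pi * Complex.I * t) (Real.pi * Complex.I) 0 := by
      simpa using (hasDerivAt_id (0:ℂ)).const_mul (Real.pi * Complex.I)
    have h2 := ((h1.cexp.sub h1.neg.cexp).const_mul (Complex.exp (Real.pi * Complex.I * τ / 4) * Complex.I)).neg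
    refine h2.congr_deriv ?_
    simp only [mul_zero, Complex.exp_zero, neg_zero, Pi.neg_apply]
    linear_combination (-2 * Complex.exp (Real.pi * Complex.I * τ / 4) * Real.pi) * Complex.I_mul_I
  have hM : Tendsto (fun t => ph τ * Qf t τ * Qf (-t) τ) (𝓝[≠] 0) (𝓝 (ph τ ^ 3)) := by
    have h1 := continuousAt_Qf hτ
    have h2 : ContinuousAt (fun t => Qf (-t) τ) 0 := by
      have h1' : ContinuousAt (fun t => Qf t τ) (-0) := by simpa using h1
      exact h1'.comp (f := fun t : ℂ => -t) continuousAt_neg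
    have h3 : Tendsto (fun t => ph τ * Qf t τ * Qf (-t) τ) (𝓝 0) (𝓝 (ph τ * Qf 0 τ * Qf (-0) τ)) := (((continuousAt_const (y := ph τ)).mul h1).mul h2).tendsto
    simp only [neg_zero, Qf_zero] at h3
    exact (h3.mono_left nhdsWithin_le_nhds).trans_eq (by ring_nf)
  have h1 := hasDerivAt_iff_tendsto_slope.mp (hasDerivAt_thD 0 0 hτ)
  have h2 := (hasDerivAt_iff_tendsto_slope.mp hfd).mul hM
  refine tendsto_nhds_unique h1 (h2.congr fun t => ?_)
  have e : ∀ t, thD 0 t τ = f t * (ph τ * Qf t τ * Qf (-t) τ) := by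
    intro t
    rw [triple t hτ, hf, pre_eq]; ring
  have f0 : f 0 = 0 := by simp [hf]
  simp only [slope, vsub_eq_sub, smul_eq_mul]
  rw [e t, e 0, f0]; ring

lemma thD_one_zero_ne {τ : ℂ} (hτ : 0 < τ.im) : thD 1 0 τ ≠ 0 := by
  rw [thD_one_zero hτ]
  have := ph_ne hτ
  have h2 : (Real.pi : ℂ) ≠ 0 := by exact_mod_cast Real.pi_ne_zero
  have h3 := Complex.exp_ne_zero (Real.pi * Complex.I * τ / 4)
  exact mul_ne_zero (mul_ne_zero (mul_ne_zero two_ne_zero h2) h3) (pow_ne_zero 3 this)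

lemma upper_nhds {τ : ℂ} (hτ : 0 < τ.im) : ∀ᶠ w in 𝓝 τ, 0 < w.im :=
  (isOpen_lt continuous_const Complex.continuous_im).mem_nhds hτ

lemma hasDerivAt_ph {τ : ℂ} (hτ : 0 < τ.im) :
    HasDerivAt ph (ph τ * ((thD 3 0 τ / thD 1 0 τ / (4 * Real.pi * Complex.I) - Real.pi * Complex.I / 4) / 3)) τ := by
  have hd : DifferentiableAt ℂ ph τ := by
    have := ModularForm.differentiableAt_eta_tprod (z := τ) hτ
    simpa [ph, qq, ModularForm.eta_q_eq_pow] using! this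
  have h1 := hasDerivAt_thD_tau 1 0 hτ
  have h0 : HasDerivAt (fun w : ℂ => Real.pi * Complex.I * w / 4) (Real.pi * Complex.I / 4) τ := by
    simpa using ((hasDerivAt_id τ).const_mul (Real.pi * Complex.I)).div_const 4
  have h2 := (h0.cexp.const_mul (2 * Real.pi : ℂ)).mul (hd.hasDerivAt.pow 3)
  have h3 := h2.congr_of_eventuallyEq (f₁ := fun w => thD 1 0 w)
    ((upper_nhds hτ).mono fun w hw => by simpa using thD_one_zero hw)
  have h4 := h1.unique h3
  refine hd.hasDerivAt.congr_deriv ?_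
  rw [show 1 + 2 = 3 from rfl] at h4
  have hT := thD_one_zero hτ
  have hp := ph_ne hτ
  have hpi : (Real.pi : ℂ) ≠ 0 := by exact_mod_cast Real.pi_ne_zero
  have hE := Complex.exp_ne_zero (Real.pi * Complex.I * τ / 4)
  have h5 : thD 3 0 τ / thD 1 0 τ / (4 * Real.pi * Complex.I) = (thD 3 0 τ / (4 * Real.pi * Complex.I)) / thD 1 0 τ := by ring
  rw [h5, h4, hT]
  simp
  field_simp
  ring

lemma thD_one_add_tau (t : ℂ) {τ : ℂ} (hτ : 0 < τ.im) : thD 1 (t + τ) τ =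
    -Complex.exp (-(Real.pi * Complex.I * τ) - 2 * Real.pi * Complex.I * t) *
      (thD 1 t τ - 2 * Real.pi * Complex.I * thD 0 t τ) := by
  have h1 := (hasDerivAt_thD 0 (t + τ) hτ).comp_add_const t τ
  have h0 : HasDerivAt (fun t : ℂ => -(Real.pi * Complex.I * τ) - 2 * Real.pi * Complex.I * t) (-(2 * Real.pi * Complex.I)) t := by
    simpa using ((hasDerivAt_id t).const_mul (2 * Real.pi * Complex.I)).const_sub (-(Real.pi * Complex.I * τ))
  have h2 := h0.cexp.neg.mul (hasDerivAt_thD 0 t hτ)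
  simp only [theta_add_tau] at h1
  rw [h1.unique h2]
  simp only [Pi.neg_apply]
  ring

lemma thD_two_add_tau (t : ℂ) {τ : ℂ} (hτ : 0 < τ.im) : thD 2 (t + τ) τ =
    -Complex.exp (-(Real.pi * Complex.I * τ) - 2 * Real.pi * Complex.I * t) *
      (thD 2 t τ + 2 * (-2 * Real.pi * Complex.I) * thD 1 t τ + (-2 * Real.pi * Complex.I) ^ 2 * thD 0 t τ) := by
  have h1 := (hasDerivAt_thD 1 (t + τ) hτ).comp_add_const t τ
  have h0 : HasDerivAt (fun t : ℂ => -(Real.pi * Complex.I * τ) - 2 * Real.pi * Complex.I * t) (-(2 * Real.pi * Complex.I)) t := by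
    simpa using ((hasDerivAt_id t).const_mul (2 * Real.pi * Complex.I)).const_sub (-(Real.pi * Complex.I * τ))
  have h2 := h0.cexp.neg.mul ((hasDerivAt_thD 1 t hτ).sub ((hasDerivAt_thD 0 t hτ).const_mul (2 * Real.pi * Complex.I)))
  simp only [thD_one_add_tau _ hτ] at h1
  rw [h1.unique h2]
  simp only [Pi.sub_apply, Pi.neg_apply]
  ring



/-- Division of entire functions. -/
lemma exists_quotient {f g g' : ℂ → ℂ} (hf : Differentiable ℂ f)
    (hg : ∀ z, HasDerivAt g (g' z) z)
    (hz : ∀ z, g z = 0 → f z = 0 ∧ g' z ≠ 0) :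
    ∃ h : ℂ → ℂ, Differentiable ℂ h ∧ ∀ z, f z = g z * h z := by
  classical
  have hgd : Differentiable ℂ g := fun z => (hg z).differentiableAt
  refine ⟨fun z => if g z = 0 then deriv f z / g' z else f z / g z, fun z => ?_, fun z => ?_⟩
  · by_cases h0 : g z = 0
    · obtain ⟨hf0, hg0⟩ := hz z h0
      have d1 : DifferentiableAt ℂ (dslope f z) z :=
        ((Complex.differentiableOn_dslope (s := Set.univ) univ_mem).mpr hf.differentiableOn).differentiableAt univ_mem
      have d2 : DifferentiableAt ℂ (dslope g z) z :=
        ((Complex.differentiableOn_dslope (s := Set.univ) univ_mem).mpr hgd.differentiableOn).differentiableAt univ_mem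
      have hne : dslope g z z ≠ 0 := by rw [dslope_same, (hg z).deriv]; exact hg0
      refine (d1.div d2 hne).congr_of_eventuallyEq ?_
      filter_upwards [d2.continuousAt.eventually_ne hne] with w hw
      by_cases hwz : w = z
      · subst hwz
        simp [h0, (hg w).deriv]
      · simp only [Pi.div_apply]
        rw [dslope_of_ne _ hwz] at hw
        rw [dslope_of_ne _ hwz, dslope_of_ne _ hwz]
        simp only [slope, vsub_eq_sub, smul_eq_mul, h0, hf0, sub_zero] at hw ⊢
        have hw' : g w ≠ 0 := right_ne_zero_of_mul hw
        have hwz' : w - z ≠ 0 := sub_ne_zero.mpr hwz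
        rw [if_neg hw']
        field_simp
    · refine ((hf z).div (hgd z) h0).congr_of_eventuallyEq ?_
      filter_upwards [(hgd z).continuousAt.eventually_ne h0] with w hw
      simp [hw]
  · by_cases h0 : g z = 0
    · simp [h0, (hz z h0).1]
    · simp only [h0, if_false]
      field_simp

lemma exists_reduce {τ : ℂ} (hτ : 0 < τ.im) (z : ℂ) :
    ∃ (m n : ℤ) (x y : ℝ), x ∈ Set.Icc (0:ℝ) 1 ∧ y ∈ Set.Icc (0:ℝ) 1 ∧
      z = x + y * τ + m + n * τ := by
  set v := z.im / τ.im
  set u := z.re - v * τ.re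
  refine ⟨⌊u⌋, ⌊v⌋, Int.fract u, Int.fract v, ⟨Int.fract_nonneg _, (Int.fract_lt_one _).le⟩,
    ⟨Int.fract_nonneg _, (Int.fract_lt_one _).le⟩, ?_⟩
  have hu : ((Int.fract u : ℝ) : ℂ) = u - ⌊u⌋ := by rw [Int.fract]; push_cast; rfl
  have hv : ((Int.fract v : ℝ) : ℂ) = v - ⌊v⌋ := by rw [Int.fract]; push_cast; rfl
  have : z = u + v * τ := by
    apply Complex.ext
    · simp [u]
    · simp [v]; field_simp
  rw [hu, hv]; linear_combination this

lemma periodic_shift {f : ℂ → ℂ} {τ : ℂ} (h1 : ∀ z, f (z + 1) = f z) (h2 : ∀ z, f (z + τ) = f z)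
    (z : ℂ) (m n : ℤ) : f (z + m + n * τ) = f z := by
  have p1 : Function.Periodic f 1 := h1
  have p2 : Function.Periodic f τ := h2
  rw [(p2.int_mul n) _]
  simpa using (p1.int_mul m) z

lemma elliptic_const {h : ℂ → ℂ} {τ : ℂ} (hτ : 0 < τ.im) (hd : Differentiable ℂ h)
    (h1 : ∀ z, h (z + 1) = h z) (h2 : ∀ z, h (z + τ) = h z) (z w : ℂ) : h z = h w := by
  apply hd.apply_eq_apply_of_bounded
  have hK : IsCompact ((fun p : ℝ × ℝ => h (p.1 + p.2 * τ)) '' (Set.Icc 0 1 ×ˢ Set.Icc 0 1)) := by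
    apply (isCompact_Icc.prod isCompact_Icc).image
    have := hd.continuous
    fun_prop
  refine hK.isBounded.subset ?_
  rintro _ ⟨z, rfl⟩
  obtain ⟨m, n, x, y, hx, hy, rfl⟩ := exists_reduce hτ z
  exact ⟨(x, y), ⟨hx, hy⟩, (periodic_shift h1 h2 _ m n).symm⟩

/-- integer induction principle over the lattice -/
lemma lattice_induction {τ : ℂ} {P : ℂ → Prop} (h1 : ∀ z, P (z + 1) ↔ P z) (h2 : ∀ z, P (z + τ) ↔ P z)
    (z : ℂ) (m n : ℤ) : P (z + m + n * τ) ↔ P z := by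
  have e1 : ∀ m : ℤ, ∀ z, P (z + m) ↔ P z := by
    intro m
    induction m using Int.induction_on with
    | zero => simp
    | succ i ih =>
      intro z
      have := (h1 (z + ((i:ℤ):ℂ))).trans (ih z)
      rw [show z + (((i:ℤ)+1 : ℤ):ℂ) = z + ((i:ℤ):ℂ) + 1 by push_cast; ring]
      exact this
    | pred i ih => intro z; rw [← ih z, ← h1]; push_cast; ring_nf
  have e2 : ∀ n : ℤ, ∀ z, P (z + n * τ) ↔ P z := by
    intro n
    induction n using Int.induction_on with
    | zero => simp
    | succ i ih =>
      intro z
      have := (h2 (z + ((i:ℤ):ℂ) * τ)).trans (ih z)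
      rw [show z + (((i:ℤ)+1 : ℤ):ℂ) * τ = z + ((i:ℤ):ℂ) * τ + τ by push_cast; ring]
      exact this
    | pred i ih => intro z; rw [← ih z, ← h2]; push_cast; ring_nf
  rw [e2, e1]

lemma thD_zero_zero (τ : ℂ) : thD 0 0 τ = 0 := by
  have := thD_neg 0 0 τ
  simp at this
  exact self_eq_neg.mp this

lemma thD_two_zero (τ : ℂ) : thD 2 0 τ = 0 := by
  have := thD_neg 2 0 τ
  norm_num at this
  exact self_eq_neg.mp this

lemma theta_zero_simple {τ z : ℂ} (hτ : 0 < τ.im) (hz : inLattice τ z) :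
    thD 0 z τ = 0 ∧ thD 1 z τ ≠ 0 := by
  obtain ⟨a, b, rfl⟩ := hz
  have := (lattice_induction (τ := τ) (P := fun z => thD 0 z τ = 0 ∧ thD 1 z τ ≠ 0) ?_ ?_ 0 a b).mpr
    ⟨thD_zero_zero τ, thD_one_zero_ne hτ⟩
  · simpa using this
  · intro z; simp [thD_add_one]
  · intro z
    rw [theta_add_tau, thD_one_add_tau _ hτ]
    have := Complex.exp_ne_zero (-(Real.pi * Complex.I * τ) - 2 * Real.pi * Complex.I * z)
    constructor
    · rintro ⟨h, h'⟩
      have h0 : thD 0 z τ = 0 := by simpa [this] using h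
      exact ⟨h0, by simpa [h0, this] using h'⟩
    · rintro ⟨h, h'⟩
      simp [h', h, this]

/-- numerator -/
noncomputable def Gf (τ b a : ℂ) : ℂ :=
  thD 2 a τ * thD 0 b τ * thD 0 (a + b) τ + thD 0 a τ * thD 2 b τ * thD 0 (a + b) τ
  + thD 0 a τ * thD 0 b τ * thD 2 (a + b) τ
  + 2 * (thD 1 a τ * thD 1 b τ * thD 0 (a + b) τ - thD 1 a τ * thD 0 b τ * thD 1 (a + b) τ
    - thD 0 a τ * thD 1 b τ * thD 1 (a + b) τ)

lemma Gf_add_one (τ b a : ℂ) : Gf τ b (a + 1) = Gf τ b a := by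
  simp only [Gf, show a + 1 + b = a + b + 1 by ring, thD_add_one]; ring

lemma Gf_add_tau {τ : ℂ} (hτ : 0 < τ.im) (b a : ℂ) : Gf τ b (a + τ) =
    (Complex.exp (-(Real.pi * Complex.I * τ) - 2 * Real.pi * Complex.I * a) *
    Complex.exp (-(Real.pi * Complex.I * τ) - 2 * Real.pi * Complex.I * (a + b))) * Gf τ b a := by
  simp only [Gf, show a + τ + b = a + b + τ by ring, theta_add_tau, thD_one_add_tau _ hτ,
    thD_two_add_tau _ hτ]
  ring

lemma Gf_lattice {τ : ℂ} (hτ : 0 < τ.im) (b z : ℂ) (m n : ℤ) :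
    Gf τ b (z + m + n * τ) = 0 ↔ Gf τ b z = 0 := by
  apply lattice_induction (P := fun z => Gf τ b z = 0)
  · intro z; rw [Gf_add_one]
  · intro z; rw [Gf_add_tau hτ]; simp [Complex.exp_ne_zero]

lemma theta_triple {τ : ℂ} (hτ : 0 < τ.im) (a : ℂ) {b : ℂ} (hb : ¬ inLattice τ b) :
    Gf τ b a = thD 3 0 τ / thD 1 0 τ * (thD 0 a τ * thD 0 b τ * thD 0 (a + b) τ) := by
  have hD : ∀ k a, HasDerivAt (fun z => thD k z τ) (thD (k + 1) a τ) a :=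
    fun k a => hasDerivAt_thD k a hτ
  have hDs : ∀ k a, HasDerivAt (fun z => thD k (z + b) τ) (thD (k + 1) (a + b) τ) a :=
    fun k a => (hD k (a + b)).comp_add_const a b
  have hGd : ∀ a, HasDerivAt (Gf τ b) (
      (thD 3 a τ * thD 0 b τ) * thD 0 (a + b) τ + (thD 2 a τ * thD 0 b τ) * thD 1 (a + b) τ
      + ((thD 1 a τ * thD 2 b τ) * thD 0 (a + b) τ + (thD 0 a τ * thD 2 b τ) * thD 1 (a + b) τ)
      + ((thD 1 a τ * thD 0 b τ) * thD 2 (a + b) τ + (thD 0 a τ * thD 0 b τ) * thD 3 (a + b) τ)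
      + 2 * (((thD 2 a τ * thD 1 b τ) * thD 0 (a + b) τ + (thD 1 a τ * thD 1 b τ) * thD 1 (a + b) τ)
        - ((thD 2 a τ * thD 0 b τ) * thD 1 (a + b) τ + (thD 1 a τ * thD 0 b τ) * thD 2 (a + b) τ)
        - ((thD 1 a τ * thD 1 b τ) * thD 1 (a + b) τ + (thD 0 a τ * thD 1 b τ) * thD 2 (a + b) τ))) a := by
    intro a
    exact (((((hD 2 a).mul_const _).mul (hDs 0 a)).add (((hD 0 a).mul_const _).mul (hDs 0 a))).add
      (((hD 0 a).mul_const _).mul (hDs 2 a))).add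
      ((((((hD 1 a).mul_const _).mul (hDs 0 a)).sub (((hD 1 a).mul_const _).mul (hDs 1 a))).sub
        (((hD 0 a).mul_const _).mul (hDs 1 a))).const_mul 2)
  have hg : ∀ a, HasDerivAt (fun a => thD 0 a τ * thD 0 (a + b) τ)
      (thD 1 a τ * thD 0 (a + b) τ + thD 0 a τ * thD 1 (a + b) τ) a :=
    fun a => (hD 0 a).mul (hDs 0 a)
  obtain ⟨h, hh, hmul⟩ := exists_quotient (f := Gf τ b) (fun a => (hGd a).differentiableAt) hg (by
    intro z hz
    by_cases hzl : inLattice τ z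
    · have hzb : ¬ inLattice τ (z + b) := by
        rintro ⟨c, d, h⟩
        obtain ⟨a1, b1, h'⟩ := hzl
        exact hb ⟨c - a1, d - b1, by push_cast; linear_combination h - h'⟩
      obtain ⟨z0, z1⟩ := theta_zero_simple hτ hzl
      refine ⟨?_, ?_⟩
      · obtain ⟨m, n, rfl⟩ := hzl
        have := (Gf_lattice hτ b 0 m n).mpr (by simp [Gf, thD_zero_zero, thD_two_zero]; ring)
        simpa using this
      · simp [z0, z1, theta_ne hτ hzb]
    · have hzb : inLattice τ (z + b) := by
        by_contra hc
        exact mul_ne_zero (theta_ne hτ hzl) (theta_ne hτ hc) hz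
      obtain ⟨z0, z1⟩ := theta_zero_simple hτ hzb
      refine ⟨?_, ?_⟩
      · obtain ⟨m, n, hmn⟩ := hzb
        have := (Gf_lattice hτ b (-b) m n).mpr (by
          simp [Gf, thD_zero_zero, thD_two_zero, thD_neg]; ring)
        rwa [show -b + m + n * τ = z by linear_combination -hmn] at this
      · simp [z0, z1, theta_ne hτ hzl])
  -- the quotient is elliptic
  have hgan : AnalyticOnNhd ℂ (fun a => thD 0 a τ * thD 0 (a + b) τ) Set.univ :=
    (Complex.analyticOnNhd_univ_iff_differentiable).mpr fun a => (hg a).differentiableAt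
  have hgne : ∃ z, thD 0 z τ * thD 0 (z + b) τ ≠ 0 := by
    by_contra hc
    push Not at hc
    have h0 : (fun a => thD 0 a τ * thD 0 (a + b) τ) = fun _ => 0 := funext hc
    have := hg 0
    rw [h0] at this
    have := this.unique (hasDerivAt_const 0 0)
    simp [thD_zero_zero] at this
    rcases this with h | h
    · exact thD_one_zero_ne hτ h
    · exact theta_ne hτ hb h
  have cancel : ∀ k : ℂ → ℂ, Differentiable ℂ k → (∀ z, thD 0 z τ * thD 0 (z + b) τ * k z = 0) →
      ∀ z, k z = 0 := by
    intro k hk hz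
    have hkan : AnalyticOnNhd ℂ k Set.univ := (Complex.analyticOnNhd_univ_iff_differentiable).mpr hk
    rcases hgan.eq_zero_or_eq_zero_of_mul_eq_zero hkan (fun z _ => hz z) isPreconnected_univ with h | h
    · obtain ⟨z, hz⟩ := hgne
      exact absurd (h z trivial) hz
    · exact fun z => h z trivial
  have p1 : ∀ z, h (z + 1) = h z := by
    intro z
    refine sub_eq_zero.mp (cancel (fun z => h (z + 1) - h z) (by fun_prop) (fun z => ?_) z)
    have e1 := hmul (z + 1)
    rw [Gf_add_one, hmul z, show z + 1 + b = z + b + 1 by ring, thD_add_one, thD_add_one] at e1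
    linear_combination -e1
  have p2 : ∀ z, h (z + τ) = h z := by
    intro z
    refine sub_eq_zero.mp (cancel (fun z => h (z + τ) - h z) (by fun_prop) (fun z => ?_) z)
    have e1 := hmul (z + τ)
    rw [Gf_add_tau hτ, hmul z, show z + τ + b = z + b + τ by ring, theta_add_tau, theta_add_tau] at e1
    have n1 := Complex.exp_ne_zero (-(Real.pi * Complex.I * τ) - 2 * Real.pi * Complex.I * z)
    have n2 := Complex.exp_ne_zero (-(Real.pi * Complex.I * τ) - 2 * Real.pi * Complex.I * (z + b))
    apply mul_left_cancel₀ (mul_ne_zero n1 n2)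
    linear_combination -e1
  have hc : ∀ z, h z = h 0 := fun z => elliptic_const hτ hh p1 p2 z 0
  have hfun : Gf τ b = fun a => thD 0 a τ * thD 0 (a + b) τ * h 0 := by
    ext z; rw [hmul z, hc z]
  have d0 := hGd 0
  rw [hfun] at d0
  have hval := d0.unique ((hg 0).mul_const (h 0))
  simp only [zero_add, thD_zero_zero, thD_two_zero] at hval
  have t1 := thD_one_zero_ne hτ
  have t2 := theta_ne hτ hb
  have hK : h 0 = thD 3 0 τ / thD 1 0 τ * thD 0 b τ := by
    field_simp
    apply mul_left_cancel₀ t2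
    linear_combination -hval
  rw [hmul a, hc a, hK]; ring



lemma sum_identity (N : ℕ) (r s : Fin N → Fin N → ℂ) (C : ℂ)
    (hr : ∀ i j, r j i = - r i j) (hs : ∀ i j, s j i = s i j) (hs0 : ∀ i, s i i = 0)
    (h3 : ∀ i j k, i ≠ j → j ≠ k → i ≠ k →
      (r i j + r j k + r k i) ^ 2 + s i j + s j k + s k i = C) :
    6 * ∑ i, (∑ l, r i l) ^ 2 = 3 * N * (∑ i, ∑ j, (r i j ^ 2 + s i j)) - 6 * (∑ i, ∑ j, s i j)
      - C * (N ^ 3 - 3 * N ^ 2 + 2 * N) := by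
  have hr0 : ∀ i, r i i = 0 := fun i => self_eq_neg.mp (hr i i)
  have hE : ∀ i j k, (r i j ^ 2 + s i j) + (r j k ^ 2 + s j k) + (r k i ^ 2 + s k i)
      + 2 * (r i j * r j k + r j k * r k i + r k i * r i j) - C
      = (if i = j then 2 * s i k - C else 0) + (if j = k then 2 * s i j - C else 0)
        + (if i = k then 2 * s i j - C else 0) + (if i = j then (if j = k then 2 * C else 0) else 0) := by
    intro i j k
    by_cases h1 : i = j
    · subst h1
      by_cases h2 : i = k
      · subst h2; simp [hr0, hs0]; ring
      · simp [h2, hr0, hs0, hr i k, hs i k]; ring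
    · by_cases h2 : j = k
      · subst h2; simp [h1, hr0, hs0, hr i j, hs i j]; ring
      · by_cases h4 : i = k
        · subst h4; simp [h1, h2, hr0, hs0, hr i j, hs i j]; ring
        · simp only [h1, h2, h4, if_false]
          linear_combination h3 i j k h1 h2 h4
  have hsum := Finset.sum_congr (rfl : (Finset.univ : Finset (Fin N)) = Finset.univ)
    (fun i _ => Finset.sum_congr (rfl : (Finset.univ : Finset (Fin N)) = Finset.univ)
    (fun j _ => Finset.sum_congr (rfl : (Finset.univ : Finset (Fin N)) = Finset.univ)
    (fun k _ => hE i j k)))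
  set A := ∑ i, (∑ l, r i l) ^ 2 with hA
  set Q := ∑ i, ∑ j, (r i j ^ 2 + s i j) with hQ
  set S := ∑ i, ∑ j, s i j with hS
  have a1 : ∑ i : Fin N, ∑ j, ∑ k, r i j * r j k = - A := by
    rw [Finset.sum_comm, hA, ← Finset.sum_neg_distrib]
    refine Finset.sum_congr rfl fun j _ => ?_
    simp only [← Finset.mul_sum, ← Finset.sum_mul]
    simp only [hr j, Finset.sum_neg_distrib]; ring
  have a2 : ∑ i : Fin N, ∑ j, ∑ k, r j k * r k i = - A := by
    rw [← a1, Finset.sum_comm]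
    refine Finset.sum_congr rfl fun j _ => Finset.sum_comm
  have a3 : ∑ i : Fin N, ∑ j, ∑ k, r k i * r i j = - A := by
    rw [← a2, Finset.sum_comm]
    refine Finset.sum_congr rfl fun j _ => ?_
    rw [Finset.sum_comm]
  obtain ⟨b, hb⟩ : ∃ b : Fin N → Fin N → ℂ, ∀ i j, r i j ^ 2 + s i j = b i j := ⟨_, fun _ _ => rfl⟩
  simp only [hb] at hsum hQ
  have b1 : ∑ i : Fin N, ∑ j, ∑ _k : Fin N, b i j = N * Q := by
    simp only [Finset.sum_const, Finset.card_univ, Fintype.card_fin, nsmul_eq_mul, ← Finset.mul_sum, hQ]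
  have b2 : ∑ _i : Fin N, ∑ j, ∑ k, b j k = N * Q := by
    simp only [Finset.sum_const, Finset.card_univ, Fintype.card_fin, nsmul_eq_mul, hQ]
  have b3 : ∑ i : Fin N, ∑ _j : Fin N, ∑ k, b k i = N * Q := by
    simp only [Finset.sum_const, Finset.card_univ, Fintype.card_fin, nsmul_eq_mul, ← Finset.mul_sum, hQ]
    rw [Finset.sum_comm]
  have c1 : ∑ i : Fin N, ∑ j, ∑ k, (if i = j then 2 * s i k - C else 0) = 2 * S - N ^ 2 * C := by
    have : ∀ i j : Fin N, ∑ k, (if i = j then 2 * s i k - C else 0) = if i = j then ∑ k, (2 * s i k - C) else 0 := by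
      intro i j; split_ifs <;> simp
    simp only [this, Finset.sum_ite_eq, Finset.mem_univ, if_true, Finset.sum_sub_distrib, ← Finset.mul_sum,
      Finset.sum_const, Finset.card_univ, Fintype.card_fin, nsmul_eq_mul, hS]
    ring
  have c2 : ∑ i : Fin N, ∑ j, ∑ k, (if j = k then 2 * s i j - C else 0) = 2 * S - N ^ 2 * C := by
    simp only [Finset.sum_ite_eq, Finset.mem_univ, if_true, Finset.sum_sub_distrib, ← Finset.mul_sum,
      Finset.sum_const, Finset.card_univ, Fintype.card_fin, nsmul_eq_mul, hS]
    ring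
  have c3 : ∑ i : Fin N, ∑ j, ∑ k, (if i = k then 2 * s i j - C else 0) = 2 * S - N ^ 2 * C := by
    simp only [Finset.sum_ite_eq, Finset.mem_univ, if_true, Finset.sum_sub_distrib, ← Finset.mul_sum,
      Finset.sum_const, Finset.card_univ, Fintype.card_fin, nsmul_eq_mul, hS]
    ring
  have c4 : ∑ i : Fin N, ∑ j, ∑ k, (if i = j then (if j = k then 2 * C else 0) else 0) = 2 * N * C := by
    have : ∀ i j : Fin N, ∑ k, (if i = j then (if j = k then 2 * C else 0) else 0) = if i = j then 2 * C else 0 := by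
      intro i j; split_ifs <;> simp
    simp only [this, Finset.sum_ite_eq, Finset.mem_univ, if_true,
      Finset.sum_const, Finset.card_univ, Fintype.card_fin, nsmul_eq_mul]
    ring
  have c5 : ∑ _i : Fin N, ∑ _j : Fin N, ∑ _k : Fin N, C = N ^ 3 * C := by
    simp only [Finset.sum_const, Finset.card_univ, Fintype.card_fin, nsmul_eq_mul]
    ring
  simp only [Finset.sum_add_distrib (s := (Finset.univ : Finset (Fin N))), Finset.sum_sub_distrib (s := (Finset.univ : Finset (Fin N))), ← Finset.mul_sum Finset.univ _ (2:ℂ)] at hsum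
  linear_combination (-1) * hsum + b1 + b2 + b3 + 2 * (a1 + a2 + a3) - c5 - c1 - c2 - c3 - c4

lemma sum_sym (N : ℕ) (f : Fin N → Fin N → ℂ) (hf : ∀ i j, f j i = f i j) :
    2 * ∑ j : Fin N, ∑ l ∈ Finset.univ.filter (fun l : Fin N => j < l), f j l
      = ∑ j, ∑ l, f j l - ∑ j, f j j := by
  simp only [Finset.sum_filter]
  have h : ∀ j l : Fin N, f j l = (if j < l then f j l else 0) + (if l < j then f l j else 0)
      + (if j = l then f j l else 0) := by
    intro j l
    rcases lt_trichotomy j l with h | h | h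
    · simp [h, h.ne, h.not_gt]
    · subst h; simp
    · simp [h, h.ne', h.not_gt, hf]
  have h1 : ∑ j, ∑ l, f j l = ∑ j : Fin N, ∑ l, (if j < l then f j l else 0)
      + ∑ j : Fin N, ∑ l, (if l < j then f l j else 0) + ∑ j, f j j := by
    conv_lhs => enter [2, j, 2, l]; rw [h j l]
    simp only [Finset.sum_add_distrib, Finset.sum_ite_eq, Finset.mem_univ, if_true]
  rw [Finset.sum_comm (f := fun j l : Fin N => if l < j then f l j else 0)] at h1
  rw [h1]; ring

lemma prod_sym (N : ℕ) (f : Fin N → Fin N → ℂ) :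
    ∏ j : Fin N, ∏ l ∈ Finset.univ.filter (fun l : Fin N => l ≠ j), f j l
     = ∏ j : Fin N, ∏ l ∈ Finset.univ.filter (fun l : Fin N => j < l), (f j l * f l j) := by
  simp only [Finset.prod_filter]
  have h : ∀ j l : Fin N, (if l ≠ j then f j l else 1) =
      (if j < l then f j l else 1) * (if l < j then f j l else 1) := by
    intro j l
    rcases lt_trichotomy j l with h | h | h
    · simp [h, h.ne', h.not_gt]
    · subst h; simp
    · simp [h, h.ne, h.not_gt]
  have h' : ∀ j l : Fin N, (if j < l then f j l * f l j else 1) =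
      (if j < l then f j l else 1) * (if j < l then f l j else 1) := by
    intro j l; split_ifs <;> simp
  simp only [h, h', Finset.prod_mul_distrib]
  rw [Finset.prod_comm (f := fun j l : Fin N => if l < j then f j l else 1)]

lemma hasDerivAt_prod_log {ι : Type*} (s : Finset ι) (f : ι → ℂ → ℂ) (L : ι → ℂ) (x : ℂ)
    (h : ∀ i ∈ s, HasDerivAt (f i) (f i x * L i) x) :
    HasDerivAt (fun z => ∏ i ∈ s, f i z) ((∏ i ∈ s, f i x) * ∑ i ∈ s, L i) x := by
  classical
  induction s using Finset.induction_on with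
  | empty => simpa using hasDerivAt_const x (1:ℂ)
  | insert a s ha ih =>
    have h1 := (h a (by simp)).mul (ih fun i hi => h i (by simp [hi]))
    simp only [Finset.prod_insert ha, Finset.sum_insert ha]
    refine h1.congr_deriv ?_
    ring

lemma hasDerivAt_pow_log (n : ℕ) (f : ℂ → ℂ) (L : ℂ) (x : ℂ) (h : HasDerivAt f (f x * L) x) :
    HasDerivAt (fun z => f z ^ n) (f x ^ n * (n * L)) x := by
  simpa using hasDerivAt_prod_log (Finset.range n) (fun _ => f) (fun _ => L) x (fun _ _ => h)

/-- prefactor -/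
noncomputable def mf (τ : ℂ) : ℂ := Complex.I * Complex.exp (-(Real.pi * Complex.I * τ / 4)) / ph τ

lemma weyl_eq (N : ℕ) (lam : Fin N → ℂ) {τ : ℂ} (hτ : 0 < τ.im) :
    WeylKac N lam τ = Complex.exp (2 * (Real.pi : ℂ) * Complex.I * τ * ((N ^ 2 - 1 : ℕ) : ℂ) / 24) *
      ph τ ^ (N - 1) * ∏ j : Fin N, ∏ l ∈ Finset.univ.filter (fun l : Fin N => j < l),
        (mf τ * thD 0 (lam j - lam l) τ) := by
  have hfac : ∀ t, mf τ * thD 0 t τ = (Complex.exp (Real.pi * Complex.I * t)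
      - Complex.exp (-(Real.pi * Complex.I * t))) * (Qf t τ * Qf (-t) τ) := by
    intro t
    have := ph_ne hτ
    have hE := Complex.exp_ne_zero (Real.pi * Complex.I * τ / 4)
    rw [triple t hτ, pre_eq, mf, Complex.exp_neg (Real.pi * Complex.I * τ / 4)]
    field_simp
    rw [Complex.I_sq]; ring
  have hp : ∏' k : ℕ,
    ((1 - Complex.exp (2 * (Real.pi : ℂ) * Complex.I * τ) ^ (k + 1)) ^ (N - 1) *
      ∏ j : Fin N, ∏ l ∈ Finset.univ.filter (fun l : Fin N => l ≠ j),
        (1 - Complex.exp (2 * (Real.pi : ℂ) * Complex.I * τ) ^ (k + 1) *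
          Complex.exp (2 * (Real.pi : ℂ) * Complex.I * (lam j - lam l)))) =
      ph τ ^ (N - 1) * ∏ j : Fin N, ∏ l ∈ Finset.univ.filter (fun l : Fin N => l ≠ j), Qf (lam j - lam l) τ := by
    have h1 := (mult_ph hτ).hasProd.pow (N - 1)
    have h2 : HasProd (fun k : ℕ => ∏ j : Fin N, ∏ l ∈ Finset.univ.filter (fun l : Fin N => l ≠ j),
        (1 - qq τ ^ (k + 1) * qq (lam j - lam l)))
        (∏ j : Fin N, ∏ l ∈ Finset.univ.filter (fun l : Fin N => l ≠ j), Qf (lam j - lam l) τ) :=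
      hasProd_prod fun j _ => hasProd_prod fun l _ => (mult_Qf _ hτ).hasProd
    exact (h1.mul h2).tprod_eq
  rw [WeylKac, hp, prod_sym]
  simp only [hfac, Finset.prod_mul_distrib, neg_sub]
  simp only [show ∀ j l, -(Real.pi * Complex.I * (lam j - lam l)) = Real.pi * Complex.I * (lam l - lam j) by
    intro j l; ring]
  ring

/-- rho -/
noncomputable def rr (τ t : ℂ) : ℂ := thD 1 t τ / thD 0 t τ
/-- derivative of rho -/
noncomputable def ss (τ t : ℂ) : ℂ := thD 2 t τ / thD 0 t τ - rr τ t ^ 2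

lemma rr_neg (τ t : ℂ) : rr τ (-t) = - rr τ t := by
  simp [rr, thD_neg, div_neg]

lemma ss_neg (τ t : ℂ) : ss τ (-t) = ss τ t := by
  have : ((-1:ℂ) ^ (2 + 1)) = -1 := by norm_num
  simp [ss, rr_neg, thD_neg, this]

lemma rr_zero (τ : ℂ) : rr τ 0 = 0 := by simp [rr, thD_zero_zero]
lemma ss_zero (τ : ℂ) : ss τ 0 = 0 := by simp [ss, rr_zero, thD_zero_zero]

lemma rho_eq (t : ℂ) {τ : ℂ} (hτ : 0 < τ.im) : rhoF t τ = rr τ t := by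
  have : theta1' t τ = thD 1 t τ := by
    rw [theta1']
    simp only [← thD_zero]
    exact (hasDerivAt_thD 0 t hτ).deriv
  rw [rhoF, this, rr, thD_zero]

lemma hasDerivAt_rr {t τ : ℂ} (hτ : 0 < τ.im) (ht : thD 0 t τ ≠ 0) :
    HasDerivAt (rr τ) (ss τ t) t := by
  refine ((hasDerivAt_thD 1 t hτ).div (hasDerivAt_thD 0 t hτ) ht).congr_deriv ?_
  rw [ss, rr]; field_simp

lemma hasDerivAt_weyl {N : ℕ} {lam : Fin N → ℂ} {τ : ℂ} (hτ : 0 < τ.im)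
    (hl : ∀ j l, j ≠ l → thD 0 (lam j - lam l) τ ≠ 0) (i : Fin N) :
    HasDerivAt (fun z => WeylKac N (Function.update lam i z) τ)
      (WeylKac N lam τ * ∑ l, rr τ (lam i - lam l)) (lam i) := by
  simp only [weyl_eq N _ hτ]
  have hu : ∀ j, HasDerivAt (fun z => Function.update lam i z j) (if j = i then 1 else 0) (lam i) := by
    intro j
    by_cases h : j = i
    · subst h; simpa using hasDerivAt_id' (lam j)
    · simpa [h] using hasDerivAt_const (lam i) (lam j)
  have hfac : ∀ j l : Fin N, j < l → HasDerivAt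
      (fun z => mf τ * thD 0 (Function.update lam i z j - Function.update lam i z l) τ)
      (mf τ * thD 0 (Function.update lam i (lam i) j - Function.update lam i (lam i) l) τ *
        (((if j = i then 1 else 0) - (if l = i then 1 else 0)) * rr τ (lam j - lam l))) (lam i) := by
    intro j l hjl
    have h1 := (hu j).sub (hu l)
    have h2 : HasDerivAt (fun z => thD 0 z τ) (thD 1 (lam j - lam l) τ)
       (Function.update lam i (lam i) j - Function.update lam i (lam i) l) := by
      simpa using hasDerivAt_thD 0 (lam j - lam l) hτ
    have h3 := (HasDerivAt.comp (lam i) h2 h1).const_mul (mf τ)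
    refine h3.congr_deriv ?_
    have := hl j l hjl.ne
    rw [Function.update_eq_self, rr]
    field_simp
  have h := hasDerivAt_prod_log Finset.univ _ _ (lam i) fun j _ =>
    hasDerivAt_prod_log (Finset.univ.filter (fun l : Fin N => j < l)) _ _ (lam i)
      fun l hl' => hfac j l (Finset.mem_filter.mp hl').2
  refine (h.const_mul _).congr_deriv ?_
  simp only [Function.update_eq_self]
  rw [← mul_assoc]
  congr 1
  have hsym := sum_sym N (fun j l => ((if j = i then (1:ℂ) else 0) - (if l = i then 1 else 0)) * rr τ (lam j - lam l))
    (by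
      intro j l
      rw [← neg_sub (lam l) (lam j), rr_neg]; ring)
  have e2 : ∑ j, ∑ l, ((if j = i then (1:ℂ) else 0) - (if l = i then 1 else 0)) * rr τ (lam j - lam l)
      = 2 * ∑ l, rr τ (lam i - lam l) := by
    simp only [sub_mul, Finset.sum_sub_distrib, ite_mul, one_mul, zero_mul, Finset.sum_ite_eq', Finset.mem_univ, if_true]
    rw [Finset.sum_comm]
    simp only [Finset.sum_ite_eq', Finset.mem_univ, if_true]
    have : ∑ j, rr τ (lam j - lam i) = - ∑ l, rr τ (lam i - lam l) := by
      rw [← Finset.sum_neg_distrib]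
      exact Finset.sum_congr rfl fun l _ => by rw [← rr_neg, neg_sub]
    rw [this]; ring
  rw [e2] at hsym
  simp only [sub_self, zero_mul, Finset.sum_const_zero, sub_zero] at hsym
  exact mul_left_cancel₀ two_ne_zero hsym

lemma second_deriv {N : ℕ} (p : ℕ) {lam : Fin N → ℂ} {τ : ℂ} (hτ : 0 < τ.im)
    (hl : ∀ j l, j ≠ l → thD 0 (lam j - lam l) τ ≠ 0) (i : Fin N) :
    deriv (deriv (fun z => WeylKac N (Function.update lam i z) τ ^ (p + 1))) (lam i)
      = WeylKac N lam τ ^ (p + 1) * (((p:ℂ) + 1) ^ 2 * (∑ l, rr τ (lam i - lam l)) ^ 2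
        + ((p:ℂ) + 1) * ∑ l, ss τ (lam i - lam l)) := by
  have hsum : ∀ z, ∑ l, rr τ (Function.update lam i z i - Function.update lam i z l)
      = ∑ l ∈ Finset.univ.erase i, rr τ (z - lam l) := by
    intro z
    rw [← Finset.add_sum_erase _ _ (Finset.mem_univ i), sub_self, rr_zero, zero_add]
    refine Finset.sum_congr rfl fun l hl' => ?_
    rw [Function.update_self, Function.update_of_ne (Finset.ne_of_mem_erase hl')]
  have hgen : ∀ᶠ z in 𝓝 (lam i), ∀ l ∈ Finset.univ.erase i, thD 0 (z - lam l) τ ≠ 0 := by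
    rw [Filter.eventually_all_finset]
    intro l hl'
    have hc : ContinuousAt (fun z => thD 0 (z - lam l) τ) (lam i) :=
      (hasDerivAt_thD 0 (lam i - lam l) hτ).continuousAt.comp (f := fun z => z - lam l) (by fun_prop)
    exact hc.eventually_ne (hl i l (Finset.ne_of_mem_erase hl').symm)
  have hfirst : ∀ z, (∀ l ∈ Finset.univ.erase i, thD 0 (z - lam l) τ ≠ 0) →
      HasDerivAt (fun z => WeylKac N (Function.update lam i z) τ)
        (WeylKac N (Function.update lam i z) τ * ∑ l ∈ Finset.univ.erase i, rr τ (z - lam l)) z := by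
    intro z hz
    have := hasDerivAt_weyl (lam := Function.update lam i z) hτ (by
      intro j l hjl
      by_cases hj : j = i
      · subst hj
        rw [Function.update_self, Function.update_of_ne hjl.symm]
        exact hz l (by simp [hjl.symm])
      · by_cases hl2 : l = i
        · subst hl2
          rw [Function.update_self, Function.update_of_ne hj, ← neg_sub, thD_neg]
          simpa using hz j (by simp [hj])
        · rw [Function.update_of_ne hj, Function.update_of_ne hl2]
          exact hl j l hjl) i
    rw [hsum] at this
    simpa using this
  have hev : deriv (fun z => WeylKac N (Function.update lam i z) τ ^ (p + 1)) =ᶠ[𝓝 (lam i)]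
      fun z => WeylKac N (Function.update lam i z) τ ^ (p + 1) *
        (((p + 1 : ℕ) : ℂ) * ∑ l ∈ Finset.univ.erase i, rr τ (z - lam l)) := by
    filter_upwards [hgen] with z hz
    exact (hasDerivAt_pow_log (p + 1) _ _ z (hfirst z hz)).deriv
  rw [hev.deriv_eq]
  have hd1 := hasDerivAt_pow_log (p + 1) _ _ _ (hfirst _ hgen.self_of_nhds)
  have hd2 : HasDerivAt (fun z => ∑ l ∈ Finset.univ.erase i, rr τ (z - lam l))
      (∑ l ∈ Finset.univ.erase i, ss τ (lam i - lam l)) (lam i) := by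
    refine HasDerivAt.fun_sum fun l hl' => ?_
    exact (hasDerivAt_rr hτ (hl i l (Finset.ne_of_mem_erase hl').symm)).comp_sub_const (lam i) (lam l)
  rw [(hd1.fun_mul (hd2.const_mul ((p + 1 : ℕ) : ℂ))).deriv]
  rw [← hsum, Function.update_eq_self]
  have hss : ∑ l ∈ Finset.univ.erase i, ss τ (lam i - lam l) = ∑ l, ss τ (lam i - lam l) := by
    rw [← Finset.add_sum_erase _ _ (Finset.mem_univ i), sub_self, ss_zero, zero_add]
  rw [hss]; push_cast; ring

lemma hasDerivAt_weyl_tau {N : ℕ} (hN : 2 ≤ N) {lam : Fin N → ℂ} {τ : ℂ} (hτ : 0 < τ.im)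
    (hl : ∀ j l, j ≠ l → thD 0 (lam j - lam l) τ ≠ 0) :
    HasDerivAt (fun w => WeylKac N lam w)
      (WeylKac N lam τ * ((((N:ℂ) - 1) * (2 - N) / 6 * (thD 3 0 τ / thD 1 0 τ) +
        (∑ j, ∑ l, (rr τ (lam j - lam l) ^ 2 + ss τ (lam j - lam l))) / 2)
          / (4 * Real.pi * Complex.I))) τ := by
  have hpi : (Real.pi : ℂ) ≠ 0 := by exact_mod_cast Real.pi_ne_zero
  have hI := Complex.I_ne_zero
  have hph := ph_ne hτ
  set C := thD 3 0 τ / thD 1 0 τ with hC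
  set K := (C / (4 * Real.pi * Complex.I) - Real.pi * Complex.I / 4) / 3 with hK
  have hm : HasDerivAt mf (mf τ * (-(Real.pi * Complex.I / 4) - K)) τ := by
    have h0 : HasDerivAt (fun w : ℂ => -(Real.pi * Complex.I * w / 4)) (-(Real.pi * Complex.I / 4)) τ := by
      simpa using (((hasDerivAt_id' τ).const_mul (Real.pi * Complex.I)).div_const 4).fun_neg
    refine ((h0.cexp.const_mul Complex.I).div (hasDerivAt_ph hτ) hph).congr_deriv ?_
    rw [mf, ← hC, ← hK]; field_simp; try ring
  have hE : HasDerivAt (fun w : ℂ => Complex.exp (2 * (Real.pi : ℂ) * Complex.I * w * ((N ^ 2 - 1 : ℕ) : ℂ) / 24))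
      (Complex.exp (2 * (Real.pi : ℂ) * Complex.I * τ * ((N ^ 2 - 1 : ℕ) : ℂ) / 24) *
        (2 * (Real.pi : ℂ) * Complex.I * ((N ^ 2 - 1 : ℕ) : ℂ) / 24)) τ := by
    have h0 : HasDerivAt (fun w : ℂ => 2 * (Real.pi : ℂ) * Complex.I * w * ((N ^ 2 - 1 : ℕ) : ℂ) / 24)
      (2 * (Real.pi : ℂ) * Complex.I * ((N ^ 2 - 1 : ℕ) : ℂ) / 24) τ := by
      simpa using ((((hasDerivAt_id τ).const_mul (2 * Real.pi * Complex.I)).mul_const (((N ^ 2 - 1 : ℕ) : ℂ)))).div_const 24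
    exact h0.cexp
  have hfac : ∀ j l : Fin N, j < l → HasDerivAt
      (fun w => mf w * thD 0 (lam j - lam l) w)
      (mf τ * thD 0 (lam j - lam l) τ *
        ((-(Real.pi * Complex.I / 4) - K) +
          (rr τ (lam j - lam l) ^ 2 + ss τ (lam j - lam l)) / (4 * Real.pi * Complex.I))) τ := by
    intro j l hjl
    refine (hm.mul (hasDerivAt_thD_tau 0 (lam j - lam l) hτ)).congr_deriv ?_
    have := hl j l hjl.ne
    rw [ss]
    field_simp
    ring
  have h := hasDerivAt_prod_log Finset.univ _ _ τ fun j _ =>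
    hasDerivAt_prod_log (Finset.univ.filter (fun l : Fin N => j < l)) _ _ τ
      fun l hl' => hfac j l (Finset.mem_filter.mp hl').2
  have hfull := (hE.mul (hasDerivAt_pow_log (N - 1) ph K τ (hasDerivAt_ph hτ))).mul h
  have hfull2 := hfull.congr_of_eventuallyEq (f₁ := fun w => WeylKac N lam w)
    ((upper_nhds hτ).mono fun w hw => by simpa using weyl_eq N lam hw)
  refine hfull2.congr_deriv ?_
  rw [weyl_eq N lam hτ]
  simp only [Pi.mul_apply]
  have hsym := sum_sym N (fun j l => (-(Real.pi * Complex.I / 4) - K) +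
          (rr τ (lam j - lam l) ^ 2 + ss τ (lam j - lam l)) / (4 * Real.pi * Complex.I))
    (by
      intro j l
      rw [← neg_sub (lam j) (lam l), rr_neg, ss_neg]; ring)
  set T := ∑ j : Fin N, ∑ l ∈ Finset.univ.filter (fun l : Fin N => j < l),
    ((-(Real.pi * Complex.I / 4) - K) +
          (rr τ (lam j - lam l) ^ 2 + ss τ (lam j - lam l)) / (4 * Real.pi * Complex.I)) with hT
  obtain ⟨b, hb⟩ : ∃ b : Fin N → Fin N → ℂ,
      ∀ j l, rr τ (lam j - lam l) ^ 2 + ss τ (lam j - lam l) = b j l := ⟨_, fun _ _ => rfl⟩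
  have hb0 : ∀ j, b j j = 0 := fun j => by rw [← hb, sub_self, rr_zero, ss_zero]; simp
  simp only [hb, hb0, zero_div, Finset.sum_add_distrib (s := (Finset.univ : Finset (Fin N))),
    Finset.sum_const, Finset.card_univ,
    Fintype.card_fin, ← Finset.sum_div, nsmul_eq_mul] at hsym ⊢
  have e1 : ((N ^ 2 - 1 : ℕ) : ℂ) = (N:ℂ) ^ 2 - 1 := by
    rw [Nat.cast_sub (Nat.one_le_pow _ _ (by omega))]; push_cast; rfl
  have e2 : ((N - 1 : ℕ) : ℂ) = (N:ℂ) - 1 := by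
    rw [Nat.cast_sub (by omega)]; push_cast; rfl
  rw [e1, e2]
  generalize Complex.exp (2 * (Real.pi : ℂ) * Complex.I * τ * ((N:ℂ) ^ 2 - 1) / 24) = X
  generalize ph τ ^ (N - 1) = Y
  generalize (∏ j : Fin N, ∏ l ∈ Finset.univ.filter (fun l : Fin N => j < l),
        (mf τ * thD 0 (lam j - lam l) τ)) = Z
  rw [hK] at hsym ⊢
  linear_combination (X * Y * Z / 2) * hsym


end WKaux

/-- `Π^{p+1}` is a horizontal section of the KZB connection:
`4πiN(p+1)·∂_τ(Π^{p+1}) = ∑_j ∂²_{λ_j}(Π^{p+1}) + 2p(p+1)∑_{j<l} ρ'(λ_j−λ_l,τ)·Π^{p+1}`. -/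
theorem weylKac_power_horizontal (N p : ℕ) (hN : 2 ≤ N) (τ : ℂ) (hτ : 0 < τ.im)
    (lam : Fin N → ℂ) (hlam : ∀ j l : Fin N, j ≠ l → ¬ inLattice τ (lam j - lam l)) :
    4 * (Real.pi : ℂ) * Complex.I * (N : ℂ) * ((p : ℂ) + 1) *
        deriv (fun τ' => WeylKac N lam τ' ^ (p + 1)) τ
      = (∑ j : Fin N,
          deriv (deriv (fun z => WeylKac N (Function.update lam j z) τ ^ (p + 1))) (lam j))
        + 2 * (p : ℂ) * ((p : ℂ) + 1) *
            (∑ j : Fin N, ∑ l ∈ Finset.univ.filter (fun l : Fin N => j < l),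
              deriv (fun z => rhoF z τ) (lam j - lam l)) * WeylKac N lam τ ^ (p + 1) := by
  have hl : ∀ j l, j ≠ l → WKaux.thD 0 (lam j - lam l) τ ≠ 0 := fun j l h => by
    exact WKaux.theta_ne hτ (hlam j l h)
  have hpi : (Real.pi : ℂ) ≠ 0 := by exact_mod_cast Real.pi_ne_zero
  have hI := Complex.I_ne_zero
  have hrho : (fun z => rhoF z τ) = WKaux.rr τ := funext fun z => WKaux.rho_eq z hτ
  have hder : (∑ j : Fin N, ∑ l ∈ Finset.univ.filter (fun l : Fin N => j < l),
              deriv (fun z => rhoF z τ) (lam j - lam l)) =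
      ∑ j : Fin N, ∑ l ∈ Finset.univ.filter (fun l : Fin N => j < l), WKaux.ss τ (lam j - lam l) := by
    refine Finset.sum_congr rfl fun j _ => Finset.sum_congr rfl fun l hl' => ?_
    rw [hrho]
    exact (WKaux.hasDerivAt_rr hτ (hl j l (Finset.mem_filter.mp hl').2.ne)).deriv
  have hS := WKaux.sum_sym N (fun j l => WKaux.ss τ (lam j - lam l))
    (fun i j => by rw [← neg_sub, WKaux.ss_neg])
  simp only [sub_self, WKaux.ss_zero, Finset.sum_const_zero, sub_zero] at hS
  have hid := WKaux.sum_identity N (fun j l => WKaux.rr τ (lam j - lam l))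
    (fun j l => WKaux.ss τ (lam j - lam l)) (WKaux.thD 3 0 τ / WKaux.thD 1 0 τ)
    (fun i j => by rw [← neg_sub, WKaux.rr_neg])
    (fun i j => by rw [← neg_sub, WKaux.ss_neg])
    (fun i => by rw [sub_self, WKaux.ss_zero])
    (by
      intro i j k hij hjk hik
      have ht := WKaux.theta_triple hτ (lam i - lam j) (hlam j k hjk)
      have e : lam i - lam j + (lam j - lam k) = lam i - lam k := by ring
      have n1 := hl i j hij
      have n2 := hl j k hjk
      have n3 := hl i k hik
      simp only [WKaux.Gf, e] at ht
      generalize WKaux.thD 3 0 τ / WKaux.thD 1 0 τ = C at ht ⊢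
      rw [← neg_sub (lam i) (lam k), WKaux.rr_neg, WKaux.ss_neg]
      simp only [WKaux.ss, WKaux.rr]
      field_simp
      linear_combination (WKaux.thD 0 (lam i - lam j) τ * WKaux.thD 0 (lam j - lam k) τ * WKaux.thD 0 (lam i - lam k) τ) * ht)
  rw [hder, (WKaux.hasDerivAt_pow_log (p + 1) _ _ τ (WKaux.hasDerivAt_weyl_tau hN hτ hl)).deriv]
  rw [Finset.sum_congr rfl fun j _ => WKaux.second_deriv p hτ hl j, ← Finset.mul_sum,
    Finset.sum_add_distrib, ← Finset.mul_sum, ← Finset.mul_sum]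
  generalize WKaux.thD 3 0 τ / WKaux.thD 1 0 τ = C at hid ⊢
  generalize (∑ j : Fin N, ∑ l : Fin N, (WKaux.rr τ (lam j - lam l) ^ 2 + WKaux.ss τ (lam j - lam l))) = Q at hid ⊢
  generalize (∑ j : Fin N, ∑ l : Fin N, WKaux.ss τ (lam j - lam l)) = S at hid hS ⊢
  generalize (∑ j : Fin N, (∑ l : Fin N, WKaux.rr τ (lam j - lam l)) ^ 2) = A at hid ⊢
  generalize (∑ j : Fin N, ∑ l ∈ Finset.univ.filter (fun l : Fin N => j < l), WKaux.ss τ (lam j - lam l)) = S' at hS ⊢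
  generalize WeylKac N lam τ ^ (p + 1) = W
  push_cast
  have hc : (4 * (Real.pi : ℂ) * Complex.I * (N : ℂ) * ((p : ℂ) + 1) *
      (W * (((p:ℂ) + 1) * ((((N:ℂ) - 1) * (2 - N) / 6 * C + Q / 2) / (4 * Real.pi * Complex.I)))))
      = (N : ℂ) * ((p : ℂ) + 1) ^ 2 * W * (((N:ℂ) - 1) * (2 - N) / 6 * C + Q / 2) := by
    field_simp
  rw [hc]
  linear_combination (-(W * ((p:ℂ) + 1) ^ 2 / 6)) * hid - (W * p * ((p:ℂ) + 1)) * hS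
end

section
/- Fix τ ∈ H₊, x ∈ ℂ with x ∉ ℤ+τℤ and −x ∉ ℤ+τℤ, and m ∈ ℤ. Let L : (0,1) → ℂ be the (unique) continuous function with exp(L(t)) = E(t,τ) for all t ∈ (0,1) and L(t) − log t → 0 as t → 0⁺. Then for every κ ∈ ℂ with Re(κ) < 0, the function t ↦ exp(−(2/κ)L(t)) · [ σ_x(t,τ)·θ_{4,m}(x + 2t/κ, τ) + σ_{−x}(t,τ)·θ_{4,m}(−x + 2t/κ, τ) ] is integrable on the interval (0,1); i.e. the integral h_m(x,τ,κ) defining the elliptic Selberg-type integral converges absolutely. -/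
open Complex Filter Topology MeasureTheory

noncomputable section

/-- The theta function `θ_{4,m}(x,τ) = ∑_{j∈ℤ} exp(πi(8j+m)²τ/8 + πi(8j+m)x)`. -/
def theta4m (m : ℤ) (x τ : ℂ) : ℂ :=
  ∑' j : ℤ, Complex.exp ((Real.pi : ℂ) * Complex.I * ((8 * j + m : ℤ) : ℂ) ^ 2 * τ / 8
    + (Real.pi : ℂ) * Complex.I * ((8 * j + m : ℤ) : ℂ) * x)

end

lemma theta1_eq_aux (t τ : ℂ) : theta1 t τ =
    -(Complex.exp ((Real.pi : ℂ) * Complex.I * τ / 4 + (Real.pi : ℂ) * Complex.I * (t + 1/2)) *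
      jacobiTheta₂ (t + 1/2 + τ/2) τ) := by
  unfold theta1 jacobiTheta₂ jacobiTheta₂_term
  rw [← tsum_mul_left]
  congr 1
  refine tsum_congr fun j => ?_
  rw [← Complex.exp_add]
  congr 1
  ring

lemma theta4m_eq_aux (m : ℤ) (x τ : ℂ) : theta4m m x τ =
    Complex.exp ((Real.pi : ℂ) * Complex.I * m ^ 2 * τ / 8 + (Real.pi : ℂ) * Complex.I * m * x) *
      jacobiTheta₂ (4 * x + m * τ) (8 * τ) := by
  unfold theta4m jacobiTheta₂ jacobiTheta₂_term
  rw [← tsum_mul_left]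
  refine tsum_congr fun j => ?_
  rw [← Complex.exp_add]
  congr 1
  push_cast
  ring

lemma jacobi_cont_aux (τ : ℂ) (hτ : 0 < τ.im) : Continuous (fun z => jacobiTheta₂ z τ) :=
  continuous_iff_continuousAt.2 fun z => (differentiableAt_jacobiTheta₂_fst z hτ).continuousAt

lemma theta1_cont_aux (τ : ℂ) (hτ : 0 < τ.im) : Continuous (fun z => theta1 z τ) := by
  simp_rw [theta1_eq_aux]
  have := jacobi_cont_aux τ hτ
  have h2 : Continuous (fun t : ℂ => jacobiTheta₂ (t + 1/2 + τ/2) τ) :=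
    this.comp (by fun_prop : Continuous fun t : ℂ => t + 1/2 + τ/2)
  fun_prop

lemma theta4m_cont_aux (m : ℤ) (τ : ℂ) (hτ : 0 < τ.im) : Continuous (fun z => theta4m m z τ) := by
  simp_rw [theta4m_eq_aux]
  have := jacobi_cont_aux (8 * τ) (by simpa using hτ)
  have h2 : Continuous (fun t : ℂ => jacobiTheta₂ (4 * t + m * τ) (8 * τ)) :=
    this.comp (by fun_prop : Continuous fun t : ℂ => 4 * t + m * τ)
  fun_prop

lemma theta1_symm_aux (t τ : ℂ) : theta1 (1 - t) τ = theta1 t τ := by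
  unfold theta1
  congr 1
  rw [← (Equiv.subLeft (-1 : ℤ)).tsum_eq]
  refine tsum_congr fun j => ?_
  rw [Complex.exp_eq_exp_iff_exists_int]
  refine ⟨-(2 * j + 1), ?_⟩
  simp only [Equiv.subLeft_apply]
  push_cast
  ring

lemma L_symm_aux (L : ℝ → ℂ) (hLc : ContinuousOn L (Set.Ioo 0 1))
    (h : ∀ t ∈ Set.Ioo (0 : ℝ) 1, Complex.exp (L (1 - t)) = Complex.exp (L t)) :
    ∀ t ∈ Set.Ioo (0 : ℝ) 1, L (1 - t) = L t := by
  have hc : ContinuousOn (fun t => L (1 - t) - L t) (Set.Ioo 0 1) := by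
    refine ContinuousOn.sub (hLc.comp (by fun_prop) ?_) hLc
    intro t ht
    constructor <;> linarith [ht.1, ht.2]
  have hp : IsPreconnected ((fun t => L (1 - t) - L t) '' Set.Ioo (0:ℝ) 1) :=
    isPreconnected_Ioo.image _ hc
  have hcount : ((fun t => L (1 - t) - L t) '' Set.Ioo (0:ℝ) 1).Countable := by
    refine (Set.countable_range (fun n : ℤ => (n : ℂ) * (2 * Real.pi * Complex.I))).mono ?_
    rintro _ ⟨t, ht, rfl⟩
    obtain ⟨n, hn⟩ := Complex.exp_eq_exp_iff_exists_int.1 (h t ht)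
    exact ⟨n, by simp [hn]⟩
  have hs := hcount.isTotallyDisconnected _ subset_rfl hp
  intro t ht
  have := hs (Set.mem_image_of_mem _ ht)
    (Set.mem_image_of_mem _ (show (1/2 : ℝ) ∈ Set.Ioo (0:ℝ) 1 by norm_num))
  have h2 : (1 - 1/2 : ℝ) = 1/2 := by norm_num
  simp only [h2, sub_self] at this
  exact sub_eq_zero.1 this

lemma exp_int_aux (L : ℝ → ℂ) (hLc : ContinuousOn L (Set.Ioo 0 1))
    (hs : ∀ t ∈ Set.Ioo (0 : ℝ) 1, L (1 - t) = L t)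
    (hL0 : Tendsto (fun t : ℝ => L t - (Real.log t : ℂ)) (𝓝[>] (0 : ℝ)) (𝓝 0))
    (a : ℂ) (ha : -1 < a.re) :
    IntegrableOn (fun t : ℝ => Complex.exp (a * L t)) (Set.Ioo 0 1) := by
  have hF : ContinuousOn (fun t : ℝ => Complex.exp (a * L t)) (Set.Ioo 0 1) :=
    (continuousOn_const.mul hLc).cexp
  have h1 : ∀ᶠ t : ℝ in 𝓝[>] (0:ℝ), ‖L t - (Real.log t : ℂ)‖ < 1 := by
    simpa using hL0.norm.eventually (gt_mem_nhds (show ‖(0:ℂ)‖ < 1 by simp))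
  obtain ⟨d, hd0, hd⟩ := mem_nhdsGT_iff_exists_Ioc_subset.1 h1
  have hd0' : (0:ℝ) < d := hd0
  set e := min d (1/2) with he
  have he0 : 0 < e := lt_min hd0' (by norm_num)
  have hed : e ≤ d := min_le_left _ _
  have heh : e ≤ 1/2 := min_le_right _ _
  have i1 : IntervalIntegrable (fun t : ℝ => Complex.exp (a * L t)) volume 0 e := by
    have hp : IntervalIntegrable (fun t : ℝ => Real.exp ‖a‖ * t ^ a.re) volume 0 e :=
      (intervalIntegral.intervalIntegrable_rpow' ha).const_mul _
    rw [intervalIntegrable_iff_integrableOn_Ioc_of_le he0.le] at hp ⊢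
    refine Integrable.mono' hp ((hF.mono ?_).aestronglyMeasurable measurableSet_Ioc) ?_
    · intro t ht
      exact ⟨ht.1, by linarith [ht.2]⟩
    · refine (ae_restrict_iff' measurableSet_Ioc).2 (Eventually.of_forall fun t ht => ?_)
      have hb : ‖L t - (Real.log t : ℂ)‖ < 1 := hd ⟨ht.1, ht.2.trans hed⟩
      rw [Complex.norm_exp, Real.rpow_def_of_pos ht.1, ← Real.exp_add]
      apply Real.exp_le_exp.2
      have e1 : a * L t = a * (L t - (Real.log t : ℂ)) + a * (Real.log t : ℂ) := by ring
      have e2 : (a * (L t - (Real.log t : ℂ))).re ≤ ‖a‖ := by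
        refine (Complex.re_le_norm _).trans ?_
        rw [norm_mul]
        exact mul_le_of_le_one_right (norm_nonneg _) hb.le
      rw [e1, Complex.add_re, Complex.re_mul_ofReal]
      linarith
  have i2 : IntervalIntegrable (fun t : ℝ => Complex.exp (a * L t)) volume e (1/2) := by
    refine ContinuousOn.intervalIntegrable (hF.mono ?_)
    rw [Set.uIcc_of_le heh]
    intro t ht
    exact ⟨by linarith [ht.1], by linarith [ht.2]⟩
  have i3 := i1.trans i2
  have i4 := (i3.comp_sub_left 1).symm
  have h2 : (1 - 1/2 : ℝ) = 1/2 := by norm_num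
  rw [h2, sub_zero] at i4
  rw [intervalIntegrable_iff_integrableOn_Ioo_of_le (by norm_num)] at i4
  have i5 : IntegrableOn (fun t : ℝ => Complex.exp (a * L t)) (Set.Ioo (1/2) 1) := by
    refine i4.congr_fun ?_ measurableSet_Ioo
    intro t ht
    simp only
    rw [hs t ⟨by linarith [ht.1], ht.2⟩]
  rw [← intervalIntegrable_iff_integrableOn_Ioo_of_le (by norm_num)] at i5
  exact (intervalIntegrable_iff_integrableOn_Ioo_of_le (by norm_num)).1 (i3.trans i5)

/-- convergence of the elliptic Selberg-type integral: for `Re κ < 0`,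
the integrand `E(t,τ)^{−2/κ}[σ_x(t)θ_{4,m}(x+2t/κ) + σ_{−x}(t)θ_{4,m}(−x+2t/κ)]` is
(absolutely) integrable on `(0,1)`, where the branch `L` of `log E(·,τ)` satisfies
`L(t) − log t → 0` as `t → 0⁺`. -/
theorem selberg_integrand_integrable (τ : ℂ) (hτ : 0 < τ.im)
    (x : ℂ) (hx : ¬ inLattice τ x) (hx' : ¬ inLattice τ (-x)) (m : ℤ)
    (L : ℝ → ℂ) (hLc : ContinuousOn L (Set.Ioo 0 1))
    (hLe : ∀ t ∈ Set.Ioo (0 : ℝ) 1, Complex.exp (L t) = EF (t : ℂ) τ)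
    (hL0 : Tendsto (fun t : ℝ => L t - (Real.log t : ℂ)) (𝓝[>] (0 : ℝ)) (𝓝 0))
    (κ : ℂ) (hκ : κ.re < 0) :
    IntegrableOn (fun t : ℝ =>
      Complex.exp (-(2 / κ) * L t) *
        (sigmaF x (t : ℂ) τ * theta4m m (x + 2 * (t : ℂ) / κ) τ +
          sigmaF (-x) (t : ℂ) τ * theta4m m (-x + 2 * (t : ℂ) / κ) τ))
      (Set.Ioo 0 1) := by
  have hs := L_symm_aux L hLc (fun t ht => by
    rw [hLe t ht, hLe (1 - t) ⟨by linarith [ht.2], by linarith [ht.1]⟩]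
    unfold EF
    push_cast
    rw [theta1_symm_aux])
  have ha : -1 < (-(2 / κ) - 1).re := by
    have h0 : κ ≠ 0 := by rintro rfl; simp at hκ
    have h1 : (2 / κ).re < 0 := by
      have : (2 / κ).re = 2 * κ.re / Complex.normSq κ := by
        rw [Complex.div_re]; simp
      rw [this]
      exact div_neg_of_neg_of_pos (by linarith) (Complex.normSq_pos.2 h0)
    simp only [Complex.sub_re, Complex.neg_re, Complex.one_re]
    linarith
  have hI := exp_int_aux L hLc hs hL0 _ ha
  have c1 := theta1_cont_aux τ hτ
  have c4 := theta4m_cont_aux m τ hτ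
  have hg : Continuous (fun t : ℝ =>
      theta1 (x - t) τ / theta1 x τ * theta4m m (x + 2 * (t : ℂ) / κ) τ +
      theta1 (-x - t) τ / theta1 (-x) τ * theta4m m (-x + 2 * (t : ℂ) / κ) τ) := by
    have a1 : ∀ w : ℂ, Continuous (fun t : ℝ => theta1 (w - t) τ) := fun w =>
      c1.comp (by fun_prop : Continuous fun t : ℝ => w - (t : ℂ))
    have a2 : ∀ w : ℂ, Continuous (fun t : ℝ => theta4m m (w + 2 * (t : ℂ) / κ) τ) := fun w =>
      c4.comp (by fun_prop : Continuous fun t : ℝ => w + 2 * (t : ℂ) / κ)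
    exact (((a1 x).div_const _).mul (a2 x)).add (((a1 (-x)).div_const _).mul (a2 (-x)))
  have hP := hI.mul_continuousOn_of_subset (hg.continuousOn (s := Set.Icc 0 1))
    measurableSet_Ioo isCompact_Icc Set.Ioo_subset_Icc_self
  refine hP.congr_fun ?_ measurableSet_Ioo
  intro t ht
  have hE := hLe t ht
  have hsig : ∀ w, sigmaF w t τ = theta1 (w - t) τ / theta1 w τ * Complex.exp (-L t) := by
    intro w
    rw [Complex.exp_neg, hE]
    unfold sigmaF EF
    rw [inv_div, div_mul_div_comm]
  simp only [hsig]
  rw [show (-(2 / κ) - 1) * L t = -(2 / κ) * L t + -L t by ring, Complex.exp_add]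
  ring
end
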